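/- Let D and D′ be domains in ℝ^n, n ≥ 3, let φ be nondecreasing with ∫_{t_*}^∞ (t/φ(t))^{1/(n−2)} dt < ∞, let p ∈ (n, n + 1/(n−2)), and let f:D→D′ be a homeomorphism of finite distortion of class W^{1,φ}_loc. Then there is a positive constant c_2 depending only on n and p such that for every x_0 ∈ D and every ε > 0 with B(x_0,4ε) ⊂ D: m(f B(x_0,2ε))/m(B(x_0,2ε)) ≤ c_2 · [⨍_{B(x_0,4ε)} K_p(x,f)^{(n−1)/(p−n+1)} dm(x)]^{n(p−n+1)/(n(p−n+1)−p)}. -/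

import Mathlib

open MeasureTheory Metric Set Filter
open scoped ENNReal NNReal Topology RealInnerProductSpace Classical

noncomputable section

abbrev Eucl (n : ℕ) : Type := EuclideanSpace ℝ (Fin n)

/-- A `k`-dimensional surface in `ℝⁿ`: a continuous map defined on an open subset of the
one-point compactification of `ℝᵏ`. -/
structure Surface (n k : ℕ) where
  dom : Set (OnePoint (Eucl k))
  isOpen_dom : IsOpen dom
  toFun : OnePoint (Eucl k) → Eucl n
  continuousOn : ContinuousOn toFun dom

namespace Surface

variable {n k : ℕ}

/-- The multiplicity function `N(S,y)` of a surface. -/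
def mult (S : Surface n k) (y : Eucl n) : ℝ≥0∞ :=
  ((S.dom ∩ S.toFun ⁻¹' {y}).encard : ℕ∞)

/-- The integral `∫_S ρ dA = ∫ ρ(y) N(S,y) dH^k(y)` of `ρ` over the surface `S`. -/
def sint (S : Surface n k) (ρ : Eucl n → ℝ≥0∞) : ℝ≥0∞ :=
  ∫⁻ y, ρ y * S.mult y ∂(μH[(k : ℝ)] : Measure (Eucl n))

end Surface

/-- Admissible functions for a family of `k`-surfaces. -/
def surfAdm {n : ℕ} (k : ℕ) (Γ : Set (Surface n k)) : Set (Eucl n → ℝ≥0∞) :=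
  {ρ | Measurable ρ ∧ ∀ S ∈ Γ, 1 ≤ S.sint fun y => ρ y ^ k}

/-- The `p`-modulus of a family of `k`-surfaces. -/
def surfModulus {n : ℕ} (p : ℝ) (k : ℕ) (Γ : Set (Surface n k)) : ℝ≥0∞ :=
  ⨅ ρ ∈ surfAdm k Γ, ∫⁻ x, ρ x ^ p

/-- Extensively `p`-admissible functions: admissibility may fail on a subfamily of
`p`-modulus zero. -/
def extAdm {n : ℕ} (p : ℝ) (k : ℕ) (Γ : Set (Surface n k)) : Set (Eucl n → ℝ≥0∞) :=
  {ρ | Measurable ρ ∧ surfModulus p k {S ∈ Γ | ¬ 1 ≤ S.sint fun y => ρ y ^ k} = 0}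

/-- The family of the (injectively parametrized, nonempty) surfaces `S(x₀,r) ∩ D`,
`r ∈ I`. -/
def sphereFam {n : ℕ} (D : Set (Eucl n)) (x₀ : Eucl n) (I : Set ℝ) :
    Set (Surface n (n - 1)) :=
  {S | ∃ r ∈ I, S.dom.Nonempty ∧ Set.InjOn S.toFun S.dom ∧
      S.toFun '' S.dom = sphere x₀ r ∩ D}

/-- The image of a family of surfaces under a map `f`. -/
def imageFam {n k : ℕ} (f : Eucl n → Eucl n) (Γ : Set (Surface n k)) :
    Set (Surface n k) :=
  {S' | ∃ S ∈ Γ, S'.dom = S.dom ∧ Set.EqOn S'.toFun (f ∘ S.toFun) S.dom}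

/-- The spherical ring `R(x₀,a,b)`. -/
def ringA {n : ℕ} (x₀ : Eucl n) (a b : ℝ) : Set (Eucl n) :=
  {x | a < dist x x₀ ∧ dist x x₀ < b}

/-- `‖Q‖_α(r) = (∫_{D ∩ S(x₀,r)} Q^α dA)^{1/α}`. -/
def sphNorm {n : ℕ} (D : Set (Eucl n)) (x₀ : Eucl n) (Q : Eucl n → ℝ≥0∞)
    (α : ℝ) (r : ℝ) : ℝ≥0∞ :=
  (∫⁻ x in D ∩ sphere x₀ r, Q x ^ α ∂(μH[((n : ℝ) - 1)] : Measure (Eucl n))) ^ (1 / α)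

/-- `f` is a lower `Q`-homeomorphism w.r.t. the `p`-modulus at `x₀`. -/
def IsLowerQHomeoAt {n : ℕ} (D : Set (Eucl n)) (f : Eucl n → Eucl n)
    (Q : Eucl n → ℝ≥0∞) (p : ℝ) (x₀ : Eucl n) (d₀ : ℝ≥0∞) : Prop :=
  ∀ ε ε₀ : ℝ, 0 < ε → ε < ε₀ → ENNReal.ofReal ε₀ < d₀ →
    (⨅ ρ ∈ extAdm p (n - 1) (sphereFam D x₀ (Ioo ε ε₀)),
        ∫⁻ x in ringA x₀ ε ε₀, ρ x ^ p / Q x) ≤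
      surfModulus p (n - 1) (imageFam f (sphereFam D x₀ (Ioo ε ε₀)))

/-- `f` is a homeomorphism of `D` onto `D'`. -/
structure IsHomeoOn {n : ℕ} (f : Eucl n → Eucl n) (D D' : Set (Eucl n)) : Prop where
  continuousOn : ContinuousOn f D
  injOn : Set.InjOn f D
  image_eq : f '' D = D'
  isOpenMapOn : ∀ U : Set (Eucl n), U ⊆ D → IsOpen U → IsOpen (f '' U)

/-- `Df` is the weak (Sobolev) derivative of `f` on `D`, and `f ∈ W^{1,1}_loc(D)`. -/
def IsWeakDerivOn {n m : ℕ} (D : Set (Eucl n)) (f : Eucl n → Eucl m)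
    (Df : Eucl n → Eucl n →L[ℝ] Eucl m) : Prop :=
  LocallyIntegrableOn f D volume ∧ LocallyIntegrableOn Df D volume ∧
  ∀ ψ : Eucl n → ℝ, ContDiff ℝ (⊤ : ℕ∞) ψ → HasCompactSupport ψ → tsupport ψ ⊆ D →
    ∀ v : Eucl n, ∫ x, ψ x • Df x v = - ∫ x, fderiv ℝ ψ x v • f x

/-- The Frobenius norm `|∇f| = (Σ_{i,j} (∂f_i/∂x_j)²)^{1/2}` of a linear map. -/
def frobNorm {n m : ℕ} (A : Eucl n →L[ℝ] Eucl m) : ℝ :=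
  Real.sqrt (∑ i : Fin m, ∑ j : Fin n, (A (EuclideanSpace.single j 1) i) ^ 2)

/-- The Orlicz–Sobolev class `W^{1,φ}_loc(D)` (with explicit weak derivative `Df`). -/
def MemOrliczSobolevOn {n m : ℕ} (φ : ℝ → ℝ) (D : Set (Eucl n))
    (f : Eucl n → Eucl m) (Df : Eucl n → Eucl n →L[ℝ] Eucl m) : Prop :=
  IsWeakDerivOn D f Df ∧
  ∀ K : Set (Eucl n), K ⊆ D → IsCompact K →
    (∫⁻ x in K, ENNReal.ofReal (φ (frobNorm (Df x)))) < ⊤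

/-- `φ` is nondecreasing and positive on `(0,∞)`. -/
def NondecPos (φ : ℝ → ℝ) : Prop :=
  (∀ s t : ℝ, 0 < s → s ≤ t → φ s ≤ φ t) ∧ ∀ t : ℝ, 0 < t → 0 < φ t

/-- The Calderón-type condition `∫_{t₀}^∞ (t/φ(t))^{1/(n-2)} dt < ∞`. -/
def CalderonCond (n : ℕ) (φ : ℝ → ℝ) : Prop :=
  ∃ t₀ : ℝ, 0 < t₀ ∧
    IntegrableOn (fun t => (t / φ t) ^ (1 / ((n : ℝ) - 2))) (Ioi t₀) volume

/-- `f` (with a.e. derivative `Df`) has finite distortion on `D`. -/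
def HasFiniteDistortionOn {n : ℕ} (D : Set (Eucl n))
    (Df : Eucl n → Eucl n →L[ℝ] Eucl n) : Prop :=
  ∃ K : Eucl n → ℝ, AEMeasurable K (volume.restrict D) ∧
    ∀ᵐ x ∂volume.restrict D, 1 ≤ K x ∧ ‖Df x‖ ^ n ≤ K x * (Df x).det

/-- The distortion `K_p(x,f)` for a map with derivative `Df`. -/
def distortionKp {n : ℕ} (p : ℝ) (Df : Eucl n → Eucl n →L[ℝ] Eucl n)
    (x : Eucl n) : ℝ≥0∞ :=
  if (Df x).det ≠ 0 then ENNReal.ofReal (‖Df x‖ ^ p / (Df x).det)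
  else if Df x = 0 then 1 else ⊤

/-- The multiplicity function of a curve `γ : [0,1] → ℝⁿ`. -/
def curveMult {n : ℕ} (γ : ℝ → Eucl n) (y : Eucl n) : ℝ≥0∞ :=
  (({t ∈ Icc (0:ℝ) 1 | γ t = y}).encard : ℕ∞)

/-- The line integral `∫_γ ρ ds = ∫ ρ(y) N(γ,y) dH¹(y)`. -/
def curveInt {n : ℕ} (γ : ℝ → Eucl n) (ρ : Eucl n → ℝ≥0∞) : ℝ≥0∞ :=
  ∫⁻ y, ρ y * curveMult γ y ∂(μH[(1 : ℝ)] : Measure (Eucl n))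

/-- The family of curves joining `A` and `B` in `G`. -/
def curveJoin {n : ℕ} (A B G : Set (Eucl n)) : Set (ℝ → Eucl n) :=
  {γ | ContinuousOn γ (Icc 0 1) ∧ γ 0 ∈ A ∧ γ 1 ∈ B ∧ Set.MapsTo γ (Icc 0 1) G}

/-- The `q`-modulus of a family of curves. -/
def curveModulus {n : ℕ} (q : ℝ) (Γ : Set (ℝ → Eucl n)) : ℝ≥0∞ :=
  ⨅ ρ ∈ {ρ : Eucl n → ℝ≥0∞ | Measurable ρ ∧ ∀ γ ∈ Γ, 1 ≤ curveInt γ ρ},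
    ∫⁻ x, ρ x ^ q

/-- The `q`-capacity of the condenser `(A,C)`, via the modulus of joining curves. -/
def condenserCap {n : ℕ} (q : ℝ) (A C : Set (Eucl n)) : ℝ≥0∞ :=
  curveModulus q (curveJoin (frontier A) (frontier C) (A \ C))

/-- `L(x₀,f) = limsup_{x→x₀} |f(x)-f(x₀)|/|x-x₀|`. -/
def LAt {n : ℕ} (f : Eucl n → Eucl n) (x₀ : Eucl n) : ℝ≥0∞ :=
  limsup (fun x => edist (f x) (f x₀) / edist x x₀) (𝓝[≠] x₀)

/-- `k_p(x₀) = limsup_{ε→0} (⨍_{B(x₀,ε)} K_p(x,f)^{(n-1)/(p-n+1)} dm)^{(p-n+1)/(n-1)}`. -/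
def kpAt {n : ℕ} (p : ℝ) (Df : Eucl n → Eucl n →L[ℝ] Eucl n) (x₀ : Eucl n) : ℝ≥0∞ :=
  limsup (fun ε : ℝ =>
      ((∫⁻ x in ball x₀ ε, distortionKp p Df x ^ (((n:ℝ)-1)/(p-(n:ℝ)+1))) /
        volume (ball x₀ ε)) ^ ((p-(n:ℝ)+1)/((n:ℝ)-1)))
    (𝓝[>] (0:ℝ))

/-- `f` is absolutely continuous on `S` w.r.t. `d`-dimensional Hausdorff measure. -/
def ACOnSet {n m : ℕ} (f : Eucl n → Eucl m) (S : Set (Eucl n)) (d : ℝ) : Prop :=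
  ∀ ε : ℝ, 0 < ε → ∃ δ : ℝ, 0 < δ ∧ ∀ A : Set (Eucl n), A ⊆ S →
    (μH[d] : Measure (Eucl n)) A < ENNReal.ofReal δ →
      (μH[d] : Measure (Eucl m)) (f '' A) < ENNReal.ofReal ε

/-- `f` is locally absolutely continuous on `S` w.r.t. `H^d`. -/
def LocACOnSet {n m : ℕ} (f : Eucl n → Eucl m) (S : Set (Eucl n)) (d : ℝ) : Prop :=
  ∀ x ∈ S, ∃ V ∈ 𝓝 x, ACOnSet f (S ∩ V) d

/-- The Luzin (N)-property of `f` on `S` w.r.t. `d`-dimensional Hausdorff measure. -/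
def LusinNOn {n m : ℕ} (f : Eucl n → Eucl m) (S : Set (Eucl n)) (d : ℝ) : Prop :=
  ∀ A : Set (Eucl n), A ⊆ S → (μH[d] : Measure (Eucl n)) A = 0 →
    (μH[d] : Measure (Eucl m)) (f '' A) = 0

end

/-! Write `V(r)` for the volume of the image of the cube of half-side `r` about `x₀`. The Calderón
condition on `φ` bounds the oscillation of `f` on an `(n - 1)`-dimensional face by a potential of
`|Df|`, so that for almost every `r` the projections of the image of the boundary of the cube have
`(n - 1)`-volume at most `C ∫ |Df| ^ (n - 1)` over that boundary. The Loomis–Whitney inequality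
turns this into an isoperimetric estimate for `V(r) ^ ((n - 1) / n)`, and integrating over `r`
between `a` and `R` gives `R - a ≤ C ∫ V(|x - x₀|) ^ (-(n - 1) / n) |Df x| ^ (n - 1) dx`.
As `|Df| ^ p = K_p J_f`, Hölder's inequality splits the right-hand side into the integral of
`K_p ^ ((n - 1) / (p - n + 1))` and that of `V ^ (-p / n) J_f`. The integral of `J_f` over a cube is
at most `V`, so for `p > n` a dyadic decomposition by the values of `V` bounds the second factor by
a power of `V(a)`. This estimates the image of a small ball about every point of `B(x₀, 2ε)`, and
boundedly many such balls cover `B(x₀, 2ε)`. -/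

open Module

section Potential

variable {E F : Type*} [NormedAddCommGroup E] [NormedSpace ℝ E] [NormedAddCommGroup F]
  [NormedSpace ℝ F]

lemma enorm_sub_le_mul_lintegral_enorm_fderiv [CompleteSpace F] {v : E → F}
    (hv : ContDiff ℝ 1 v) (x y : E) {τ : ℝ} (hτ : τ ≤ 1) :
    ‖v (x + τ • (y - x)) - v y‖ₑ ≤
      ‖y - x‖ₑ * ∫⁻ t in Ioo τ 1, ‖fderiv ℝ v (x + t • (y - x))‖ₑ := by
  have hder : ∀ t ∈ uIcc τ 1, HasDerivAt (fun t : ℝ => v (x + t • (y - x)))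
      (fderiv ℝ v (x + t • (y - x)) (y - x)) t := fun t _ =>
    (hv.differentiable one_ne_zero _).hasFDerivAt.comp_hasDerivAt t <| by
      simpa using ((hasDerivAt_id t).smul_const (y - x)).const_add x
  have hcont : Continuous fun t : ℝ => fderiv ℝ v (x + t • (y - x)) (y - x) := by
    have := hv.continuous_fderiv one_ne_zero
    fun_prop
  have hFTC := intervalIntegral.integral_eq_sub_of_hasDerivAt hder (hcont.intervalIntegrable _ _)
  rw [one_smul, add_sub_cancel, intervalIntegral.integral_of_le hτ,
    integral_Ioc_eq_integral_Ioo] at hFTC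
  rw [← enorm_neg, neg_sub, ← hFTC, ← lintegral_const_mul' _ _ enorm_ne_top]
  refine (enorm_integral_le_lintegral_enorm _).trans (lintegral_mono fun t => ?_)
  rw [mul_comm]
  exact ContinuousLinearMap.le_opENorm _ _

variable [MeasurableSpace E] {μ : Measure E} {B K : Set E} {u : E → F} {h : E → ℝ≥0∞} {x : E}
  {L τ : ℝ}

/-- `u` is a continuous map on `K` that is a pointwise limit of `C¹` maps whose derivatives are
dominated by `h` up to errors tending to `0` in `L¹(K)`. This is the form in which a bound
`|Du| ≤ h` on a weak derivative survives restriction to almost every hyperplane. -/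
structure DerivDominatedOn (μ : Measure E) (K : Set E) (u : E → F) (h : E → ℝ≥0∞) : Prop where
  continuousOn : ContinuousOn u K
  exists_approx : ∃ (v : ℕ → E → F) (e : ℕ → E → ℝ≥0∞), (∀ j, ContDiff ℝ 1 (v j)) ∧
    (∀ y ∈ K, Tendsto (fun j => v j y) atTop (𝓝 (u y))) ∧
    (∀ j, ∀ y ∈ K, ‖fderiv ℝ (v j) y‖ₑ ≤ h y + e j y) ∧
    Tendsto (fun j => ∫⁻ y in K, e j y ∂μ) atTop (𝓝 0)

lemma DerivDominatedOn.mono (hu : DerivDominatedOn μ K u h) (hBK : B ⊆ K) :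
    DerivDominatedOn μ B u h := by
  obtain ⟨hc, v, e, hv, hlim, hle, he⟩ := hu
  exact ⟨hc.mono hBK, v, e, hv, fun y hy => hlim y (hBK hy), fun j y hy => hle j y (hBK hy),
    tendsto_of_tendsto_of_tendsto_of_le_of_le tendsto_const_nhds he (fun _ => zero_le)
      fun _ => lintegral_mono_set hBK⟩

/-- The potential `L ∫₀¹ t⁻ᵈ ∫_{B ∩ B(x,Lt)} h dμ dt`, with `d = dim E`. For `L = diam B` it is
comparable to the Riesz potential `∫_B h(z) |x - z|^{1-d} dμ(z)`. -/
noncomputable def scalePotential (μ : Measure E) (B : Set E) (L : ℝ) (h : E → ℝ≥0∞) (x : E) :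
    ℝ≥0∞ :=
  ENNReal.ofReal L * ∫⁻ t in Ioo (0 : ℝ) 1,
    ENNReal.ofReal ((t ^ finrank ℝ E)⁻¹) * ∫⁻ z in B ∩ closedBall x (L * t), h z ∂μ

variable [BorelSpace E] [FiniteDimensional ℝ E] [μ.IsAddHaarMeasure]

lemma lintegral_comp_add_smul_sub {f : E → ℝ≥0∞} (hf : Measurable f) (x : E) {t : ℝ}
    (ht : 0 < t) :
    ∫⁻ y, f (x + t • (y - x)) ∂μ = ENNReal.ofReal ((t ^ finrank ℝ E)⁻¹) * ∫⁻ z, f z ∂μ := by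
  calc ∫⁻ y, f (x + t • (y - x)) ∂μ = ∫⁻ y, f (x + t • y) ∂μ :=
        lintegral_sub_right_eq_self (fun y => f (x + t • y)) x
    _ = ∫⁻ w, f (x + w) ∂(Measure.map (fun y => t • y) μ) := by
        rw [lintegral_map (f := fun w => f (x + w)) (by fun_prop) (by fun_prop)]
    _ = ENNReal.ofReal ((t ^ finrank ℝ E)⁻¹) * ∫⁻ z, f z ∂μ := by
        rw [Measure.map_addHaar_smul _ ht.ne', lintegral_smul_measure,
          lintegral_add_left_eq_self, abs_of_nonneg (by positivity), smul_eq_mul]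

lemma setLIntegral_comp_add_smul_sub_le {g : E → ℝ≥0∞} (hg : Measurable g) (hB : Convex ℝ B)
    (hBm : MeasurableSet B) (hx : x ∈ B) (hL : ∀ y ∈ B, dist y x ≤ L) {t : ℝ}
    (ht : t ∈ Ioc (0 : ℝ) 1) :
    ∫⁻ y in B, g (x + t • (y - x)) ∂μ ≤
      ENNReal.ofReal ((t ^ finrank ℝ E)⁻¹) * ∫⁻ z in B ∩ closedBall x (L * t), g z ∂μ := by
  have hTm : MeasurableSet (B ∩ closedBall x (L * t)) := hBm.inter measurableSet_closedBall
  rw [← lintegral_indicator hTm, ← lintegral_comp_add_smul_sub (hg.indicator hTm) x ht.1,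
    ← lintegral_indicator hBm]
  refine lintegral_mono fun y => ?_
  by_cases hy : y ∈ B
  swap
  · simp only [indicator_of_notMem hy, zero_le]
  rw [indicator_of_mem hy, indicator_of_mem]
  refine ⟨hB.add_smul_sub_mem hx hy ⟨ht.1.le, ht.2⟩, ?_⟩
  rw [mem_closedBall, dist_eq_norm, add_sub_cancel_left, norm_smul, Real.norm_of_nonneg ht.1.le,
    ← dist_eq_norm, mul_comm]
  exact mul_le_mul_of_nonneg_right (hL y hy) ht.1.le

lemma lintegral_enorm_sub_le_of_contDiff [CompleteSpace F] {v : E → F} (hv : ContDiff ℝ 1 v)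
    (hB : Convex ℝ B) (hBm : MeasurableSet B) (hx : x ∈ B) (hL : ∀ y ∈ B, dist y x ≤ L)
    (hτ : τ ∈ Ioo (0 : ℝ) 1) :
    ∫⁻ y in B, ‖v (x + τ • (y - x)) - v y‖ₑ ∂μ ≤
      ENNReal.ofReal L * ∫⁻ t in Ioo τ 1, ENNReal.ofReal ((t ^ finrank ℝ E)⁻¹) *
        ∫⁻ z in B ∩ closedBall x (L * t), ‖fderiv ℝ v z‖ₑ ∂μ := by
  have hDv : Continuous (fderiv ℝ v) := hv.continuous_fderiv one_ne_zero
  calc ∫⁻ y in B, ‖v (x + τ • (y - x)) - v y‖ₑ ∂μ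
      ≤ ∫⁻ y in B, ENNReal.ofReal L *
          (∫⁻ t in Ioo τ 1, ‖fderiv ℝ v (x + t • (y - x))‖ₑ) ∂μ := by
        refine setLIntegral_mono' hBm fun y hy =>
          (enorm_sub_le_mul_lintegral_enorm_fderiv hv x y hτ.2.le).trans ?_
        rw [← ofReal_norm, ← dist_eq_norm]
        gcongr
        exact hL y hy
    _ = ENNReal.ofReal L *
          ∫⁻ t in Ioo τ 1, ∫⁻ y in B, ‖fderiv ℝ v (x + t • (y - x))‖ₑ ∂μ := by
        rw [lintegral_const_mul' _ _ ENNReal.ofReal_ne_top, lintegral_lintegral_swap]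
        exact Continuous.aemeasurable (by fun_prop)
    _ ≤ _ := by
        gcongr ENNReal.ofReal L * ?_
        exact setLIntegral_mono' measurableSet_Ioo fun t ht =>
          setLIntegral_comp_add_smul_sub_le hDv.enorm.measurable hB hBm hx hL
            ⟨hτ.1.trans ht.1, ht.2.le⟩

lemma lintegral_enorm_sub_le_scalePotential_add [CompleteSpace F] {v : E → F}
    (hv : ContDiff ℝ 1 v) (hB : Convex ℝ B) (hBm : MeasurableSet B) (hx : x ∈ B)
    (hL : ∀ y ∈ B, dist y x ≤ L) (hτ : τ ∈ Ioo (0 : ℝ) 1) (hh : Measurable h) {e : E → ℝ≥0∞}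
    (hle : ∀ z ∈ B, ‖fderiv ℝ v z‖ₑ ≤ h z + e z) :
    ∫⁻ y in B, ‖v (x + τ • (y - x)) - v y‖ₑ ∂μ ≤ scalePotential μ B L h x +
      ENNReal.ofReal L * ENNReal.ofReal ((τ ^ finrank ℝ E)⁻¹) * ∫⁻ z in B, e z ∂μ := by
  have hscale : ∀ t ∈ Ioo τ 1, ENNReal.ofReal ((t ^ finrank ℝ E)⁻¹) *
      ∫⁻ z in B ∩ closedBall x (L * t), ‖fderiv ℝ v z‖ₑ ∂μ ≤
      ENNReal.ofReal ((t ^ finrank ℝ E)⁻¹) * (∫⁻ z in B ∩ closedBall x (L * t), h z ∂μ) +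
        ENNReal.ofReal ((τ ^ finrank ℝ E)⁻¹) * ∫⁻ z in B, e z ∂μ := fun t ht => by
    have hτ0 := hτ.1
    calc _ ≤ ENNReal.ofReal ((t ^ finrank ℝ E)⁻¹) *
          ∫⁻ z in B ∩ closedBall x (L * t), (h z + e z) ∂μ := by
          gcongr ENNReal.ofReal _ * ?_
          exact setLIntegral_mono' (hBm.inter measurableSet_closedBall) fun z hz => hle z hz.1
      _ ≤ _ := by
          rw [lintegral_add_left hh, mul_add]
          gcongr
          · exact ht.1.le
          · exact inter_subset_left
  refine (lintegral_enorm_sub_le_of_contDiff hv hB hBm hx hL hτ).trans ?_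
  rw [scalePotential, mul_assoc, ← mul_add]
  gcongr ENNReal.ofReal L * ?_
  refine (setLIntegral_mono' measurableSet_Ioo hscale).trans ?_
  rw [lintegral_add_right _ measurable_const, setLIntegral_const, Real.volume_Ioo]
  refine add_le_add ?_ (mul_le_of_le_one_right' (ENNReal.ofReal_le_one.2 (by linarith [hτ.1])))
  exact lintegral_mono_set (Ioo_subset_Ioo_left hτ.1.le)

lemma DerivDominatedOn.lintegral_enorm_sub_homothety_le [CompleteSpace F]
    (hu : DerivDominatedOn μ B u h) (hB : Convex ℝ B) (hBm : MeasurableSet B)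
    (hh : Measurable h) (hx : x ∈ B) (hL : ∀ y ∈ B, dist y x ≤ L) (hτ : τ ∈ Ioo (0 : ℝ) 1) :
    ∫⁻ y in B, ‖u (x + τ • (y - x)) - u y‖ₑ ∂μ ≤ scalePotential μ B L h x := by
  obtain ⟨-, v, e, hv, hlim, hle, he⟩ := hu
  have hmem : ∀ y ∈ B, x + τ • (y - x) ∈ B := fun y hy =>
    hB.add_smul_sub_mem hx hy ⟨hτ.1.le, hτ.2.le⟩
  set C := ENNReal.ofReal L * ENNReal.ofReal ((τ ^ finrank ℝ E)⁻¹)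
  have hbound : Tendsto (fun j => scalePotential μ B L h x + C * ∫⁻ z in B, e j z ∂μ) atTop
      (𝓝 (scalePotential μ B L h x + C * 0)) :=
    tendsto_const_nhds.add <| ENNReal.Tendsto.const_mul he <|
      Or.inr (ENNReal.mul_ne_top ENNReal.ofReal_ne_top ENNReal.ofReal_ne_top)
  calc ∫⁻ y in B, ‖u (x + τ • (y - x)) - u y‖ₑ ∂μ
      = ∫⁻ y in B, liminf (fun j => ‖v j (x + τ • (y - x)) - v j y‖ₑ) atTop ∂μ :=
        setLIntegral_congr_fun hBm fun y hy =>
          ((hlim _ (hmem y hy)).sub (hlim y hy)).enorm.liminf_eq.symm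
    _ ≤ liminf (fun j => ∫⁻ y in B, ‖v j (x + τ • (y - x)) - v j y‖ₑ ∂μ) atTop :=
        lintegral_liminf_le fun j => by
          have := (hv j).continuous
          exact Continuous.measurable (by fun_prop)
    _ ≤ liminf (fun j => scalePotential μ B L h x + C * ∫⁻ z in B, e j z ∂μ) atTop :=
        liminf_le_liminf <| Eventually.of_forall fun j =>
          lintegral_enorm_sub_le_scalePotential_add (hv j) hB hBm hx hL hτ hh (hle j)
    _ = scalePotential μ B L h x := by rw [hbound.liminf_eq, mul_zero, add_zero]

lemma DerivDominatedOn.lintegral_enorm_sub_le_scalePotential [CompleteSpace F]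
    (hu : DerivDominatedOn μ B u h) (hB : Convex ℝ B) (hBm : MeasurableSet B)
    (hh : Measurable h) (hx : x ∈ B) (hL : ∀ y ∈ B, dist y x ≤ L) :
    ∫⁻ y in B, ‖u x - u y‖ₑ ∂μ ≤ scalePotential μ B L h x := by
  obtain ⟨τ, -, hτ, hτlim⟩ := exists_seq_strictAnti_tendsto' (zero_lt_one' ℝ)
  have hmem : ∀ k, ∀ y ∈ B, x + τ k • (y - x) ∈ B := fun k y hy =>
    hB.add_smul_sub_mem hx hy ⟨(hτ k).1.le, (hτ k).2.le⟩
  have hlim : ∀ y ∈ B, Tendsto (fun k => ‖u (x + τ k • (y - x)) - u y‖ₑ) atTop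
      (𝓝 ‖u x - u y‖ₑ) := fun y hy => by
    have hseg : Tendsto (fun k => x + τ k • (y - x)) atTop (𝓝[B] x) := by
      refine tendsto_nhdsWithin_iff.2 ⟨?_, Eventually.of_forall fun k => hmem k y hy⟩
      simpa using (tendsto_const_nhds (x := x)).add (hτlim.smul_const (y - x))
    exact (((hu.continuousOn x hx).tendsto.comp hseg).sub_const (u y)).enorm
  have hmeas : ∀ k, AEMeasurable (fun y => ‖u (x + τ k • (y - x)) - u y‖ₑ) (μ.restrict B) :=
    fun k => ContinuousOn.aemeasurable (((hu.continuousOn.comp (by fun_prop) (hmem k)).sub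
      hu.continuousOn).enorm) hBm
  calc ∫⁻ y in B, ‖u x - u y‖ₑ ∂μ
      = ∫⁻ y in B, liminf (fun k => ‖u (x + τ k • (y - x)) - u y‖ₑ) atTop ∂μ :=
        setLIntegral_congr_fun hBm fun y hy => (hlim y hy).liminf_eq.symm
    _ ≤ liminf (fun k => ∫⁻ y in B, ‖u (x + τ k • (y - x)) - u y‖ₑ ∂μ) atTop :=
        lintegral_liminf_le' hmeas
    _ ≤ liminf (fun _ : ℕ => scalePotential μ B L h x) atTop :=
        liminf_le_liminf <| Eventually.of_forall fun k =>
          hu.lintegral_enorm_sub_homothety_le hB hBm hh hx hL (hτ k)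
    _ = scalePotential μ B L h x := by simp

lemma DerivDominatedOn.enorm_sub_mul_measure_le [CompleteSpace F]
    (hu : DerivDominatedOn μ B u h) (hB : Convex ℝ B) (hBm : MeasurableSet B)
    (hh : Measurable h) {x y : E} (hx : x ∈ B) (hy : y ∈ B)
    (hL : ∀ z ∈ B, ∀ w ∈ B, dist z w ≤ L) :
    ‖u x - u y‖ₑ * μ B ≤ scalePotential μ B L h x + scalePotential μ B L h y := by
  calc ‖u x - u y‖ₑ * μ B = ∫⁻ _ in B, ‖u x - u y‖ₑ ∂μ := (setLIntegral_const _ _).symm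
    _ ≤ ∫⁻ z in B, (‖u x - u z‖ₑ + ‖u y - u z‖ₑ) ∂μ := by
        refine lintegral_mono fun z => ?_
        rw [← sub_sub_sub_cancel_right (u x) (u y) (u z)]
        exact enorm_sub_le
    _ = (∫⁻ z in B, ‖u x - u z‖ₑ ∂μ) + ∫⁻ z in B, ‖u y - u z‖ₑ ∂μ :=
        lintegral_add_left'
          ((continuousOn_const.sub hu.continuousOn).enorm.aemeasurable hBm) _
    _ ≤ _ := add_le_add
        (hu.lintegral_enorm_sub_le_scalePotential hB hBm hh hx fun z hz => hL z hz x hx)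
        (hu.lintegral_enorm_sub_le_scalePotential hB hBm hh hy fun z hz => hL z hz y hy)

end Potential

section MaximalFunction

variable {E : Type*} [NormedAddCommGroup E] [MeasurableSpace E] {μ : Measure E} {B : Set E}
  {h : E → ℝ≥0∞} {ε : ℝ≥0∞} {R L : ℝ} {x y : E}

/-- The superlevel set `{M_R h > ε}` of the centred Hardy–Littlewood maximal function over closed
balls of radius at most `R`. -/
def maximalSuperlevel (μ : Measure E) (h : E → ℝ≥0∞) (ε : ℝ≥0∞) (R : ℝ) : Set E :=
  {x | ∃ r ∈ Ioc 0 R, ε * μ (closedBall x r) < ∫⁻ z in closedBall x r, h z ∂μ}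

variable [NormedSpace ℝ E] [BorelSpace E] [FiniteDimensional ℝ E] [μ.IsAddHaarMeasure]

lemma mul_measure_maximalSuperlevel_le (h : E → ℝ≥0∞) (ε : ℝ≥0∞) (R : ℝ) :
    ε * μ (maximalSuperlevel μ h ε R) ≤ 4 ^ finrank ℝ E * ∫⁻ z, h z ∂μ := by
  choose! r hrR hr using fun x (hx : x ∈ maximalSuperlevel μ h ε R) => hx
  obtain ⟨u, hut, hdisj, hcov⟩ := Vitali.exists_disjoint_subfamily_covering_enlargement_closedBall
    (maximalSuperlevel μ h ε R) (fun x => x) r R (fun x hx => (hrR x hx).2) 4 (by norm_num)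
  have hcount : u.Countable := hdisj.countable_of_nonempty_interior fun x hx =>
    ⟨x, mem_interior_iff_mem_nhds.2 (closedBall_mem_nhds _ (hrR x (hut hx)).1)⟩
  have hsub : maximalSuperlevel μ h ε R ⊆ ⋃ x ∈ u, closedBall x (4 * r x) := fun x hx => by
    obtain ⟨b, hb, hxb⟩ := hcov x hx
    exact mem_biUnion hb (hxb (mem_closedBall_self (hrR x hx).1.le))
  have henlarge : ∀ x : u, ε * μ (closedBall (x : E) (4 * r x)) ≤
      4 ^ finrank ℝ E * ∫⁻ z in closedBall (x : E) (r x), h z ∂μ := fun x => by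
    have hr0 := (hrR x (hut x.2)).1.le
    rw [Measure.addHaar_closedBall_mul μ _ (by norm_num) hr0,
      ← Measure.addHaar_closedBall_center μ (x : E), ENNReal.ofReal_pow (by norm_num),
      ENNReal.ofReal_ofNat, mul_left_comm]
    gcongr
    exact (hr x (hut x.2)).le
  have := hcount.to_subtype
  calc ε * μ (maximalSuperlevel μ h ε R)
      ≤ ε * ∑' x : u, μ (closedBall (x : E) (4 * r x)) := by
        gcongr
        exact (measure_mono hsub).trans (measure_biUnion_le _ hcount _)
    _ ≤ ∑' x : u, 4 ^ finrank ℝ E * ∫⁻ z in closedBall (x : E) (r x), h z ∂μ := by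
        rw [← ENNReal.tsum_mul_left]
        exact ENNReal.tsum_le_tsum henlarge
    _ = 4 ^ finrank ℝ E * ∫⁻ z in ⋃ x : u, closedBall (x : E) (r x), h z ∂μ := by
        rw [ENNReal.tsum_mul_left, lintegral_iUnion (fun _ => measurableSet_closedBall)]
        exact fun x y hxy => hdisj x.2 y.2 (Subtype.coe_injective.ne hxy)
    _ ≤ _ := by
        gcongr
        exact Measure.restrict_le_self

lemma scalePotential_le_of_notMem_maximalSuperlevel (hL : 0 < L) (hLR : L ≤ R)
    (hx : x ∉ maximalSuperlevel μ h ε R) :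
    scalePotential μ B L h x ≤ ENNReal.ofReal L * (ε * μ (closedBall 0 L)) := by
  have hscale : ∀ t ∈ Ioo (0 : ℝ) 1, ENNReal.ofReal ((t ^ finrank ℝ E)⁻¹) *
      ∫⁻ z in B ∩ closedBall x (L * t), h z ∂μ ≤ ε * μ (closedBall 0 L) := fun t ht => by
    have ht0 := ht.1
    have hmean : ∫⁻ z in closedBall x (L * t), h z ∂μ ≤ ε * μ (closedBall x (L * t)) := by
      by_contra! hlt
      exact hx ⟨L * t, ⟨by positivity, (mul_le_of_le_one_right hL.le ht.2.le).trans hLR⟩, hlt⟩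
    calc _ ≤ ENNReal.ofReal ((t ^ finrank ℝ E)⁻¹) * (ε * μ (closedBall x (t * L))) := by
          rw [mul_comm t]
          gcongr
          exact (lintegral_mono_set inter_subset_right).trans hmean
      _ = ENNReal.ofReal ((t ^ finrank ℝ E)⁻¹ * t ^ finrank ℝ E) *
            (ε * μ (closedBall 0 L)) := by
          rw [Measure.addHaar_closedBall_mul μ _ ht0.le hL.le,
            ENNReal.ofReal_mul (by positivity)]
          ring
      _ = ε * μ (closedBall 0 L) := by
          rw [inv_mul_cancel₀ (by positivity), ENNReal.ofReal_one, one_mul]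
  rw [scalePotential]
  gcongr
  refine (setLIntegral_mono' measurableSet_Ioo hscale).trans ?_
  rw [setLIntegral_const, Real.volume_Ioo]
  simp

lemma DerivDominatedOn.enorm_sub_le_of_notMem_maximalSuperlevel {F : Type*}
    [NormedAddCommGroup F] [NormedSpace ℝ F] [CompleteSpace F] {K : Set E} {u : E → F}
    (hu : DerivDominatedOn μ K u h) (hh : Measurable h) (hK : closedBall x (dist x y) ⊆ K)
    (hR : 2 * dist x y ≤ R) (hx : x ∉ maximalSuperlevel μ h ε R)
    (hy : y ∉ maximalSuperlevel μ h ε R) :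
    ‖u x - u y‖ₑ ≤ 4 * 2 ^ finrank ℝ E * ε * edist x y := by
  rcases eq_or_ne x y with rfl | hne
  · simp
  have hρ : 0 < dist x y := dist_pos.2 hne
  have hyB : y ∈ closedBall x (dist x y) := by rw [mem_closedBall']
  have h2ρ : (0 : ℝ) < 2 * dist x y := by positivity
  have hpot := (hu.mono hK).enorm_sub_mul_measure_le (convex_closedBall _ _)
    measurableSet_closedBall hh (mem_closedBall_self hρ.le) hyB (L := 2 * dist x y)
    fun z hz w hw =>
      (dist_triangle_right z w x).trans ((add_le_add hz hw).trans_eq (two_mul _).symm)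
  have hbound := hpot.trans (add_le_add (scalePotential_le_of_notMem_maximalSuperlevel h2ρ hR hx)
    (scalePotential_le_of_notMem_maximalSuperlevel h2ρ hR hy))
  rw [Measure.addHaar_closedBall_mul μ _ zero_le_two hρ.le, ENNReal.ofReal_mul zero_le_two,
    ENNReal.ofReal_pow zero_le_two, ENNReal.ofReal_ofNat, ← edist_dist,
    ← Measure.addHaar_closedBall_center μ x] at hbound
  refine (ENNReal.mul_le_mul_iff_left (measure_closedBall_pos μ x hρ).ne'
    measure_closedBall_lt_top.ne).1 (hbound.trans_eq ?_)
  ring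

end MaximalFunction

section ApproximateDifferentiability

variable {E F : Type*} [NormedAddCommGroup E] [NormedSpace ℝ E] [NormedAddCommGroup F]
  [NormedSpace ℝ F]

/-- The error `|Dw - G|` of a map `w` on `K` as an approximation of a map with derivative `G`,
extended by zero. -/
noncomputable def derivError (K : Set E) (G : E → E →L[ℝ] F) (w : E → F) : E → ℝ≥0∞ :=
  K.indicator fun z => ‖fderiv ℝ w z - G z‖ₑ

/-- `f` is a Sobolev map on `K` with weak derivative `G`, witnessed by `C¹` maps `v j` that converge
to `f` pointwise and whose derivatives converge to `G` in `L¹(K)` at a geometric rate. -/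
structure FastC1Approx [MeasurableSpace E] (μ : Measure E) (K : Set E) (f : E → F)
    (G : E → E →L[ℝ] F) (v : ℕ → E → F) : Prop where
  continuousOn : ContinuousOn f K
  stronglyMeasurable : StronglyMeasurable G
  contDiff : ∀ j, ContDiff ℝ 1 (v j)
  tendsto : ∀ y ∈ K, Tendsto (fun j => v j y) atTop (𝓝 (f y))
  lintegral_le : ∀ j, ∫⁻ z, derivError K G (v j) z ∂μ ≤ 4⁻¹ ^ j

namespace FastC1Approx

variable [MeasurableSpace E] {μ : Measure E} {K S : Set E} {f : E → F}
  {G : E → E →L[ℝ] F} {v : ℕ → E → F} {x : E} {R : ℝ}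

lemma tendsto_lintegral_derivError (hf : FastC1Approx μ K f G v) :
    Tendsto (fun j => ∫⁻ z, derivError K G (v j) z ∂μ) atTop (𝓝 0) :=
  tendsto_of_tendsto_of_tendsto_of_le_of_le tendsto_const_nhds
    (ENNReal.tendsto_pow_atTop_nhds_zero_of_lt_one (by simp)) (fun _ => zero_le)
    hf.lintegral_le

lemma derivDominatedOn_sub (hf : FastC1Approx μ K f G v) (j : ℕ) :
    DerivDominatedOn μ K (fun z => f z - v j z) (derivError K G (v j)) := by
  refine ⟨hf.continuousOn.sub (hf.contDiff j).continuous.continuousOn, fun i z => v i z - v j z,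
    fun i => derivError K G (v i), fun i => (hf.contDiff i).sub (hf.contDiff j),
    fun z hz => (hf.tendsto z hz).sub_const _, fun i z hz => ?_, ?_⟩
  · simp only [derivError, indicator_of_mem hz]
    rw [fderiv_fun_sub ((hf.contDiff i).differentiable one_ne_zero z)
      ((hf.contDiff j).differentiable one_ne_zero z),
      ← sub_sub_sub_cancel_right _ _ (G z), add_comm]
    exact enorm_sub_le
  · exact tendsto_of_tendsto_of_tendsto_of_le_of_le tendsto_const_nhds
      hf.tendsto_lintegral_derivError (fun _ => zero_le) fun _ => setLIntegral_le_lintegral _ _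

variable [BorelSpace E] [FiniteDimensional ℝ E]

lemma measurable_derivError (hf : FastC1Approx μ K f G v) (hK : MeasurableSet K)
    (j : ℕ) : Measurable (derivError K G (v j)) :=
  (((hf.contDiff j).continuous_fderiv one_ne_zero).stronglyMeasurable.sub
    hf.stronglyMeasurable).enorm.indicator hK

lemma ae_tendsto_derivError (hf : FastC1Approx μ K f G v) (hK : MeasurableSet K) :
    ∀ᵐ z ∂μ, Tendsto (fun j => derivError K G (v j) z) atTop (𝓝 0) := by
  have hmeas := hf.measurable_derivError hK
  have hsum : ∫⁻ z, ∑' j, derivError K G (v j) z ∂μ ≠ ⊤ := by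
    rw [lintegral_tsum fun j => (hmeas j).aemeasurable]
    refine ne_top_of_le_ne_top ?_ (ENNReal.tsum_le_tsum hf.lintegral_le)
    rw [ENNReal.tsum_geometric]
    exact ENNReal.inv_ne_top.2 (tsub_pos_of_lt (by simp)).ne'
  filter_upwards [ae_lt_top (Measurable.tsum hmeas) hsum] with z hz
  exact ENNReal.tendsto_atTop_zero_of_tsum_ne_top hz.ne

variable [μ.IsAddHaarMeasure]

lemma measure_maximalSuperlevel_le (hf : FastC1Approx μ K f G v) (R : ℝ) (j : ℕ) :
    μ (maximalSuperlevel μ (derivError K G (v j)) (2⁻¹ ^ j) R) ≤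
      4 ^ finrank ℝ E * 2⁻¹ ^ j := by
  have hweak := (mul_measure_maximalSuperlevel_le (μ := μ) (derivError K G (v j)) (2⁻¹ ^ j)
    R).trans (mul_le_mul_right (hf.lintegral_le j) _)
  rw [show (4 : ℝ≥0∞)⁻¹ = 2⁻¹ * 2⁻¹ by
    rw [← ENNReal.mul_inv (by simp) (by simp)]; norm_num, mul_pow, mul_left_comm] at hweak
  exact (ENNReal.mul_le_mul_iff_right (by simp) (by simp)).1 hweak

lemma norm_sub_sub_sub_le_of_notMem_maximalSuperlevel [CompleteSpace F]
    (hf : FastC1Approx μ K f G v) (hK : MeasurableSet K) {j : ℕ} {c ρ : ℝ} {y : E} (hc : 0 ≤ c)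
    (hj : 4 * 2 ^ finrank ℝ E * 2⁻¹ ^ j ≤ ENNReal.ofReal c) (hρK : closedBall x ρ ⊆ K)
    (hyρ : dist x y ≤ ρ) (hyR : 2 * dist x y ≤ R)
    (hx : x ∉ maximalSuperlevel μ (derivError K G (v j)) (2⁻¹ ^ j) R)
    (hy : y ∉ maximalSuperlevel μ (derivError K G (v j)) (2⁻¹ ^ j) R) :
    ‖(f y - v j y) - (f x - v j x)‖ ≤ c * ‖y - x‖ := by
  have hlip := ((hf.derivDominatedOn_sub j).enorm_sub_le_of_notMem_maximalSuperlevel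
    (hf.measurable_derivError hK j) ((closedBall_subset_closedBall hyρ).trans hρK)
    hyR hx hy).trans (mul_le_mul_left hj _)
  rwa [edist_dist, ← ENNReal.ofReal_mul hc, ← ofReal_norm,
    ENNReal.ofReal_le_ofReal_iff (by positivity), norm_sub_rev, dist_comm, dist_eq_norm] at hlip

lemma hasFDerivWithinAt [CompleteSpace F] (hf : FastC1Approx μ K f G v)
    (hK : MeasurableSet K) (hR : 0 < R)
    (hSgood : ∀ᶠ j in atTop,
      Disjoint S (maximalSuperlevel μ (derivError K G (v j)) (2⁻¹ ^ j) R))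
    (hxS : x ∈ S) (hxK : x ∈ interior K)
    (hxlim : Tendsto (fun j => derivError K G (v j) x) atTop (𝓝 0)) :
    HasFDerivWithinAt f (G x) S x := by
  rw [hasFDerivWithinAt_iff_isLittleO, Asymptotics.isLittleO_iff]
  intro c hc
  have hc3 : (0 : ℝ≥0∞) < ENNReal.ofReal (c / 3) := by simpa using hc
  have herr : ∀ᶠ j in atTop, derivError K G (v j) x ≤ ENNReal.ofReal (c / 3) :=
    hxlim.eventually_le_const hc3
  have hgeom : ∀ᶠ j : ℕ in atTop, 4 * 2 ^ finrank ℝ E * 2⁻¹ ^ j ≤ ENNReal.ofReal (c / 3) := by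
    have hlim := ENNReal.Tendsto.const_mul (a := (4 * 2 ^ finrank ℝ E : ℝ≥0∞))
      (ENNReal.tendsto_pow_atTop_nhds_zero_of_lt_one (r := 2⁻¹) (by simp)) (Or.inr (by finiteness))
    rw [mul_zero] at hlim
    exact hlim.eventually_le_const hc3
  obtain ⟨j, herrj, hgeomj, hgoodj⟩ := (herr.and (hgeom.and hSgood)).exists
  have hvj := ((hf.contDiff j).differentiable one_ne_zero x).hasFDerivAt.isLittleO.def
    (by positivity : 0 < c / 3)
  obtain ⟨ρ, hρ, hρK⟩ := nhds_basis_closedBall.mem_iff.1 (mem_interior_iff_mem_nhds.1 hxK)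
  filter_upwards [mem_nhdsWithin_of_mem_nhds hvj, self_mem_nhdsWithin,
    mem_nhdsWithin_of_mem_nhds (closedBall_mem_nhds x (lt_min hρ (half_pos hR)))]
    with y hvy hyS hyx
  rw [mem_closedBall', le_min_iff] at hyx
  have hlip : ‖(f y - v j y) - (f x - v j x)‖ ≤ c / 3 * ‖y - x‖ :=
    hf.norm_sub_sub_sub_le_of_notMem_maximalSuperlevel hK (by positivity) hgeomj hρK hyx.1
      (by linarith) (disjoint_left.1 hgoodj hxS) (disjoint_left.1 hgoodj hyS)
  have hlin : ‖(fderiv ℝ (v j) x - G x) (y - x)‖ ≤ c / 3 * ‖y - x‖ := by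
    refine (ContinuousLinearMap.le_opNorm _ _).trans ?_
    rw [derivError, indicator_of_mem (interior_subset hxK), ← ofReal_norm,
      ENNReal.ofReal_le_ofReal_iff (by positivity)] at herrj
    gcongr
  calc ‖f y - f x - G x (y - x)‖
      = ‖((f y - v j y) - (f x - v j x)) + (v j y - v j x - fderiv ℝ (v j) x (y - x)) +
          (fderiv ℝ (v j) x - G x) (y - x)‖ := by
        congr 1
        rw [sub_apply]
        abel
    _ ≤ c / 3 * ‖y - x‖ + c / 3 * ‖y - x‖ + c / 3 * ‖y - x‖ :=
        norm_add₃_le.trans (add_le_add (add_le_add hlip hvy) hlin)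
    _ = c * ‖y - x‖ := by ring

lemma exists_hasFDerivWithinAt_exhaustion [CompleteSpace F] (hf : FastC1Approx μ K f G v)
    (hK : MeasurableSet K) (hS : MeasurableSet S) (hSK : S ⊆ interior K) :
    ∃ T : ℕ → Set E, Monotone T ∧ (∀ J, MeasurableSet (T J)) ∧ (∀ J, T J ⊆ S) ∧
      μ (S \ ⋃ J, T J) = 0 ∧ ∀ J, ∀ x ∈ T J, HasFDerivWithinAt f (G x) (T J) x := by
  set bad : ℕ → Set E := fun j =>
    toMeasurable μ (maximalSuperlevel μ (derivError K G (v j)) (2⁻¹ ^ j) 1)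
  obtain ⟨N, hNsub, hNm, hN0⟩ :=
    exists_measurable_superset_of_null (ae_iff.1 (hf.ae_tendsto_derivError (μ := μ) hK))
  have hlimsup : μ (limsup bad atTop) = 0 := by
    refine measure_limsup_atTop_eq_zero (ne_top_of_le_ne_top ?_ (ENNReal.tsum_le_tsum fun j =>
      (measure_toMeasurable _).trans_le (hf.measure_maximalSuperlevel_le 1 j)))
    rw [ENNReal.tsum_mul_left, ENNReal.tsum_geometric]
    simp [ENNReal.mul_eq_top]
  refine ⟨fun J => S \ (N ∪ ⋃ j ≥ J, bad j), fun J J' hJ => ?_, fun J => ?_,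
    fun J => sdiff_subset, ?_, fun J x hx => ?_⟩
  · exact sdiff_subset_sdiff_right <| union_subset_union_right _ <|
      biUnion_mono (fun j hj => hJ.trans hj) fun _ _ => le_rfl
  · exact hS.diff <| hNm.union <| MeasurableSet.iUnion fun j => MeasurableSet.iUnion fun _ =>
      measurableSet_toMeasurable _ _
  · refine measure_mono_null (t := N ∪ limsup bad atTop) ?_ (measure_union_null hN0 hlimsup)
    rintro z ⟨hzS, hz⟩
    refine or_iff_not_imp_left.2 fun hzN => ?_
    rw [mem_limsup_iff_frequently_mem, frequently_atTop]
    intro J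
    by_contra! hcon
    refine hz (mem_iUnion.2 ⟨J, hzS, fun hmem => hmem.elim hzN fun hbad => ?_⟩)
    obtain ⟨j, hj, hzj⟩ := mem_iUnion₂.1 hbad
    exact hcon j hj hzj
  · refine hf.hasFDerivWithinAt hK one_pos ?_ hx (hSK hx.1)
      (not_not.1 fun hcon => hx.2 (Or.inl (hNsub hcon)))
    filter_upwards [eventually_ge_atTop J] with j hj
    exact disjoint_left.2 fun z hz hzb =>
      hz.2 (Or.inr (mem_biUnion hj (subset_toMeasurable _ _ hzb)))

end FastC1Approx

lemma FastC1Approx.lintegral_abs_det_le_measure_image [MeasurableSpace E] [BorelSpace E]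
    [FiniteDimensional ℝ E] {μ : Measure E} [μ.IsAddHaarMeasure] {K S : Set E} {f : E → E}
    {G : E → E →L[ℝ] E} {v : ℕ → E → E} (hf : FastC1Approx μ K f G v) (hK : MeasurableSet K)
    (hS : MeasurableSet S) (hSK : S ⊆ interior K) (hinj : InjOn f S) :
    ∫⁻ x in S, ENNReal.ofReal |(G x).det| ∂μ ≤ μ (f '' S) := by
  obtain ⟨T, hTmono, hTm, hTS, hTnull, hTderiv⟩ :=
    hf.exists_hasFDerivWithinAt_exhaustion hK hS hSK
  calc ∫⁻ x in S, ENNReal.ofReal |(G x).det| ∂μ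
      = ∫⁻ x in ⋃ J, T J, ENNReal.ofReal |(G x).det| ∂μ := by
        refine setLIntegral_congr (ae_eq_set.2 ⟨hTnull, ?_⟩)
        rw [sdiff_eq_empty.2 (iUnion_subset hTS), measure_empty]
    _ = ⨆ J, ∫⁻ x in T J, ENNReal.ofReal |(G x).det| ∂μ :=
        setLIntegral_iUnion_of_directed _ hTmono.directed_le
    _ ≤ μ (f '' S) := iSup_le fun J => by
        rw [lintegral_abs_det_fderiv_eq_addHaar_image μ (hTm J) (hTderiv J)
          (hinj.mono (hTS J))]
        exact measure_mono (image_mono (hTS J))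

end ApproximateDifferentiability

section ScaleKernel

lemma lintegral_Ioi_inv_pow_le {m : ℕ} (hm : m ≠ 0) {a : ℝ} (ha : 0 < a) :
    ∫⁻ t in Ioi a, ENNReal.ofReal ((t ^ (m + 1))⁻¹) ≤ ENNReal.ofReal ((a ^ m)⁻¹) := by
  have hm1 : (1 : ℝ) ≤ m := Nat.one_le_cast.2 (Nat.one_le_iff_ne_zero.2 hm)
  have hexp : -((m : ℝ) + 1) < -1 := by linarith
  have hrpow : ∀ t ∈ Ioi a, ENNReal.ofReal ((t ^ (m + 1))⁻¹) =
      ENNReal.ofReal (t ^ (-((m : ℝ) + 1))) := fun t ht => by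
    rw [Real.rpow_neg (ha.trans ht).le]
    norm_cast
  rw [setLIntegral_congr_fun measurableSet_Ioi hrpow,
    ← ofReal_integral_eq_lintegral_ofReal (integrableOn_Ioi_rpow_of_lt hexp ha)
      ((ae_restrict_mem measurableSet_Ioi).mono fun t ht => Real.rpow_nonneg (ha.trans ht).le _),
    integral_Ioi_rpow_of_lt hexp ha, neg_add, neg_add_cancel_right, neg_div_neg_eq,
    Real.rpow_neg ha.le, Real.rpow_natCast]
  exact ENNReal.ofReal_le_ofReal (div_le_self (by positivity) hm1)

variable {E : Type*} [NormedAddCommGroup E] [NormedSpace ℝ E] {L : ℝ} {x : E} {m : ℕ}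

/-- The kernel `∫₀¹ t⁻ᵈ 1_{|z - x| ≤ Lt} dt` of the operator `scalePotential`. -/
noncomputable def scaleKernel (L : ℝ) (x z : E) : ℝ≥0∞ :=
  ∫⁻ t in Ioo (0 : ℝ) 1,
    (closedBall x (L * t)).indicator (fun _ => ENNReal.ofReal ((t ^ finrank ℝ E)⁻¹)) z

lemma scaleKernel_le (hd : finrank ℝ E = m + 1) (hm : m ≠ 0) (hL : 0 < L) {z : E} (hz : z ≠ x) :
    scaleKernel L x z ≤ ENNReal.ofReal ((L / dist z x) ^ m) := by
  have ha : 0 < dist z x / L := div_pos (dist_pos.2 hz) hL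
  calc scaleKernel L x z ≤ ∫⁻ t in Ioo (0 : ℝ) 1, (Ici (dist z x / L)).indicator
          (fun t => ENNReal.ofReal ((t ^ (m + 1))⁻¹)) t := by
        refine lintegral_mono fun t => ?_
        rw [hd]
        by_cases hzt : z ∈ closedBall x (L * t)
        · rw [indicator_of_mem hzt, indicator_of_mem]
          exact (div_le_iff₀' hL).2 hzt
        · simp only [indicator_of_notMem hzt, zero_le]
    _ ≤ ∫⁻ t in Ioi (dist z x / L), ENNReal.ofReal ((t ^ (m + 1))⁻¹) := by
        refine (setLIntegral_le_lintegral _ _).trans ?_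
        rw [lintegral_indicator measurableSet_Ici, setLIntegral_congr Ioi_ae_eq_Ici]
    _ ≤ ENNReal.ofReal ((L / dist z x) ^ m) := by
        refine (lintegral_Ioi_inv_pow_le hm ha).trans_eq ?_
        rw [← inv_pow, inv_div]

variable [MeasurableSpace E] [BorelSpace E] [FiniteDimensional ℝ E]

lemma measurable_indicator_closedBall_inv_pow (L : ℝ) (x : E) :
    Measurable fun q : E × ℝ =>
      (closedBall x (L * q.2)).indicator (fun _ => ENNReal.ofReal ((q.2 ^ finrank ℝ E)⁻¹)) q.1 := by
  have hset : MeasurableSet {q : E × ℝ | dist q.1 x ≤ L * q.2} :=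
    measurableSet_le (by fun_prop) (by fun_prop)
  exact Measurable.indicator (f := fun q : E × ℝ => ENNReal.ofReal ((q.2 ^ finrank ℝ E)⁻¹))
    (by fun_prop) hset

lemma measurable_scaleKernel (L : ℝ) (x : E) : Measurable (scaleKernel L x) :=
  (measurable_indicator_closedBall_inv_pow L x).lintegral_prod_right'

variable {μ : Measure E} {B : Set E}

lemma setLIntegral_mul_scaleKernel [SFinite μ] {h : E → ℝ≥0∞} (hh : Measurable h) :
    ∫⁻ z in B, h z * scaleKernel L x z ∂μ = ∫⁻ t in Ioo (0 : ℝ) 1,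
      ENNReal.ofReal ((t ^ finrank ℝ E)⁻¹) * ∫⁻ z in B ∩ closedBall x (L * t), h z ∂μ := by
  have hmeas := measurable_indicator_closedBall_inv_pow L x
  calc ∫⁻ z in B, h z * scaleKernel L x z ∂μ
      = ∫⁻ z in B, (∫⁻ t in Ioo (0 : ℝ) 1, h z * (closedBall x (L * t)).indicator
          (fun _ => ENNReal.ofReal ((t ^ finrank ℝ E)⁻¹)) z) ∂μ := by
        refine lintegral_congr fun z => (lintegral_const_mul _ ?_).symm
        exact hmeas.comp (measurable_const.prodMk measurable_id)
    _ = ∫⁻ t in Ioo (0 : ℝ) 1, (∫⁻ z in B, h z * (closedBall x (L * t)).indicator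
          (fun _ => ENNReal.ofReal ((t ^ finrank ℝ E)⁻¹)) z ∂μ) :=
        lintegral_lintegral_swap ((hh.comp measurable_fst).mul hmeas).aemeasurable
    _ = _ := by
        refine lintegral_congr fun t => ?_
        rw [inter_comm, ← Measure.restrict_restrict measurableSet_closedBall,
          ← lintegral_indicator measurableSet_closedBall,
          ← lintegral_const_mul' _ _ ENNReal.ofReal_ne_top]
        refine lintegral_congr fun z => ?_
        by_cases hz : z ∈ closedBall x (L * t)
        · rw [indicator_of_mem hz, indicator_of_mem hz, mul_comm]
        · rw [indicator_of_notMem hz, indicator_of_notMem hz, mul_zero, mul_zero]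

lemma scalePotential_eq_mul_setLIntegral [SFinite μ] {h : E → ℝ≥0∞} (hh : Measurable h) :
    scalePotential μ B L h x = ENNReal.ofReal L * ∫⁻ z in B, h z * scaleKernel L x z ∂μ := by
  rw [setLIntegral_mul_scaleKernel hh, scalePotential]

variable [μ.IsAddHaarMeasure]

lemma ofReal_inv_pow_mul_measure_inter_closedBall_le (hd : finrank ℝ E = m + 1) (hL : 0 ≤ L)
    {a t : ℝ} (ha : 0 ≤ a) (ht : 0 < t) :
    ENNReal.ofReal ((t ^ (m + 1))⁻¹) * μ (closedBall x (a * L) ∩ closedBall x (L * t)) ≤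
      μ (closedBall 0 L) * ((Ioc 0 a).indicator 1 t + ENNReal.ofReal (a ^ (m + 1)) *
        (Ioi a).indicator (fun t => ENNReal.ofReal ((t ^ (m + 1))⁻¹)) t) := by
  have hball : ∀ {s : ℝ}, 0 ≤ s →
      μ (closedBall x (s * L)) = ENNReal.ofReal (s ^ (m + 1)) * μ (closedBall 0 L) := fun hs => by
    rw [Measure.addHaar_closedBall_mul μ _ hs hL, hd]
  rcases le_or_gt t a with hta | hta
  · rw [indicator_of_mem (show t ∈ Ioc 0 a from ⟨ht, hta⟩), indicator_of_notMem (by simpa),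
      mul_zero, add_zero, Pi.one_apply, mul_one]
    refine (mul_le_mul_right (measure_mono inter_subset_right) _).trans_eq ?_
    rw [mul_comm L, hball ht.le, ← mul_assoc, ← ENNReal.ofReal_mul (by positivity),
      inv_mul_cancel₀ (by positivity), ENNReal.ofReal_one, one_mul]
  · rw [indicator_of_notMem (by simp [hta]), indicator_of_mem (mem_Ioi.2 hta), zero_add]
    refine (mul_le_mul_right (measure_mono inter_subset_left) _).trans_eq ?_
    rw [hball ha]
    ring

lemma setLIntegral_closedBall_scaleKernel_le (hd : finrank ℝ E = m + 1) (hm : m ≠ 0) (hL : 0 < L)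
    {σ : ℝ} (hσ : 0 < σ) :
    ∫⁻ z in closedBall x σ, scaleKernel L x z ∂μ ≤
      2 * ENNReal.ofReal (σ / L) * μ (closedBall 0 L) := by
  set a := σ / L
  have ha : 0 < a := by positivity
  calc ∫⁻ z in closedBall x σ, scaleKernel L x z ∂μ
      = ∫⁻ t in Ioo (0 : ℝ) 1, ENNReal.ofReal ((t ^ (m + 1))⁻¹) *
          μ (closedBall x σ ∩ closedBall x (L * t)) := by
        simpa only [Pi.one_apply, one_mul, setLIntegral_one, hd] using
          setLIntegral_mul_scaleKernel (μ := μ) (B := closedBall x σ) (L := L) (x := x)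
            measurable_one
    _ ≤ ∫⁻ t, μ (closedBall 0 L) * ((Ioc 0 a).indicator 1 t + ENNReal.ofReal (a ^ (m + 1)) *
          (Ioi a).indicator (fun t => ENNReal.ofReal ((t ^ (m + 1))⁻¹)) t) :=
        (setLIntegral_mono' measurableSet_Ioo fun t ht => by
          simpa only [a, div_mul_cancel₀ σ hL.ne'] using
            ofReal_inv_pow_mul_measure_inter_closedBall_le hd hL.le ha.le ht.1).trans
          (setLIntegral_le_lintegral _ _)
    _ = μ (closedBall 0 L) * (ENNReal.ofReal a + ENNReal.ofReal (a ^ (m + 1)) *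
          ∫⁻ t in Ioi a, ENNReal.ofReal ((t ^ (m + 1))⁻¹)) := by
        rw [lintegral_const_mul' _ _ measure_closedBall_lt_top.ne,
          lintegral_add_left (measurable_one.indicator measurableSet_Ioc),
          lintegral_const_mul' _ _ ENNReal.ofReal_ne_top,
          lintegral_indicator_one measurableSet_Ioc, lintegral_indicator measurableSet_Ioi,
          Real.volume_Ioc, sub_zero]
    _ ≤ μ (closedBall 0 L) * (ENNReal.ofReal a + ENNReal.ofReal (a ^ (m + 1)) *
          ENNReal.ofReal ((a ^ m)⁻¹)) := by
        gcongr
        exact lintegral_Ioi_inv_pow_le hm ha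
    _ = 2 * ENNReal.ofReal a * μ (closedBall 0 L) := by
        rw [← ENNReal.ofReal_mul (by positivity), pow_succ', mul_assoc,
          mul_inv_cancel₀ (by positivity)]
        ring_nf

end ScaleKernel

lemma setLIntegral_ofReal_mul_le_add {X : Type*} [MeasurableSpace X] {μ : Measure X} {B : Set X}
    {h : X → ℝ} {κ : X → ℝ≥0∞} (hh : Measurable h) (hκ : Measurable κ) (lam : ℝ) :
    ∫⁻ z in B, ENNReal.ofReal (h z) * κ z ∂μ ≤ ∫⁻ z in B, ENNReal.ofReal lam * κ z ∂μ +
      ∫⁻ z in B ∩ {z | lam < h z}, ENNReal.ofReal (h z) * κ z ∂μ := by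
  have hlamh : MeasurableSet {z | lam < h z} := measurableSet_lt measurable_const hh
  rw [inter_comm, ← setLIntegral_indicator hlamh, ← lintegral_add_left (by fun_prop)]
  refine lintegral_mono fun z => ?_
  by_cases hz : z ∈ {z | lam < h z}
  · refine le_add_left ?_
    rw [indicator_of_mem hz]
  · refine le_add_right ?_
    gcongr
    exact not_lt.1 hz

lemma lintegral_mul_volume_eq_lintegral_setLIntegral_closedBall {X : Type*}
    [PseudoMetricSpace X] [SecondCountableTopology X] [MeasurableSpace X] [BorelSpace X]
    {μ : Measure X} [SFinite μ] {g : X → ℝ≥0∞} (hg : Measurable g) {R : ℝ → ℝ} (hR : Measurable R)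
    (a : ℝ) (x : X) :
    ∫⁻ z, g z * volume (Ioi a ∩ {t | dist z x ≤ R t}) ∂μ =
      ∫⁻ t in Ioi a, ∫⁻ z in closedBall x (R t), g z ∂μ := by
  have hset : MeasurableSet {q : X × ℝ | dist q.1 x ≤ R q.2} :=
    measurableSet_le (by fun_prop) (by fun_prop)
  have hmeas : Measurable fun q : X × ℝ => {q : X × ℝ | dist q.1 x ≤ R q.2}.indicator
      (fun q => g q.1) q := (hg.comp measurable_fst).indicator hset
  calc ∫⁻ z, g z * volume (Ioi a ∩ {t | dist z x ≤ R t}) ∂μ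
      = ∫⁻ z, (∫⁻ t in Ioi a, {q : X × ℝ | dist q.1 x ≤ R q.2}.indicator
          (fun q => g q.1) (z, t)) ∂μ := by
        refine lintegral_congr fun z => ?_
        have hzset : MeasurableSet {t | dist z x ≤ R t} :=
          measurableSet_le measurable_const hR
        rw [inter_comm, ← Measure.restrict_apply hzset, ← setLIntegral_const,
          ← lintegral_indicator hzset]
        rfl
    _ = ∫⁻ t in Ioi a, (∫⁻ z, {q : X × ℝ | dist q.1 x ≤ R q.2}.indicator
          (fun q => g q.1) (z, t) ∂μ) := lintegral_lintegral_swap hmeas.aemeasurable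
    _ = _ := by
        refine lintegral_congr fun t => ?_
        rw [← lintegral_indicator measurableSet_closedBall]
        rfl

section Calderon

/-- The Calderón integral `∫ₐ^∞ (2t / φ(t))^{1/m} dt`. -/
noncomputable def calderonIntegral (φ : ℝ → ℝ) (m : ℕ) (a : ℝ) : ℝ≥0∞ :=
  ∫⁻ t in Ioi a, ENNReal.ofReal ((2 * t / φ t) ^ (m : ℝ)⁻¹)

variable {φ : ℝ → ℝ} {m : ℕ} {lam r : ℝ}

lemma ofReal_le_two_mul_volume_of_mul_pow_lt (hφ : Monotone φ) (hpos : ∀ t, 0 < φ t) (hm : m ≠ 0)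
    (hr : 0 < r) {a s : ℝ} (hs : 0 ≤ s) (ha : lam < a)
    (hlt : φ a * s ^ m < a * r ^ m) :
    ENNReal.ofReal a ≤
      2 * volume (Ioi (lam / 2) ∩ {t | s ≤ r * (2 * t / φ t) ^ (m : ℝ)⁻¹}) := by
  have hsub : Ioo (a / 2) a ⊆ Ioi (lam / 2) ∩ {t | s ≤ r * (2 * t / φ t) ^ (m : ℝ)⁻¹} := by
    intro t ht
    refine ⟨mem_Ioi.2 (by linarith [ht.1]), ?_⟩
    have hpow : (s / r) ^ m ≤ 2 * t / φ t := by
      rw [div_pow, div_le_div_iff₀ (by positivity) (hpos t)]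
      calc s ^ m * φ t ≤ φ a * s ^ m := by
            rw [mul_comm]
            gcongr
            exact hφ ht.2.le
        _ ≤ a * r ^ m := hlt.le
        _ ≤ 2 * t * r ^ m := by
            gcongr
            linarith [ht.1]
    have hroot := Real.rpow_le_rpow (by positivity) hpow (by positivity : (0 : ℝ) ≤ (m : ℝ)⁻¹)
    rwa [Real.pow_rpow_inv_natCast (by positivity) hm, div_le_iff₀' hr] at hroot
  calc ENNReal.ofReal a = 2 * volume (Ioo (a / 2) a) := by
        rw [Real.volume_Ioo, ← ENNReal.ofReal_ofNat, ← ENNReal.ofReal_mul zero_le_two]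
        ring_nf
    _ ≤ _ := by gcongr

variable {E : Type*} [NormedAddCommGroup E] [NormedSpace ℝ E] {x : E} {L : ℝ}

/- Calderón's splitting: where `φ(h) |z - x|^m ≥ h r^m` the kernel bound `(L / |z - x|)^m` suffices,
elsewhere `h` is at most twice the length of the set of `t` with `|z - x| ≤ r (2t / φ(t))^{1/m}`. -/
lemma ofReal_mul_scaleKernel_le (hd : finrank ℝ E = m + 1) (hm : m ≠ 0) (hφ : Monotone φ)
    (hpos : ∀ t, 0 < φ t) (hlam : 0 < lam) (hr : 0 < r) (hL : 0 < L) {a : ℝ} (ha : lam < a) {z : E}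
    (hz : z ≠ x) :
    ENNReal.ofReal a * scaleKernel L x z ≤
      ENNReal.ofReal ((L / r) ^ m) * ENNReal.ofReal (φ a) + 2 * (scaleKernel L x z *
        volume (Ioi (lam / 2) ∩ {t | dist z x ≤ r * (2 * t / φ t) ^ (m : ℝ)⁻¹})) := by
  have ha0 : 0 < a := hlam.trans ha
  have hs := dist_pos.2 hz
  rcases le_or_gt (a * r ^ m) (φ a * dist z x ^ m) with hle | hlt
  · refine le_add_right ((mul_le_mul_right (scaleKernel_le hd hm hL hz) _).trans ?_)
    rw [← ENNReal.ofReal_mul ha0.le, ← ENNReal.ofReal_mul (by positivity), div_pow, div_pow,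
      mul_div_left_comm, div_mul_eq_mul_div, ← mul_div_assoc]
    refine ENNReal.ofReal_le_ofReal ?_
    rw [div_le_div_iff₀ (by positivity) (by positivity)]
    nlinarith [mul_le_mul_of_nonneg_left hle (by positivity : 0 ≤ L ^ m)]
  · refine le_add_left ?_
    rw [mul_left_comm, mul_comm]
    gcongr
    exact ofReal_le_two_mul_volume_of_mul_pow_lt hφ hpos hm hr hs.le ha hlt

variable [MeasurableSpace E] [BorelSpace E] [FiniteDimensional ℝ E] {μ : Measure E}
  [μ.IsAddHaarMeasure] {h : E → ℝ} {T : Set E}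

lemma lintegral_scaleKernel_mul_volume_le (hd : finrank ℝ E = m + 1) (hm : m ≠ 0)
    (hφ : Monotone φ) (hpos : ∀ t, 0 < φ t) (hlam : 0 < lam) (hr : 0 < r) (hL : 0 < L) :
    ∫⁻ z, scaleKernel L x z *
        volume (Ioi (lam / 2) ∩ {t | dist z x ≤ r * (2 * t / φ t) ^ (m : ℝ)⁻¹}) ∂μ ≤
      2 * ENNReal.ofReal (r / L) * μ (closedBall 0 L) * calderonIntegral φ m (lam / 2) := by
  have hRm : Measurable fun t => r * (2 * t / φ t) ^ (m : ℝ)⁻¹ := by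
    have := hφ.measurable
    fun_prop
  rw [lintegral_mul_volume_eq_lintegral_setLIntegral_closedBall (measurable_scaleKernel L x) hRm,
    calderonIntegral, ← lintegral_const_mul' _ _
      (ENNReal.mul_ne_top (by finiteness) measure_closedBall_lt_top.ne)]
  refine setLIntegral_mono' measurableSet_Ioi fun t ht => ?_
  have ht0 : 0 < t := (half_pos hlam).trans ht
  have hRt : 0 < r * (2 * t / φ t) ^ (m : ℝ)⁻¹ :=
    mul_pos hr (Real.rpow_pos_of_pos (div_pos (by positivity) (hpos t)) _)
  refine (setLIntegral_closedBall_scaleKernel_le hd hm hL hRt).trans_eq ?_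
  rw [mul_div_right_comm, ENNReal.ofReal_mul (by positivity)]
  ring

lemma setLIntegral_ofReal_mul_scaleKernel_le (hd : finrank ℝ E = m + 1) (hm : m ≠ 0)
    (hφ : Monotone φ) (hpos : ∀ t, 0 < φ t) (hlam : 0 < lam) (hr : 0 < r) (hL : 0 < L)
    (hh : Measurable h) (hT : MeasurableSet T) (hlamT : ∀ z ∈ T, lam < h z) :
    ∫⁻ z in T, ENNReal.ofReal (h z) * scaleKernel L x z ∂μ ≤
      ENNReal.ofReal ((L / r) ^ m) * ∫⁻ z in T, ENNReal.ofReal (φ (h z)) ∂μ +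
        4 * ENNReal.ofReal (r / L) * μ (closedBall 0 L) * calderonIntegral φ m (lam / 2) := by
  have : Nontrivial E := finrank_pos_iff.1 (by rw [hd]; positivity : 0 < finrank ℝ E)
  calc ∫⁻ z in T, ENNReal.ofReal (h z) * scaleKernel L x z ∂μ
      ≤ ∫⁻ z in T, (ENNReal.ofReal ((L / r) ^ m) * ENNReal.ofReal (φ (h z)) +
          2 * (scaleKernel L x z *
            volume (Ioi (lam / 2) ∩ {t | dist z x ≤ r * (2 * t / φ t) ^ (m : ℝ)⁻¹}))) ∂μ := by
        refine setLIntegral_mono_ae' hT ?_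
        filter_upwards [compl_mem_ae_iff.2 (measure_singleton x)] with z hzx hzT
        exact ofReal_mul_scaleKernel_le hd hm hφ hpos hlam hr hL (hlamT z hzT) hzx
    _ ≤ ENNReal.ofReal ((L / r) ^ m) * ∫⁻ z in T, ENNReal.ofReal (φ (h z)) ∂μ +
        2 * ∫⁻ z, scaleKernel L x z *
          volume (Ioi (lam / 2) ∩ {t | dist z x ≤ r * (2 * t / φ t) ^ (m : ℝ)⁻¹}) ∂μ := by
        have hφm := hφ.measurable
        rw [lintegral_add_left' (by fun_prop), lintegral_const_mul' _ _ ENNReal.ofReal_ne_top,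
          lintegral_const_mul' _ _ ENNReal.ofNat_ne_top]
        gcongr
        exact Measure.restrict_le_self
    _ ≤ _ := by
        grw [lintegral_scaleKernel_mul_volume_le hd hm hφ hpos hlam hr hL]
        refine (congrArg _ ?_).le
        ring

end Calderon

lemma ennreal_add_pow_le (a b : ℝ≥0∞) (n : ℕ) : (a + b) ^ n ≤ 2 ^ n * (a ^ n + b ^ n) := by
  wlog hab : a ≤ b generalizing a b
  · rw [add_comm a, add_comm (a ^ n)]
    exact this b a (le_of_not_ge hab)
  calc (a + b) ^ n ≤ (2 * b) ^ n := by
        rw [two_mul]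
        gcongr
    _ ≤ 2 ^ n * (a ^ n + b ^ n) := by
        rw [mul_pow]
        gcongr
        exact le_add_self

section Oscillation

variable {E : Type*} [NormedAddCommGroup E] [NormedSpace ℝ E] [MeasurableSpace E] [BorelSpace E]
  [FiniteDimensional ℝ E] {μ : Measure E} [μ.IsAddHaarMeasure] {φ : ℝ → ℝ} {m : ℕ} {lam : ℝ}
  {h : E → ℝ} {u : E → E} {B K S : Set E}

lemma scalePotential_le_of_setLIntegral_le (hd : finrank ℝ E = m + 1) (hm : m ≠ 0)
    (hφ : Monotone φ) (hpos : ∀ t, 0 < φ t) (hlam : 0 < lam) {r L : ℝ} (hr : 0 < r) (hL : 0 < L)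
    (hh : Measurable h) (hB : MeasurableSet B) (x : E)
    (hmass : ∫⁻ z in B ∩ {z | lam < h z}, ENNReal.ofReal (φ (h z)) ∂μ ≤
      ENNReal.ofReal (r ^ (m + 1)) * μ (closedBall 0 1)) :
    scalePotential μ B L (fun z => ENNReal.ofReal (h z)) x ≤
      (ENNReal.ofReal (L * lam) + ENNReal.ofReal r * (1 + 4 * calderonIntegral φ m (lam / 2))) *
        μ (closedBall 0 L) := by
  have hT : MeasurableSet (B ∩ {z | lam < h z}) :=
    hB.inter (measurableSet_lt measurable_const hh)
  have hlow : ENNReal.ofReal L * ∫⁻ z in B, ENNReal.ofReal lam * scaleKernel L x z ∂μ ≤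
      ENNReal.ofReal L * (ENNReal.ofReal lam * μ (closedBall 0 L)) := by
    rw [← scalePotential_eq_mul_setLIntegral measurable_const]
    refine scalePotential_le_of_notMem_maximalSuperlevel hL le_rfl ?_
    rintro ⟨s, -, hlt⟩
    exact hlt.ne' (setLIntegral_const _ _)
  have hhigh : ENNReal.ofReal L * ∫⁻ z in B ∩ {z | lam < h z},
        ENNReal.ofReal (h z) * scaleKernel L x z ∂μ ≤
      ENNReal.ofReal r * (1 + 4 * calderonIntegral φ m (lam / 2)) * μ (closedBall 0 L) := by
    grw [setLIntegral_ofReal_mul_scaleKernel_le hd hm hφ hpos hlam hr hL hh hT fun z hz => hz.2,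
      hmass]
    have hball : ENNReal.ofReal L * (ENNReal.ofReal ((L / r) ^ m) *
        (ENNReal.ofReal (r ^ (m + 1)) * μ (closedBall 0 1))) =
        ENNReal.ofReal r * μ (closedBall 0 L) := by
      rw [μ.addHaar_closedBall' 0 hL.le, hd, ← mul_assoc, ← mul_assoc, ← mul_assoc,
        ← ENNReal.ofReal_mul hL.le, ← ENNReal.ofReal_mul (by positivity),
        ← ENNReal.ofReal_mul hr.le]
      congr 2
      rw [pow_succ' r, mul_mul_mul_comm, ← mul_pow, div_mul_cancel₀ _ hr.ne', pow_succ']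
      ring
    have hLr : ENNReal.ofReal L * ENNReal.ofReal (r / L) = ENNReal.ofReal r := by
      rw [← ENNReal.ofReal_mul hL.le, mul_div_cancel₀ _ hL.ne']
    rw [mul_add, hball, ← hLr]
    exact le_of_eq (by ring)
  calc scalePotential μ B L (fun z => ENNReal.ofReal (h z)) x
      = ENNReal.ofReal L * ∫⁻ z in B, ENNReal.ofReal (h z) * scaleKernel L x z ∂μ :=
        scalePotential_eq_mul_setLIntegral hh.ennreal_ofReal
    _ ≤ ENNReal.ofReal L * (∫⁻ z in B, ENNReal.ofReal lam * scaleKernel L x z ∂μ +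
          ∫⁻ z in B ∩ {z | lam < h z}, ENNReal.ofReal (h z) * scaleKernel L x z ∂μ) := by
        gcongr
        exact setLIntegral_ofReal_mul_le_add hh (measurable_scaleKernel L x) lam
    _ ≤ _ := by
        grw [mul_add, hlow, hhigh, ENNReal.ofReal_mul hL.le]
        exact le_of_eq (by ring)

lemma measure_le_of_forall_edist_le [Nontrivial E] {W : ℝ≥0∞} {a : E}
    (hS : ∀ y ∈ S, edist y a ≤ W) : μ S ≤ W ^ finrank ℝ E * μ (closedBall 0 1) := by
  rcases eq_or_ne W ⊤ with rfl | hW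
  · rw [ENNReal.top_pow finrank_pos.ne',
      ENNReal.top_mul (measure_closedBall_pos μ 0 one_pos).ne']
    exact le_top
  · have hsub : S ⊆ closedBall a W.toReal := fun y hy =>
      (edist_le_ofReal ENNReal.toReal_nonneg).1 ((hS y hy).trans_eq (ENNReal.ofReal_toReal hW).symm)
    refine (measure_mono hsub).trans_eq ?_
    rw [μ.addHaar_closedBall' a ENNReal.toReal_nonneg, ENNReal.ofReal_pow ENNReal.toReal_nonneg,
      ENNReal.ofReal_toReal hW]

lemma exists_ofReal_pow_mul_eq {n : ℕ} (hn : n ≠ 0) {ω M : ℝ≥0∞} (hω : ω ≠ 0) (hω' : ω ≠ ⊤)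
    (hM : M ≠ 0) (hM' : M ≠ ⊤) : ∃ r > 0, ENNReal.ofReal (r ^ n) * ω = M := by
  have hq : M / ω ≠ ⊤ := ENNReal.div_ne_top hM' hω
  have hq0 : 0 < (M / ω).toReal := ENNReal.toReal_pos (ENNReal.div_ne_zero.2 ⟨hM, hω'⟩) hq
  refine ⟨(M / ω).toReal ^ (n : ℝ)⁻¹, Real.rpow_pos_of_pos hq0 _, ?_⟩
  rw [Real.rpow_inv_natCast_pow hq0.le hn, ENNReal.ofReal_toReal hq, ENNReal.div_mul_cancel hω hω']

lemma DerivDominatedOn.edist_le_of_setLIntegral_le {c x y : E} {ρ r : ℝ} (hd : finrank ℝ E = m + 1)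
    (hm : m ≠ 0) (hφ : Monotone φ) (hpos : ∀ t, 0 < φ t) (hlam : 0 < lam) (hr : 0 < r) (hρ : 0 < ρ)
    (hh : Measurable h)
    (hu : DerivDominatedOn μ (closedBall c ρ) u fun z => ENNReal.ofReal (h z))
    (hmass : ∫⁻ z in closedBall c ρ ∩ {z | lam < h z}, ENNReal.ofReal (φ (h z)) ∂μ ≤
      ENNReal.ofReal (r ^ (m + 1)) * μ (closedBall 0 1))
    (hx : x ∈ closedBall c ρ) (hy : y ∈ closedBall c ρ) :
    edist (u x) (u y) ≤ 2 ^ (m + 2) * (ENNReal.ofReal (2 * ρ * lam) +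
      ENNReal.ofReal r * (1 + 4 * calderonIntegral φ m (lam / 2))) := by
  have hdist : ∀ z ∈ closedBall c ρ, ∀ w ∈ closedBall c ρ, dist z w ≤ 2 * ρ := fun z hz w hw =>
    (dist_triangle_right z w c).trans (by linarith [mem_closedBall.1 hz, mem_closedBall.1 hw])
  have hpot := fun z => scalePotential_le_of_setLIntegral_le hd hm hφ hpos hlam hr
    (mul_pos two_pos hρ) hh measurableSet_closedBall z hmass
  have hball : μ (closedBall 0 (2 * ρ)) = 2 ^ (m + 1) * μ (closedBall c ρ) := by
    rw [μ.addHaar_closedBall_mul 0 zero_le_two hρ.le, hd, ENNReal.ofReal_pow zero_le_two,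
      ENNReal.ofReal_ofNat, μ.addHaar_closedBall_center, μ.addHaar_closedBall_center c]
  have hosc := hu.enorm_sub_mul_measure_le (convex_closedBall c ρ) measurableSet_closedBall
    hh.ennreal_ofReal hx hy hdist
  rw [edist_eq_enorm_sub, ← ENNReal.mul_le_mul_iff_left
    (measure_closedBall_pos μ c hρ).ne' measure_closedBall_lt_top.ne]
  grw [hosc, hpot, hpot, hball]
  exact le_of_eq (by ring)

lemma DerivDominatedOn.measure_image_closedBall_le {c : E} {ρ : ℝ} {M : ℝ≥0∞}
    (hd : finrank ℝ E = m + 1) (hm : m ≠ 0) (hφ : Monotone φ) (hpos : ∀ t, 0 < φ t)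
    (hlam : 0 < lam) (hρ : 0 < ρ) (hh : Measurable h)
    (hu : DerivDominatedOn μ (closedBall c ρ) u fun z => ENNReal.ofReal (h z))
    (hmass : ∫⁻ z in closedBall c ρ ∩ {z | lam < h z}, ENNReal.ofReal (φ (h z)) ∂μ ≤ M)
    (hM : M ≠ 0) (hM' : M ≠ ⊤) :
    μ (u '' closedBall c ρ) ≤ (2 ^ (m + 4) * ENNReal.ofReal lam) ^ (m + 1) * μ (closedBall c ρ) +
      (2 ^ (m + 3) * (1 + 4 * calderonIntegral φ m (lam / 2))) ^ (m + 1) * M := by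
  have : Nontrivial E := finrank_pos_iff.1 (by rw [hd]; positivity : 0 < finrank ℝ E)
  set I := calderonIntegral φ m (lam / 2)
  obtain ⟨r, hr, hrM⟩ := exists_ofReal_pow_mul_eq (n := m + 1) m.succ_ne_zero
    (measure_closedBall_pos μ (0 : E) one_pos).ne' measure_closedBall_lt_top.ne hM hM'
  have hedist : ∀ y ∈ u '' closedBall c ρ, edist y (u c) ≤ 2 ^ (m + 2) *
      (ENNReal.ofReal (2 * ρ * lam) + ENNReal.ofReal r * (1 + 4 * I)) := by
    rintro _ ⟨y, hy, rfl⟩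
    exact hu.edist_le_of_setLIntegral_le hd hm hφ hpos hlam hr hρ hh (hmass.trans_eq hrM.symm) hy
      (mem_closedBall_self hρ.le)
  grw [measure_le_of_forall_edist_le hedist, hd, mul_pow, ennreal_add_pow_le]
  rw [← hrM, μ.addHaar_closedBall' c hρ.le, hd, ENNReal.ofReal_mul (by positivity),
    ENNReal.ofReal_mul zero_le_two, ENNReal.ofReal_ofNat, ENNReal.ofReal_pow hρ.le,
    ENNReal.ofReal_pow hr.le]
  refine le_of_eq ?_
  rw [show (2 : ℝ≥0∞) ^ (m + 4) = 2 ^ (m + 2) * 2 * 2 by ring,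
    show (2 : ℝ≥0∞) ^ (m + 3) = 2 ^ (m + 2) * 2 by ring]
  simp only [mul_pow]
  ring

end Oscillation

section Covering

lemma measure_image_le_of_measure_image_closedBall_le {E F : Type*} [NormedAddCommGroup E]
    [NormedSpace ℝ E] [FiniteDimensional ℝ E] [MeasurableSpace E] [BorelSpace E]
    [MeasurableSpace F] {μ : Measure F} {ν : Measure E} [IsFiniteMeasure ν] {u : E → F}
    {K S : Set E} (hSK : S ⊆ interior K)
    (hball : ∀ x r, 0 < r → closedBall x r ⊆ K → μ (u '' closedBall x r) ≤ ν (closedBall x r)) :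
    μ (u '' S) ≤ ν S := by
  refine ENNReal.le_of_forall_pos_le_add fun ε hε _ => ?_
  have hsmall : ∀ x ∈ S, ∀ δ > 0, ({r | 0 < r ∧ closedBall x r ⊆ K} ∩ Ioo 0 δ).Nonempty := by
    intro x hx δ hδ
    obtain ⟨ρ, hρ, hρK⟩ := nhds_basis_closedBall.mem_iff.1 (mem_interior_iff_mem_nhds.1 (hSK hx))
    have hpos : 0 < min ρ (δ / 2) := lt_min hρ (half_pos hδ)
    exact ⟨min ρ (δ / 2), ⟨hpos, (closedBall_subset_closedBall (min_le_left _ _)).trans hρK⟩, hpos,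
      (min_le_right _ _).trans_lt (half_lt_self hδ)⟩
  obtain ⟨t, r, htc, -, hr, hcov, hsum⟩ :=
    Besicovitch.exists_closedBall_covering_tsum_measure_le ν (ENNReal.coe_pos.2 hε).ne' _ S hsmall
  have := htc.to_subtype
  calc μ (u '' S) ≤ μ (⋃ x : t, u '' closedBall (x : E) (r x)) := by
        rw [← image_iUnion, iUnion_coe_set]
        exact measure_mono (image_mono hcov)
    _ ≤ ∑' x : t, μ (u '' closedBall (x : E) (r x)) := measure_iUnion_le _
    _ ≤ ∑' x : t, ν (closedBall (x : E) (r x)) :=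
        ENNReal.tsum_le_tsum fun x => hball x (r x) (hr x x.2).1 (hr x x.2).2
    _ ≤ ν S + ε := hsum

end Covering

section ImageMeasure

lemma CalderonCond.calderonIntegral_ne_top {φ : ℝ → ℝ} {m : ℕ} {a : ℝ}
    (hcal : CalderonCond (m + 2) φ) (hφ : NondecPos φ) (ha : 0 < a) :
    calderonIntegral (fun t => φ (max t a)) m a ≠ ⊤ := by
  obtain ⟨t₀, ht₀, hint⟩ := hcal
  have hexp : 1 / (((m + 2 : ℕ) : ℝ) - 2) = (m : ℝ)⁻¹ := by
    push_cast
    rw [add_sub_cancel_right, one_div]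
  rw [hexp] at hint
  set g : ℝ → ℝ≥0∞ := fun t => ENNReal.ofReal ((2 * t / φ (max t a)) ^ (m : ℝ)⁻¹)
  have hcover : Ioi a ⊆ Ioc a t₀ ∪ (Ioi t₀ ∩ Ioi a) := fun t ht =>
    (le_or_gt t t₀).imp (fun h => ⟨ht, h⟩) fun h => ⟨h, ht⟩
  have hnear : ∫⁻ t in Ioc a t₀, g t < ⊤ := by
    refine (setLIntegral_mono' (g := fun _ => ENNReal.ofReal ((2 * t₀ / φ a) ^ (m : ℝ)⁻¹))
      measurableSet_Ioc fun t ht => ENNReal.ofReal_le_ofReal ?_).trans_lt ?_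
    · have hφa := hφ.2 a ha
      have hφt : φ a ≤ φ (max t a) := hφ.1 _ _ ha (le_max_right _ _)
      have ht0 : 0 < t := ha.trans ht.1
      have htt₀ := ht.2
      have hφt0 := hφa.trans_le hφt
      gcongr
    · rw [setLIntegral_const, Real.volume_Ioc]
      finiteness
  have hfar : ∫⁻ t in Ioi t₀ ∩ Ioi a, g t < ⊤ := by
    calc ∫⁻ t in Ioi t₀ ∩ Ioi a, g t ≤ ∫⁻ t in Ioi t₀ ∩ Ioi a,
          ENNReal.ofReal (2 ^ (m : ℝ)⁻¹) * ENNReal.ofReal ((t / φ t) ^ (m : ℝ)⁻¹) := by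
          refine setLIntegral_mono' (measurableSet_Ioi.inter measurableSet_Ioi) fun t ht => ?_
          have hφt := hφ.2 t (ha.trans ht.2)
          have ht0 := ht₀.trans ht.1
          rw [← ENNReal.ofReal_mul (by positivity), ← Real.mul_rpow zero_le_two (by positivity),
            ← mul_div_assoc]
          simp only [g, max_eq_left (le_of_lt ht.2 : a ≤ t), le_refl]
      _ ≤ ENNReal.ofReal (2 ^ (m : ℝ)⁻¹) *
          ∫⁻ t in Ioi t₀, ENNReal.ofReal ((t / φ t) ^ (m : ℝ)⁻¹) := by
          rw [lintegral_const_mul' _ _ ENNReal.ofReal_ne_top]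
          gcongr
          exact inter_subset_left
      _ < ⊤ := ENNReal.mul_lt_top ENNReal.ofReal_lt_top hint.lintegral_lt_top
  exact ((lintegral_mono_set hcover).trans (lintegral_union_le _ _ _)).trans_lt
    (ENNReal.add_lt_top.2 ⟨hnear, hfar⟩) |>.ne

variable {E : Type*} [NormedAddCommGroup E] [NormedSpace ℝ E] [MeasurableSpace E] [BorelSpace E]
  [FiniteDimensional ℝ E] {μ : Measure E} [μ.IsAddHaarMeasure] {φ : ℝ → ℝ} {m : ℕ} {lam : ℝ}
  {h : E → ℝ} {u : E → E} {K S : Set E}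

namespace DerivDominatedOn

lemma measure_image_le_add (hd : finrank ℝ E = m + 1) (hm : m ≠ 0) (hφ : Monotone φ)
    (hpos : ∀ t, 0 < φ t) (hlam : 0 < lam) (hI : calderonIntegral φ m (lam / 2) ≠ ⊤)
    (hh : Measurable h) (hK : MeasurableSet K) (hμK : μ K ≠ ⊤)
    (hu : DerivDominatedOn μ K u fun z => ENNReal.ofReal (h z))
    (hmass : ∫⁻ z in K ∩ {z | lam < h z}, ENNReal.ofReal (φ (h z)) ∂μ ≠ ⊤) (hS : MeasurableSet S)
    (hSK : S ⊆ interior K) (hhS : ∀ z ∈ S, h z ≤ lam) {η : ℝ≥0∞} (hη : η ≠ 0) (hη' : η ≠ ⊤) :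
    μ (u '' S) ≤ (2 ^ (m + 4) * ENNReal.ofReal lam) ^ (m + 1) * μ S +
      (2 ^ (m + 3) * (1 + 4 * calderonIntegral φ m (lam / 2))) ^ (m + 1) * (η * μ S) := by
  set A := (2 ^ (m + 4) * ENNReal.ofReal lam) ^ (m + 1)
  set C := (2 ^ (m + 3) * (1 + 4 * calderonIntegral φ m (lam / 2))) ^ (m + 1)
  set κ := μ.withDensity ({z | lam < h z}.indicator fun z => ENNReal.ofReal (φ (h z)))
  have hκ : ∀ s, MeasurableSet s → κ s = ∫⁻ z in s ∩ {z | lam < h z}, ENNReal.ofReal (φ (h z)) ∂μ :=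
    fun s hs => by
      rw [withDensity_apply _ hs, setLIntegral_indicator (measurableSet_lt measurable_const hh),
        inter_comm]
  set ν := A • μ + C • (κ + η • μ)
  have hν : ∀ s, ν s = A * μ s + C * (κ s + η * μ s) := fun s => rfl
  have hνfin : IsFiniteMeasure (ν.restrict K) := by
    refine isFiniteMeasure_restrict.2 ?_
    rw [← hκ K hK] at hmass
    rw [hν]
    finiteness
  have hball : ∀ x r, 0 < r → closedBall x r ⊆ K →
      μ (u '' closedBall x r) ≤ ν.restrict K (closedBall x r) := fun x r hr hsub => by
    have hr0 := measure_closedBall_pos μ x hr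
    have hκfin : κ (closedBall x r) ≠ ⊤ := by
      rw [← hκ K hK] at hmass
      exact ((measure_mono hsub).trans_lt hmass.lt_top).ne
    rw [Measure.restrict_eq_self ν hsub, hν]
    exact (hu.mono hsub).measure_image_closedBall_le hd hm hφ hpos hlam hr hh
      (le_add_right (hκ _ measurableSet_closedBall).ge)
      (add_ne_zero.2 (Or.inr (mul_ne_zero hη hr0.ne')))
      (ENNReal.add_ne_top.2 ⟨hκfin, ENNReal.mul_ne_top hη' measure_closedBall_lt_top.ne⟩)
  have hκS : κ S = 0 := by
    have hdisj : S ∩ {z | lam < h z} = ∅ :=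
      (disjoint_left.2 fun z hz hlt => (hhS z hz).not_gt hlt).inter_eq
    rw [hκ S hS, hdisj, Measure.restrict_empty, lintegral_zero_measure]
  refine (measure_image_le_of_measure_image_closedBall_le hSK hball).trans_eq ?_
  rw [Measure.restrict_eq_self ν (hSK.trans interior_subset), hν, hκS, zero_add]

lemma measure_image_le_of_forall_le (hd : finrank ℝ E = m + 1) (hm : m ≠ 0) (hφ : NondecPos φ)
    (hcal : CalderonCond (m + 2) φ) (hlam : 0 < lam) (hh : Measurable h) (hK : MeasurableSet K)
    (hμK : μ K ≠ ⊤) (hu : DerivDominatedOn μ K u fun z => ENNReal.ofReal (h z))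
    (hmass : ∫⁻ z in K, ENNReal.ofReal (φ (h z)) ∂μ ≠ ⊤) (hS : MeasurableSet S)
    (hSK : S ⊆ interior K) (hhS : ∀ z ∈ S, h z ≤ lam) :
    μ (u '' S) ≤ (2 ^ (m + 4) * ENNReal.ofReal lam) ^ (m + 1) * μ S := by
  have hlam2 := half_pos hlam
  have hmax : ∀ t, 0 < max t (lam / 2) := fun t => lt_max_of_lt_right hlam2
  have hψ : Monotone fun t => φ (max t (lam / 2)) := fun s t hst =>
    hφ.1 _ _ (hmax s) (max_le_max_right _ hst)
  have hI := hcal.calderonIntegral_ne_top hφ hlam2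
  set I := calderonIntegral (fun t => φ (max t (lam / 2))) m (lam / 2)
  have hψmass : ∫⁻ z in K ∩ {z | lam < h z}, ENNReal.ofReal (φ (max (h z) (lam / 2))) ∂μ ≠ ⊤ := by
    refine ((setLIntegral_mono' (hK.inter (measurableSet_lt measurable_const hh))
      fun z hz => ?_).trans (lintegral_mono_set inter_subset_left)).trans_lt hmass.lt_top |>.ne
    rw [max_eq_left ((half_le_self hlam.le).trans (le_of_lt hz.2))]
  have hμS : μ S ≠ ⊤ := ((measure_mono (hSK.trans interior_subset)).trans_lt hμK.lt_top).ne
  set C := (2 ^ (m + 3) * (1 + 4 * I)) ^ (m + 1)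
  have hC : C ≠ ⊤ := by finiteness
  have hlim : Tendsto (fun η : ℝ≥0∞ => (2 ^ (m + 4) * ENNReal.ofReal lam) ^ (m + 1) * μ S +
      C * (η * μ S)) (𝓝[>] 0)
      (𝓝 ((2 ^ (m + 4) * ENNReal.ofReal lam) ^ (m + 1) * μ S + C * (0 * μ S))) :=
    ((ENNReal.Tendsto.const_mul (ENNReal.Tendsto.mul_const (tendsto_id.mono_left nhdsWithin_le_nhds)
      (Or.inr hμS)) (Or.inr hC))).const_add _
  rw [zero_mul, mul_zero, add_zero] at hlim
  refine ge_of_tendsto hlim ?_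
  filter_upwards [self_mem_nhdsWithin,
    mem_nhdsWithin_of_mem_nhds (Iio_mem_nhds ENNReal.zero_lt_top)] with η hη hη'
  exact hu.measure_image_le_add hd hm hψ (fun t => hφ.2 _ (hmax t)) hlam hI hh hK hμK hψmass hS hSK
    hhS (mem_Ioi.1 hη).ne' (ne_of_lt hη')

end DerivDominatedOn

lemma ennreal_eq_zero_of_forall_le_mul_ofReal_pow {a b A : ℝ≥0∞} {n : ℕ} (hn : n ≠ 0) (hA : A ≠ ⊤)
    (hb : b ≠ ⊤) (h : ∀ lam : ℝ, 0 < lam → a ≤ (A * ENNReal.ofReal lam) ^ n * b) : a = 0 := by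
  have hlim : Tendsto (fun lam : ℝ => (A * ENNReal.ofReal lam) ^ n * b) (𝓝[>] 0)
      (𝓝 ((A * ENNReal.ofReal 0) ^ n * b)) :=
    ENNReal.Tendsto.mul_const (((ENNReal.continuous_pow n).tendsto _).comp
      (ENNReal.Tendsto.const_mul ENNReal.continuous_ofReal.continuousWithinAt (Or.inr hA)))
      (Or.inr hb)
  rw [ENNReal.ofReal_zero, mul_zero, zero_pow hn, zero_mul] at hlim
  exact le_antisymm (ge_of_tendsto hlim (eventually_mem_nhdsWithin.mono h)) zero_le

/- Sum over the dyadic level sets `2ⁱ < h ≤ 2ⁱ⁺¹`. -/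
lemma measure_image_le_lintegral_pow_of_forall_le {X Y : Type*} [MeasurableSpace X]
    [MeasurableSpace Y] {μ : Measure X} {ν : Measure Y} {u : X → Y} {h : X → ℝ} {S : Set X} {n : ℕ}
    {A : ℝ≥0∞} (hn : n ≠ 0) (hA : A ≠ ⊤) (hh : Measurable h) (hS : MeasurableSet S)
    (hμS : μ S ≠ ⊤)
    (hlevel : ∀ lam > 0, ∀ T ⊆ S, MeasurableSet T → (∀ z ∈ T, h z ≤ lam) →
      ν (u '' T) ≤ (A * ENNReal.ofReal lam) ^ n * μ T) :
    ν (u '' S) ≤ (2 * A) ^ n * ∫⁻ z in S, ENNReal.ofReal (h z) ^ n ∂μ := by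
  set Z := S ∩ {z | h z ≤ 0}
  set T : ℤ → Set X := fun i => S ∩ h ⁻¹' Ioc ((2 : ℝ) ^ i) (2 ^ (i + 1))
  have hTm : ∀ i, MeasurableSet (T i) := fun i => hS.inter (hh measurableSet_Ioc)
  have hdisj : Pairwise (Function.onFun Disjoint T) := fun i j hij =>
    (((zpow_right_mono₀ one_le_two).pairwise_disjoint_on_Ioc_succ hij).preimage h).mono
      inter_subset_right inter_subset_right
  have hcov : S ⊆ Z ∪ ⋃ i, T i := fun z hz => (le_or_gt (h z) 0).imp (fun h0 => ⟨hz, h0⟩) fun h0 =>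
    let ⟨i, hi⟩ := exists_mem_Ioc_zpow h0 one_lt_two
    mem_iUnion.2 ⟨i, hz, hi⟩
  have hZ : ν (u '' Z) = 0 := by
    refine ennreal_eq_zero_of_forall_le_mul_ofReal_pow hn hA hμS fun lam hlam => ?_
    refine (hlevel lam hlam Z inter_subset_left (hS.inter (measurableSet_le hh measurable_const))
      fun z hz => le_trans hz.2 hlam.le).trans ?_
    gcongr
    exact inter_subset_left
  have hTi : ∀ i, ν (u '' T i) ≤
      (2 * A) ^ n * ∫⁻ z in T i, ENNReal.ofReal (h z) ^ n ∂μ := fun i => by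
    have hlow : ENNReal.ofReal (2 ^ i) ^ n * μ (T i) ≤
        ∫⁻ z in T i, ENNReal.ofReal (h z) ^ n ∂μ := by
      rw [← setLIntegral_const]
      refine setLIntegral_mono' (hTm i) fun z hz => ?_
      gcongr
      exact hz.2.1.le
    grw [hlevel _ (by positivity) (T i) inter_subset_left (hTm i) fun z hz => hz.2.2, ← hlow]
    rw [zpow_add_one₀ two_ne_zero, ENNReal.ofReal_mul (by positivity), ENNReal.ofReal_ofNat]
    exact le_of_eq (by ring)
  calc ν (u '' S) ≤ ν (u '' Z) + ∑' i, ν (u '' T i) := by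
        refine (measure_mono (image_mono hcov)).trans ?_
        rw [image_union, image_iUnion]
        exact (measure_union_le _ _).trans (add_le_add_right (measure_iUnion_le _) _)
    _ ≤ ∑' i, (2 * A) ^ n * ∫⁻ z in T i, ENNReal.ofReal (h z) ^ n ∂μ := by
        rw [hZ, zero_add]
        exact ENNReal.tsum_le_tsum hTi
    _ ≤ (2 * A) ^ n * ∫⁻ z in S, ENNReal.ofReal (h z) ^ n ∂μ := by
        rw [ENNReal.tsum_mul_left, ← lintegral_iUnion hTm hdisj]
        gcongr
        exact iUnion_subset fun i => inter_subset_left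

lemma DerivDominatedOn.measure_image_le_lintegral_pow (hd : finrank ℝ E = m + 1) (hm : m ≠ 0)
    (hφ : NondecPos φ) (hcal : CalderonCond (m + 2) φ) (hh : Measurable h) (hK : MeasurableSet K)
    (hμK : μ K ≠ ⊤) (hu : DerivDominatedOn μ K u fun z => ENNReal.ofReal (h z))
    (hmass : ∫⁻ z in K, ENNReal.ofReal (φ (h z)) ∂μ ≠ ⊤) (hS : MeasurableSet S)
    (hSK : S ⊆ interior K) :
    μ (u '' S) ≤ (2 ^ (m + 5)) ^ (m + 1) * ∫⁻ z in S, ENNReal.ofReal (h z) ^ (m + 1) ∂μ := by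
  rw [pow_succ' 2 (m + 4)]
  exact measure_image_le_lintegral_pow_of_forall_le m.succ_ne_zero (by finiteness) hh hS
    ((measure_mono (hSK.trans interior_subset)).trans_lt hμK.lt_top).ne
    fun lam hlam T hTS hT hhT => hu.measure_image_le_of_forall_le hd hm hφ hcal hlam hh hK hμK hmass
      hT (hTS.trans hSK) hhT

end ImageMeasure

section LoomisWhitney

variable {k : ℕ}

@[fun_prop]
lemma continuous_removeNth (i : Fin (k + 1)) :
    Continuous fun x : Fin (k + 1) → ℝ => i.removeNth x :=
  continuous_pi fun _ => continuous_apply _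

@[fun_prop]
lemma measurable_insertNth (i : Fin (k + 1)) :
    Measurable fun q : ℝ × (Fin k → ℝ) => (i.insertNth q.1 q.2 : Fin (k + 1) → ℝ) :=
  (continuous_fst.finInsertNth i continuous_snd).measurable

lemma isOpen_image_removeNth (i : Fin (k + 1)) {U : Set (Fin (k + 1) → ℝ)} (hU : IsOpen U) :
    IsOpen ((fun x : Fin (k + 1) → ℝ => i.removeNth x) '' U) := by
  have himage : (fun x : Fin (k + 1) → ℝ => i.removeNth x) '' U =
      ⋃ t : ℝ, (fun z : Fin k → ℝ => (i.insertNth t z : Fin (k + 1) → ℝ)) ⁻¹' U := by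
    ext z
    simp only [mem_image, mem_iUnion, mem_preimage]
    refine ⟨?_, fun ⟨t, ht⟩ => ⟨_, ht, by simp⟩⟩
    rintro ⟨x, hx, rfl⟩
    exact ⟨x i, by simpa using hx⟩
  rw [himage]
  exact isOpen_iUnion fun t => hU.preimage (continuous_const.finInsertNth i continuous_id)

lemma lintegral_eq_lintegral_insertNth (i : Fin (k + 1)) {g : (Fin (k + 1) → ℝ) → ℝ≥0∞}
    (hg : Measurable g) :
    ∫⁻ x, g x = ∫⁻ t : ℝ, ∫⁻ z : Fin k → ℝ, g (i.insertNth t z) := by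
  have e := volume_preserving_piFinSuccAbove (fun _ : Fin (k + 1) => ℝ) i
  rw [← e.symm.lintegral_comp hg, Measure.volume_eq_prod,
    lintegral_prod _ (by exact (hg.comp (MeasurableEquiv.measurable _)).aemeasurable)]
  rfl

lemma lintegral_indicator_removeNth_mul_indicator_Icc (i : Fin (k + 1)) {W : Set (Fin k → ℝ)}
    (hW : MeasurableSet W) :
    ∫⁻ x : Fin (k + 1) → ℝ, W.indicator (1 : (Fin k → ℝ) → ℝ≥0∞) (i.removeNth x) *
      (Icc (0 : ℝ) 1).indicator 1 (x i) = volume W := by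
  have hη : Measurable ((Icc (0 : ℝ) 1).indicator (1 : ℝ → ℝ≥0∞)) :=
    measurable_one.indicator measurableSet_Icc
  have hW1 : Measurable (W.indicator (1 : (Fin k → ℝ) → ℝ≥0∞)) := measurable_one.indicator hW
  rw [lintegral_eq_lintegral_insertNth i (by
    exact (hW1.comp (continuous_removeNth i).measurable).mul (hη.comp (measurable_pi_apply i)))]
  simp only [Fin.removeNth_insertNth, Fin.insertNth_apply_same, lintegral_mul_const _ hW1,
    lintegral_indicator_one hW, lintegral_const_mul _ hη, lintegral_indicator_one measurableSet_Icc]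
  simp

/- Apply the Gagliardo–Nirenberg–Loomis–Whitney inequality to `∑ᵢ 1_{Wᵢ}(xˆⁱ) 1_{[0,1]}(xᵢ)`, where
`Wᵢ` is the projection of `U`: its integral along any line through `U` is at least `1`. -/
lemma volume_le_sum_volume_image_removeNth_rpow (hk : k ≠ 0) {U : Set (Fin (k + 1) → ℝ)}
    (hU : IsOpen U) :
    volume U ≤ (∑ i : Fin (k + 1), volume ((fun x : Fin (k + 1) → ℝ => i.removeNth x) '' U)) ^
      (((k : ℝ) + 1) / k) := by
  have hk0 : (0 : ℝ) < k := by positivity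
  set W : Fin (k + 1) → Set (Fin k → ℝ) := fun i => (fun x : Fin (k + 1) → ℝ => i.removeNth x) '' U
  have hW : ∀ i, MeasurableSet (W i) := fun i => (isOpen_image_removeNth i hU).measurableSet
  set F : Fin (k + 1) → (Fin (k + 1) → ℝ) → ℝ≥0∞ := fun i x =>
    (W i).indicator 1 (i.removeNth x) * (Icc (0 : ℝ) 1).indicator 1 (x i)
  have hF : ∀ i, Measurable (F i) := fun i =>
    ((measurable_one.indicator (hW i)).comp (continuous_removeNth i).measurable).mul
      ((measurable_one.indicator measurableSet_Icc).comp (measurable_pi_apply i))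
  have hp : Real.HolderConjugate (Fintype.card (Fin (k + 1)) : ℝ) (((k : ℝ) + 1) / k) := by
    rw [Fintype.card_fin, Real.holderConjugate_iff]
    push_cast
    exact ⟨by linarith, by field_simp; ring⟩
  have hLW := lintegral_prod_lintegral_pow_le (fun _ : Fin (k + 1) => (volume : Measure ℝ)) hp
    (Finset.measurable_sum Finset.univ fun i _ => hF i)
  rw [← volume_pi, lintegral_finsetSum _ fun i _ => hF i,
    Finset.sum_congr rfl fun i _ => lintegral_indicator_removeNth_mul_indicator_Icc i (hW i)] at hLW
  refine le_trans ?_ hLW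
  rw [← lintegral_indicator_one hU.measurableSet]
  refine lintegral_mono (indicator_le fun x hx => ?_)
  refine Finset.one_le_prod'' fun i => ENNReal.one_le_rpow ?_ (by simpa using hk.bot_lt)
  calc (1 : ℝ≥0∞) = ∫⁻ t : ℝ, (Icc (0 : ℝ) 1).indicator 1 t := by
        rw [lintegral_indicator_one measurableSet_Icc]; simp
    _ = ∫⁻ t : ℝ, F i (Function.update x i t) := by
        simp only [F, Fin.removeNth_update, Function.update_self,
          indicator_of_mem (show i.removeNth x ∈ W i from ⟨x, hx, rfl⟩), Pi.one_apply, one_mul]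
    _ ≤ ∫⁻ t : ℝ, ∑ l, F l (Function.update x i t) := lintegral_mono fun t =>
        Finset.single_le_sum (f := fun l => F l (Function.update x i t)) (fun _ _ => zero_le)
          (Finset.mem_univ i)

end LoomisWhitney

section Slices

variable {k : ℕ}

/-- The linear isometry of `ℝᵏ` onto the hyperplane `{xᵢ = 0}` of `ℝᵏ⁺¹`. -/
def insertZero (i : Fin (k + 1)) : (Fin k → ℝ) →ₗᵢ[ℝ] (Fin (k + 1) → ℝ) where
  toFun z := i.insertNth (0 : ℝ) z
  map_add' x y := by
    ext j
    refine Fin.succAboveCases i ?_ (fun j => ?_) j <;> simp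
  map_smul' c x := by
    ext j
    refine Fin.succAboveCases i ?_ (fun j => ?_) j <;> simp
  norm_map' z := by
    have := Fin.dist_insertNth_insertNth (α := fun _ => ℝ) i 0 0 z 0
    simpa [dist_eq_norm] using this

/-- The projection of `ℝᵏ⁺¹` onto `ℝᵏ` that forgets the `i`-th coordinate. -/
def removeCoord (i : Fin (k + 1)) : (Fin (k + 1) → ℝ) →L[ℝ] (Fin k → ℝ) :=
  ContinuousLinearMap.pi fun j => ContinuousLinearMap.proj (i.succAbove j)

lemma norm_removeCoord_le_one (i : Fin (k + 1)) : ‖removeCoord i‖ ≤ 1 :=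
  ContinuousLinearMap.opNorm_le_bound _ zero_le_one fun x => by
    rw [one_mul, pi_norm_le_iff_of_nonneg (norm_nonneg _)]
    exact fun j => norm_le_pi_norm x _

lemma insertZero_add_insertNth (i : Fin (k + 1)) (s : ℝ) (z : Fin k → ℝ) :
    insertZero i z + i.insertNth s 0 = (i.insertNth s z : Fin (k + 1) → ℝ) := by
  ext j
  refine Fin.succAboveCases i ?_ (fun j => ?_) j <;> simp [insertZero]

lemma insertNth_mem_closedBall (i : Fin (k + 1)) (x₀ : Fin (k + 1) → ℝ) (s R : ℝ) (z : Fin k → ℝ) :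
    (i.insertNth s z : Fin (k + 1) → ℝ) ∈ closedBall x₀ R ↔
      s ∈ closedBall (x₀ i) R ∧ z ∈ closedBall (i.removeNth x₀ : Fin k → ℝ) R := by
  have := Fin.dist_insertNth_insertNth (α := fun _ => ℝ) i s (x₀ i) z (i.removeNth x₀)
  rw [Fin.insertNth_self_removeNth] at this
  rw [mem_closedBall, this, max_le_iff, mem_closedBall, mem_closedBall]

lemma enorm_fderiv_le_add_derivError {E F : Type*} [NormedAddCommGroup E] [NormedSpace ℝ E]
    [NormedAddCommGroup F] [NormedSpace ℝ F] {K : Set E} {G : E → E →L[ℝ] F} {w : E → F} {z : E}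
    (hz : z ∈ K) : ‖fderiv ℝ w z‖ₑ ≤ ‖G z‖ₑ + derivError K G w z := by
  rw [derivError, indicator_of_mem hz]
  simpa only [add_sub_cancel] using enorm_add_le (G z) (fderiv ℝ w z - G z)

lemma enorm_fderiv_comp_isometry_le {E₁ E F F₁ : Type*} [NormedAddCommGroup E₁] [NormedSpace ℝ E₁]
    [NormedAddCommGroup E] [NormedSpace ℝ E] [NormedAddCommGroup F] [NormedSpace ℝ F]
    [NormedAddCommGroup F₁] [NormedSpace ℝ F₁] {w : E → F} (hw : Differentiable ℝ w)
    {P : F →L[ℝ] F₁} (hP : ‖P‖ ≤ 1) (A : E₁ →ₗᵢ[ℝ] E) (c : E) (z : E₁) :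
    ‖fderiv ℝ (fun z => P (w (A z + c))) z‖ₑ ≤ ‖fderiv ℝ w (A z + c)‖ₑ := by
  have hA : HasFDerivAt (fun z => A z + c) A.toContinuousLinearMap z :=
    A.toContinuousLinearMap.hasFDerivAt.add_const c
  have hPw := P.hasFDerivAt.comp z ((hw (A z + c)).hasFDerivAt.comp z hA)
  rw [show fderiv ℝ (fun z => P (w (A z + c))) z = _ from hPw.fderiv, enorm_le_iff_norm_le]
  refine (ContinuousLinearMap.opNorm_comp_le _ _).trans ?_
  grw [hP, one_mul, ContinuousLinearMap.opNorm_comp_le, A.norm_toContinuousLinearMap_le, mul_one]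

variable {K : Set (Fin (k + 1) → ℝ)} {f : (Fin (k + 1) → ℝ) → (Fin (k + 1) → ℝ)}
  {G : (Fin (k + 1) → ℝ) → (Fin (k + 1) → ℝ) →L[ℝ] (Fin (k + 1) → ℝ)}
  {v : ℕ → (Fin (k + 1) → ℝ) → (Fin (k + 1) → ℝ)}

lemma FastC1Approx.ae_derivDominatedOn_slice (hK : MeasurableSet K)
    (hf : FastC1Approx volume K f G v) (i : Fin (k + 1)) :
    ∀ᵐ s : ℝ, ∀ l : Fin (k + 1), DerivDominatedOn volume
      ((fun z : Fin k → ℝ => (i.insertNth s z : Fin (k + 1) → ℝ)) ⁻¹' K)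
      (fun z : Fin k → ℝ => (l.removeNth (f (i.insertNth s z)) : Fin k → ℝ))
      fun z => ‖G (i.insertNth s z)‖ₑ := by
  have herr := hf.measurable_derivError hK
  have hsum : ∑' j, ∫⁻ s : ℝ, ∫⁻ z : Fin k → ℝ, derivError K G (v j) (i.insertNth s z) ≠ ⊤ := by
    refine ne_top_of_le_ne_top (b := ∑' j : ℕ, 4⁻¹ ^ j) ?_ (ENNReal.tsum_le_tsum fun j => ?_)
    · exact (ENNReal.tsum_geometric 4⁻¹).trans_ne <| ENNReal.inv_ne_top.2 <|
        (tsub_pos_of_lt (ENNReal.inv_lt_one.2 (by norm_num))).ne'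
    · rw [← lintegral_eq_lintegral_insertNth i (herr j)]
      exact hf.lintegral_le j
  have hmeas : ∀ j, Measurable fun s : ℝ =>
      ∫⁻ z : Fin k → ℝ, derivError K G (v j) (i.insertNth s z) := fun j =>
    ((herr j).comp (measurable_insertNth i)).lintegral_prod_right'
  rw [← lintegral_tsum fun j => (hmeas j).aemeasurable] at hsum
  filter_upwards [ae_lt_top (Measurable.tsum fun j => hmeas j) hsum] with s hs l
  have hins : Continuous fun z : Fin k → ℝ => (i.insertNth s z : Fin (k + 1) → ℝ) :=
    continuous_const.finInsertNth i continuous_id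
  refine ⟨(continuous_removeNth l).comp_continuousOn
    (hf.continuousOn.comp hins.continuousOn fun z hz => hz),
    fun j z => removeCoord l (v j (insertZero i z + i.insertNth s 0)),
    fun j z => derivError K G (v j) (i.insertNth s z), fun j => ?_, fun y hy => ?_,
    fun j z hz => ?_, ?_⟩
  · have := hf.contDiff j
    fun_prop
  · simp only [insertZero_add_insertNth]
    exact ((continuous_removeNth l).tendsto _).comp (hf.tendsto _ hy)
  · refine (enorm_fderiv_comp_isometry_le ((hf.contDiff j).differentiable one_ne_zero)
      (norm_removeCoord_le_one l) (insertZero i) (i.insertNth s 0) z).trans ?_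
    simp only [insertZero_add_insertNth]
    exact enorm_fderiv_le_add_derivError hz
  · exact tendsto_of_tendsto_of_tendsto_of_le_of_le tendsto_const_nhds
      (ENNReal.tendsto_atTop_zero_of_tsum_ne_top hs.ne) (fun _ => zero_le)
      fun j => setLIntegral_le_lintegral _ _

end Slices

section CubeFaces

variable {k : ℕ} {x₀ : Fin (k + 1) → ℝ} {r R : ℝ}

/-- The integral of `g` over the boundary of the cube `closedBall x₀ r` of `ℝᵏ⁺¹` (sup metric),
face by face; the faces are indexed by a coordinate and a sign. -/
noncomputable def faceIntegral (g : (Fin (k + 1) → ℝ) → ℝ≥0∞) (x₀ : Fin (k + 1) → ℝ) (r : ℝ) :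
    ℝ≥0∞ :=
  ∑ i : Fin (k + 1), ∑ σ : ℤˣ, ∫⁻ z in closedBall (i.removeNth x₀ : Fin k → ℝ) r,
    g (i.insertNth (x₀ i + (σ : ℤ) * r) z)

lemma abs_units_int_cast_mul (σ : ℤˣ) (r : ℝ) : |((σ : ℤ) : ℝ) * r| = |r| := by
  rcases Int.units_eq_one_or σ with rfl | rfl <;> simp

lemma dist_insertNth_face (hr : 0 ≤ r) (i : Fin (k + 1)) (σ : ℤˣ) {z : Fin k → ℝ}
    (hz : z ∈ closedBall (i.removeNth x₀) r) :
    dist (i.insertNth (x₀ i + (σ : ℤ) * r) z : Fin (k + 1) → ℝ) x₀ = r := by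
  have hd : dist (x₀ i + (σ : ℤ) * r) (x₀ i) = r := by
    rw [Real.dist_eq, add_sub_cancel_left, abs_units_int_cast_mul, abs_of_nonneg hr]
  have := Fin.dist_insertNth_insertNth (α := fun _ => ℝ) i (x₀ i + (σ : ℤ) * r) (x₀ i) z
    (i.removeNth x₀)
  rwa [Fin.insertNth_self_removeNth, hd, max_eq_left hz] at this

lemma faceIntegral_comp_dist_mul (hr : 0 ≤ r) (w : ℝ → ℝ≥0∞) (hw : w r ≠ ⊤)
    (g : (Fin (k + 1) → ℝ) → ℝ≥0∞) :
    faceIntegral (fun x => w (dist x x₀) * g x) x₀ r = w r * faceIntegral g x₀ r := by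
  simp only [faceIntegral, Finset.mul_sum]
  refine Finset.sum_congr rfl fun i _ => Finset.sum_congr rfl fun σ _ => ?_
  rw [← lintegral_const_mul' _ _ hw]
  exact setLIntegral_congr_fun measurableSet_closedBall fun z hz => by
    simp only [dist_insertNth_face hr i σ hz]

lemma measurePreserving_const_add_units_int_mul (a : ℝ) (σ : ℤˣ) :
    MeasurePreserving fun r : ℝ => a + (σ : ℤ) * r := by
  rcases Int.units_eq_one_or σ with rfl | rfl
  · simpa using measurePreserving_add_left volume a
  · simpa [← sub_eq_add_neg] using volume.measurePreserving_sub_left a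

lemma measurable_lintegral_face {g : (Fin (k + 1) → ℝ) → ℝ≥0∞} (hg : Measurable g)
    (i : Fin (k + 1)) (σ : ℤˣ) :
    Measurable fun r => ∫⁻ z in closedBall (i.removeNth x₀ : Fin k → ℝ) r,
      g (i.insertNth (x₀ i + (σ : ℤ) * r) z) := by
  simp only [← lintegral_indicator measurableSet_closedBall]
  refine Measurable.lintegral_prod_right'
    (f := {q : ℝ × (Fin k → ℝ) | dist q.2 (i.removeNth x₀) ≤ q.1}.indicator
      fun q => g (i.insertNth (x₀ i + (σ : ℤ) * q.1) q.2)) ?_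
  refine Measurable.indicator ?_ (measurableSet_le (by fun_prop) measurable_fst)
  exact hg.comp ((measurable_insertNth i).comp
    (((measurable_fst.const_mul _).const_add _).prodMk measurable_snd))

lemma setLIntegral_lintegral_face_le {g : (Fin (k + 1) → ℝ) → ℝ≥0∞} (hg : Measurable g)
    {I : Set ℝ} (hI : MeasurableSet I) (hI0 : I ⊆ Ici 0) (i : Fin (k + 1)) (σ : ℤˣ) :
    ∫⁻ r in I, ∫⁻ z in closedBall (i.removeNth x₀ : Fin k → ℝ) r,
      g (i.insertNth (x₀ i + (σ : ℤ) * r) z) ≤ ∫⁻ x in {x | dist x x₀ ∈ I}, g x := by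
  have hT : MeasurableSet {x : Fin (k + 1) → ℝ | dist x x₀ ∈ I} :=
    (continuous_id.dist continuous_const).measurable hI
  rw [← lintegral_indicator hT, lintegral_eq_lintegral_insertNth i (hg.indicator hT),
    ← (measurePreserving_const_add_units_int_mul (x₀ i) σ).lintegral_comp (by
      exact ((hg.indicator hT).comp (measurable_insertNth i)).lintegral_prod_right')]
  refine (setLIntegral_mono' hI fun r hr => ?_).trans (setLIntegral_le_lintegral _ _)
  refine (setLIntegral_mono' measurableSet_closedBall fun z hz => ?_).trans
    (setLIntegral_le_lintegral _ _)
  rw [indicator_of_mem (by simpa only [mem_ofPred_eq, dist_insertNth_face (hI0 hr) i σ hz])]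

lemma setLIntegral_faceIntegral_le {g : (Fin (k + 1) → ℝ) → ℝ≥0∞} (hg : Measurable g)
    {I : Set ℝ} (hI : MeasurableSet I) (hI0 : I ⊆ Ici 0) :
    ∫⁻ r in I, faceIntegral g x₀ r ≤
      (2 * (k + 1) : ℕ) * ∫⁻ x in {x | dist x x₀ ∈ I}, g x := by
  have hm := fun i σ => measurable_lintegral_face (x₀ := x₀) hg i σ
  simp only [faceIntegral]
  rw [lintegral_finsetSum _ fun i _ => Finset.measurable_sum _ fun σ _ => hm i σ]
  simp only [lintegral_finsetSum _ fun σ _ => hm _ σ]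
  refine (Finset.sum_le_sum fun i _ => Finset.sum_le_sum fun σ _ =>
    setLIntegral_lintegral_face_le hg hI hI0 i σ).trans_eq ?_
  simp only [Finset.sum_const, Finset.card_univ, Fintype.card_fin, nsmul_eq_mul,
    Fintype.card_units_int]
  push_cast
  ring

lemma exists_eq_insertNth_of_mem_sphere (hr : 0 < r) {x : Fin (k + 1) → ℝ}
    (hx : x ∈ sphere x₀ r) :
    ∃ (i : Fin (k + 1)) (σ : ℤˣ), ∃ z ∈ closedBall (i.removeNth x₀ : Fin k → ℝ) r,
      x = i.insertNth (x₀ i + (σ : ℤ) * r) z := by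
  obtain ⟨i, hi⟩ : ∃ i, r ≤ dist (x i) (x₀ i) := by
    by_contra! hlt
    exact ((dist_pi_lt_iff hr).2 hlt).ne hx
  have hxi : |x i - x₀ i| = r := by
    rw [← Real.dist_eq]
    exact hi.antisymm' ((dist_le_pi_dist x x₀ i).trans_eq hx)
  obtain ⟨σ, hσ⟩ : ∃ σ : ℤˣ, x i = x₀ i + (σ : ℤ) * r := by
    rcases (abs_eq hr.le).1 hxi with h | h
    · exact ⟨1, by simp [← h]⟩
    · exact ⟨-1, by simp [← sub_eq_iff_eq_add', h]⟩
  refine ⟨i, σ, i.removeNth x, ?_, ?_⟩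
  · exact (dist_pi_le_iff hr.le).2 fun j => (dist_le_pi_dist x x₀ _).trans_eq hx
  · rw [← hσ, Fin.insertNth_self_removeNth]

lemma frontier_image_ball_subset {X Y : Type*} [PseudoMetricSpace X] [ProperSpace X]
    [TopologicalSpace Y] [T2Space Y] {f : X → Y} {x₀ : X} {r : ℝ}
    (hf : ContinuousOn f (closedBall x₀ r)) (hopen : IsOpen (f '' ball x₀ r)) :
    frontier (f '' ball x₀ r) ⊆ f '' sphere x₀ r := by
  rintro y hy
  rw [hopen.frontier_eq] at hy
  have hK : IsClosed (f '' closedBall x₀ r) :=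
    ((isCompact_closedBall x₀ r).image_of_continuousOn hf).isClosed
  obtain ⟨x, hx, rfl⟩ := closure_minimal (image_mono ball_subset_closedBall) hK hy.1
  exact ⟨x, le_antisymm hx (not_lt.1 fun hlt => hy.2 ⟨x, hlt, rfl⟩), rfl⟩

lemma exists_update_mem_frontier {U : Set (Fin k → ℝ)} (hU : Bornology.IsBounded U)
    {y : Fin k → ℝ} (hy : y ∈ U) (l : Fin k) :
    ∃ t, Function.update y l t ∈ frontier U := by
  have hupd : Continuous fun t : ℝ => Function.update y l t :=
    continuous_const.update l continuous_id
  have hne : ((fun t : ℝ => Function.update y l t) ⁻¹' U) ≠ univ := fun huniv => by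
    obtain ⟨C, hC⟩ := hU.exists_norm_le
    have hmem : Function.update y l (C + 1) ∈ U := huniv.ge (mem_univ (C + 1))
    have hle := (norm_le_pi_norm _ l).trans (hC _ hmem)
    rw [Function.update_self, Real.norm_eq_abs] at hle
    linarith [le_abs_self (C + 1)]
  obtain ⟨t, ht⟩ := nonempty_frontier_iff.2 ⟨⟨y l, by simpa using hy⟩, hne⟩
  exact ⟨t, hupd.frontier_preimage_subset U ht⟩

lemma image_removeNth_image_ball_subset {f : (Fin (k + 1) → ℝ) → (Fin (k + 1) → ℝ)} (hr : 0 < r)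
    (hf : ContinuousOn f (closedBall x₀ r)) (hopen : IsOpen (f '' ball x₀ r)) (l : Fin (k + 1)) :
    (fun x : Fin (k + 1) → ℝ => (l.removeNth x : Fin k → ℝ)) '' (f '' ball x₀ r) ⊆
      ⋃ (i : Fin (k + 1)) (σ : ℤˣ),
        (fun z : Fin k → ℝ => (l.removeNth (f (i.insertNth (x₀ i + (σ : ℤ) * r) z)) : Fin k → ℝ)) ''
          closedBall (i.removeNth x₀) r := by
  rintro _ ⟨y, hy, rfl⟩
  have hbdd : Bornology.IsBounded (f '' ball x₀ r) :=
    ((isCompact_closedBall x₀ r).image_of_continuousOn hf).isBounded.subset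
      (image_mono ball_subset_closedBall)
  obtain ⟨t, ht⟩ := exists_update_mem_frontier hbdd hy l
  obtain ⟨x, hx, hfx⟩ := frontier_image_ball_subset hf hopen ht
  obtain ⟨i, σ, z, hz, rfl⟩ := exists_eq_insertNth_of_mem_sphere hr hx
  refine mem_iUnion₂.2 ⟨i, σ, z, hz, ?_⟩
  simp only [hfx, Fin.removeNth_update]

end CubeFaces

section FaceEstimate

lemma NondecPos.measurable_comp {α : Type*} [MeasurableSpace α] {φ : ℝ → ℝ} (hφ : NondecPos φ)
    {h : α → ℝ} (hh : Measurable h) (h0 : ∀ x, 0 ≤ h x) : Measurable fun x => φ (h x) := by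
  have hpos : MeasurableSet {x | 0 < h x} := measurableSet_lt measurable_const hh
  refine measurable_of_restrict_of_restrict_compl hpos ?_ ?_
  · have hmono : Monotone fun t : Ioi (0 : ℝ) => φ t := fun s t hst => hφ.1 s t s.2 hst
    exact hmono.measurable.comp ((hh.comp measurable_subtype_coe).subtype_mk (h := fun x => x.2))
  · convert measurable_const (a := φ 0) using 2 with x
    rw [domRestrict_apply, le_antisymm (not_lt.1 (mem_compl_iff _ _ |>.1 x.2)) (h0 x)]

lemma ae_setLIntegral_insertNth_ne_top {k : ℕ} (i : Fin (k + 1)) {g : (Fin (k + 1) → ℝ) → ℝ≥0∞}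
    (hg : Measurable g) {K : Set (Fin (k + 1) → ℝ)} (hK : MeasurableSet K)
    (hgK : ∫⁻ x in K, g x ≠ ⊤) :
    ∀ᵐ s : ℝ, ∫⁻ z in (fun z : Fin k → ℝ => (i.insertNth s z : Fin (k + 1) → ℝ)) ⁻¹' K,
      g (i.insertNth s z) ≠ ⊤ := by
  rw [← lintegral_indicator hK, lintegral_eq_lintegral_insertNth i (hg.indicator hK)] at hgK
  filter_upwards [ae_lt_top ((hg.indicator hK).comp (measurable_insertNth i)).lintegral_prod_right'
    hgK] with s hs
  have hins : Measurable fun z : Fin k → ℝ => (i.insertNth s z : Fin (k + 1) → ℝ) :=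
    (measurable_insertNth i).comp (measurable_const.prodMk measurable_id)
  rw [← lintegral_indicator (hins hK)]
  exact hs.ne

variable {m : ℕ} {φ : ℝ → ℝ} {x₀ : Fin (m + 2) → ℝ} {r R : ℝ}
  {f : (Fin (m + 2) → ℝ) → (Fin (m + 2) → ℝ)}
  {G : (Fin (m + 2) → ℝ) → (Fin (m + 2) → ℝ) →L[ℝ] (Fin (m + 2) → ℝ)}
  {v : ℕ → (Fin (m + 2) → ℝ) → (Fin (m + 2) → ℝ)}

lemma FastC1Approx.ae_volume_image_slice_le (hf : FastC1Approx volume (closedBall x₀ R) f G v)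
    (hm : m ≠ 0) (hφ : NondecPos φ) (hcal : CalderonCond (m + 2) φ)
    (hmass : ∫⁻ x in closedBall x₀ R, ENNReal.ofReal (φ ‖G x‖) ≠ ⊤) (i : Fin (m + 2)) :
    ∀ᵐ s : ℝ, s ∈ closedBall (x₀ i) R → ∀ l : Fin (m + 2), ∀ r < R,
      volume ((fun z : Fin (m + 1) → ℝ => (l.removeNth (f (i.insertNth s z)) : Fin (m + 1) → ℝ)) ''
        closedBall (i.removeNth x₀) r) ≤ (2 ^ (m + 5)) ^ (m + 1) *
          ∫⁻ z in closedBall (i.removeNth x₀) r, ‖G (i.insertNth s z)‖ₑ ^ (m + 1) := by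
  have hG := hf.stronglyMeasurable.norm.measurable
  filter_upwards [hf.ae_derivDominatedOn_slice measurableSet_closedBall i,
    ae_setLIntegral_insertNth_ne_top i (hφ.measurable_comp hG fun _ => norm_nonneg _).ennreal_ofReal
      measurableSet_closedBall hmass] with s hslice hsmass hs l r hr
  have hpre : (fun z : Fin (m + 1) → ℝ => (i.insertNth s z : Fin (m + 2) → ℝ)) ⁻¹' closedBall x₀ R =
      closedBall (i.removeNth x₀) R := by
    ext z
    simp only [mem_preimage, insertNth_mem_closedBall, hs, true_and]
  rw [hpre] at hslice hsmass
  simp only [← ofReal_norm] at hslice ⊢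
  exact (hslice l).measure_image_le_lintegral_pow (by simp) hm hφ hcal
    (hG.comp ((measurable_insertNth i).comp (measurable_const.prodMk measurable_id)))
    measurableSet_closedBall measure_closedBall_lt_top.ne hsmass measurableSet_closedBall
    ((closedBall_subset_ball hr).trans ball_subset_interior_closedBall)

/- By Loomis–Whitney it is enough to bound the coordinate projections of the image of the cube,
and each of these is covered by the projections of the images of the faces. -/
lemma FastC1Approx.ae_volume_image_ball_le (hf : FastC1Approx volume (closedBall x₀ R) f G v)
    (hm : m ≠ 0) (hφ : NondecPos φ) (hcal : CalderonCond (m + 2) φ)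
    (hmass : ∫⁻ x in closedBall x₀ R, ENNReal.ofReal (φ ‖G x‖) ≠ ⊤)
    (hopen : ∀ r < R, IsOpen (f '' ball x₀ r)) :
    ∀ᵐ r : ℝ, r ∈ Ioo 0 R → volume (f '' ball x₀ r) ≤
      ((m + 2 : ℕ) * (2 ^ (m + 5)) ^ (m + 1) * faceIntegral (fun x => ‖G x‖ₑ ^ (m + 1)) x₀ r) ^
        ((((m + 1 : ℕ) : ℝ) + 1) / (m + 1 : ℕ)) := by
  have hface := ae_all_iff.2 fun i => ae_all_iff.2 fun σ : ℤˣ =>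
    (measurePreserving_const_add_units_int_mul (x₀ i) σ).quasiMeasurePreserving.ae
      (hf.ae_volume_image_slice_le hm hφ hcal hmass i)
  filter_upwards [hface] with r hr hrR
  have hproj : ∀ l : Fin (m + 2),
      volume ((fun x : Fin (m + 2) → ℝ => (l.removeNth x : Fin (m + 1) → ℝ)) '' (f '' ball x₀ r)) ≤
        (2 ^ (m + 5)) ^ (m + 1) * faceIntegral (fun x => ‖G x‖ₑ ^ (m + 1)) x₀ r := fun l => by
    refine (measure_mono (image_removeNth_image_ball_subset hrR.1
      (hf.continuousOn.mono (closedBall_subset_closedBall hrR.2.le)) (hopen r hrR.2) l)).trans ?_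
    simp only [faceIntegral, Finset.mul_sum]
    simp only [← tsum_fintype (L := .unconditional _)]
    refine (measure_iUnion_le _).trans (ENNReal.tsum_le_tsum fun i => ?_)
    refine (measure_iUnion_le _).trans (ENNReal.tsum_le_tsum fun σ => ?_)
    refine hr i σ ?_ l r hrR.2
    rw [mem_closedBall, Real.dist_eq, add_sub_cancel_left, abs_units_int_cast_mul,
      abs_of_pos hrR.1]
    exact hrR.2.le
  refine (volume_le_sum_volume_image_removeNth_rpow m.succ_ne_zero (hopen r hrR.2)).trans ?_
  gcongr
  refine (Finset.sum_le_sum fun l _ => hproj l).trans_eq ?_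
  rw [Finset.sum_const, Finset.card_univ, Fintype.card_fin, nsmul_eq_mul, mul_assoc]

end FaceEstimate

section DistributionFunction

variable {X : Type*} [MeasurableSpace X] {μ : Measure X}

lemma exists_nat_two_pow_mul_le_lt {a w : ℝ≥0∞} (ha : a ≠ 0) (ha' : a ≠ ⊤) (haw : a ≤ w)
    (hw : w ≠ ⊤) : ∃ j : ℕ, 2 ^ j * a ≤ w ∧ w < 2 ^ (j + 1) * a := by
  lift w to ℝ≥0 using hw
  lift a to ℝ≥0 using ha'
  have ha0 : 0 < a := pos_iff_ne_zero.2 (by exact_mod_cast ha)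
  obtain ⟨j, hj, hj'⟩ := exists_nat_pow_near ((one_le_div ha0).2 (by exact_mod_cast haw))
    (one_lt_two (α := ℝ≥0))
  exact ⟨j, by exact_mod_cast (le_div_iff₀ ha0).1 hj, by exact_mod_cast (div_lt_iff₀ ha0).1 hj'⟩

lemma setLIntegral_rpow_neg_le_of_measure_lt_le {W : X → ℝ≥0∞}
    (hμ : ∀ t, μ {x | W x < t} ≤ t) {q : ℝ} (hq : 1 < q) {a : ℝ≥0∞} (ha : a ≠ 0) (ha' : a ≠ ⊤)
    {S : Set X} (hS : ∀ x ∈ S, a ≤ W x ∧ W x ≠ ⊤) :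
    ∫⁻ x in S, W x ^ (-q) ∂μ ≤ 2 * (1 - 2 ^ (1 - q))⁻¹ * a ^ (1 - q) := by
  set T : ℕ → Set X := fun j => {x | 2 ^ j * a ≤ W x ∧ W x < 2 ^ (j + 1) * a}
  have hcov : S ⊆ ⋃ j, T j := fun x hx =>
    mem_iUnion.2 (exists_nat_two_pow_mul_le_lt ha ha' (hS x hx).1 (hS x hx).2)
  have hT : ∀ j, ∫⁻ x in T j, W x ^ (-q) ∂μ ≤ 2 * a ^ (1 - q) * (2 ^ (1 - q)) ^ j := fun j => by
    have hpow : ((2 : ℝ≥0∞) ^ j * a) ^ (-q) * (2 ^ j * a) = (2 ^ j * a) ^ (1 - q) := by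
      rw [sub_eq_neg_add, ENNReal.rpow_add _ _ (by simp [ha]) (by finiteness), ENNReal.rpow_one]
    calc ∫⁻ x in T j, W x ^ (-q) ∂μ
        ≤ ∫⁻ _ in T j, (2 ^ j * a) ^ (-q) ∂μ := setLIntegral_mono measurable_const fun x hx =>
          by simpa only [ENNReal.rpow_neg] using
            ENNReal.inv_le_inv.2 (ENNReal.rpow_le_rpow hx.1 (by linarith))
      _ ≤ (2 ^ j * a) ^ (-q) * (2 ^ (j + 1) * a) := by
          rw [setLIntegral_const]
          gcongr
          exact (measure_mono fun x hx => hx.2).trans (hμ _)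
      _ = 2 * (2 ^ j * a) ^ (1 - q) := by
          rw [← hpow]
          ring
      _ = 2 * a ^ (1 - q) * (2 ^ (1 - q)) ^ j := by
          rw [ENNReal.mul_rpow_of_ne_top (by finiteness) ha', ← ENNReal.rpow_natCast_mul,
            ← ENNReal.rpow_mul_natCast, mul_comm (j : ℝ)]
          ring
  calc ∫⁻ x in S, W x ^ (-q) ∂μ ≤ ∑' j, ∫⁻ x in T j, W x ^ (-q) ∂μ :=
        (lintegral_mono_set hcov).trans (lintegral_iUnion_le _ _)
    _ ≤ ∑' j, 2 * a ^ (1 - q) * (2 ^ (1 - q)) ^ j := ENNReal.tsum_le_tsum hT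
    _ = 2 * (1 - 2 ^ (1 - q))⁻¹ * a ^ (1 - q) := by
        rw [ENNReal.tsum_mul_left, ENNReal.tsum_geometric]
        ring

lemma measure_setOf_comp_dist_lt_le [PseudoMetricSpace X] {x₀ : X} {V : ℝ → ℝ≥0∞} (hV : Monotone V)
    (hball : ∀ r, μ (closedBall x₀ r) ≤ V r) (t : ℝ≥0∞) : μ {x | V (dist x x₀) < t} ≤ t := by
  set I : Set ℝ := {r | V r < t}
  rcases isEmpty_or_nonempty I with hI | hI
  · have hempty : {x | V (dist x x₀) < t} = ∅ :=
      eq_empty_of_forall_notMem fun x hx => hI.false ⟨dist x x₀, hx⟩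
    simp only [hempty, measure_empty, zero_le]
  have hlower : IsLowerSet I := fun r s hsr hr => (hV hsr).trans_lt hr
  have := hlower.ordConnected
  obtain ⟨u, hu, hutop⟩ := exists_seq_monotone_tendsto_atTop_atTop I
  have hcov : {x | V (dist x x₀) < t} ⊆ ⋃ n, closedBall x₀ (u n) := fun x hx => by
    obtain ⟨n, hn⟩ := (hutop.eventually_ge_atTop (⟨dist x x₀, hx⟩ : I)).exists
    exact mem_iUnion.2 ⟨n, hn⟩
  have hmono : Monotone fun n => closedBall x₀ (u n : ℝ) := fun n n' h =>
    closedBall_subset_closedBall (hu h)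
  refine (measure_mono hcov).trans ?_
  rw [hmono.measure_iUnion]
  exact iSup_le fun n => (hball _).trans (u n).2.le

end DistributionFunction

section AnnulusEstimate

/-- The volume `μ(f(B(x₀, r)))` of the image of the ball of radius `r`, as a function of `r`. -/
noncomputable def imageBallVolume {E : Type*} [PseudoMetricSpace E] [MeasurableSpace E]
    (μ : Measure E) (f : E → E) (x₀ : E) (r : ℝ) : ℝ≥0∞ :=
  μ (f '' ball x₀ r)

lemma monotone_imageBallVolume {E : Type*} [PseudoMetricSpace E] [MeasurableSpace E]
    (μ : Measure E) (f : E → E) (x₀ : E) : Monotone (imageBallVolume μ f x₀) := fun _ _ h =>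
  measure_mono (image_mono (ball_subset_ball h))

lemma imageBallVolume_ne_top {E : Type*} [PseudoMetricSpace E] [ProperSpace E] [MeasurableSpace E]
    {μ : Measure E} [IsFiniteMeasureOnCompacts μ] {f : E → E} {x₀ : E} {r R : ℝ}
    (hf : ContinuousOn f (closedBall x₀ R)) (hr : r ≤ R) : imageBallVolume μ f x₀ r ≠ ⊤ :=
  measure_ne_top_of_subset (image_mono ((ball_subset_ball hr).trans ball_subset_closedBall))
    ((isCompact_closedBall x₀ R).image_of_continuousOn hf).measure_lt_top.ne

variable {E : Type*} [NormedAddCommGroup E] [NormedSpace ℝ E] [FiniteDimensional ℝ E]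
  [MeasurableSpace E] [BorelSpace E] {μ : Measure E} [μ.IsAddHaarMeasure] {f : E → E}
  {G : E → E →L[ℝ] E} {v : ℕ → E → E} {x₀ : E} {R : ℝ}

lemma FastC1Approx.setLIntegral_abs_det_mul_imageBallVolume_rpow_neg_le [Nontrivial E]
    (hf : FastC1Approx μ (closedBall x₀ R) f G v) (hinj : InjOn f (ball x₀ R)) {q : ℝ} (hq : 1 < q)
    {a : ℝ} (haR : a ≤ R) (ha : imageBallVolume μ f x₀ a ≠ 0) :
    ∫⁻ x in {x | dist x x₀ ∈ Ioo a R},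
        ENNReal.ofReal |(G x).det| * imageBallVolume μ f x₀ (dist x x₀) ^ (-q) ∂μ ≤
      2 * (1 - 2 ^ (1 - q))⁻¹ * imageBallVolume μ f x₀ a ^ (1 - q) := by
  set V := imageBallVolume μ f x₀
  have hV : Monotone V := monotone_imageBallVolume μ f x₀
  have hJ : Measurable fun x => ENNReal.ofReal |(G x).det| :=
    (ContinuousLinearMap.continuous_det.abs.comp_stronglyMeasurable
      hf.stronglyMeasurable).measurable.ennreal_ofReal
  have hA : MeasurableSet {x | dist x x₀ ∈ Ioo a R} :=
    (continuous_id.dist continuous_const).measurable measurableSet_Ioo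
  set ν := (μ.restrict (ball x₀ R)).withDensity fun x => ENNReal.ofReal |(G x).det|
  have hball : ∀ r, ν (closedBall x₀ r) ≤ V r := fun r => by
    have hae : (closedBall x₀ r ∩ ball x₀ R : Set E) =ᵐ[μ] (ball x₀ (min r R) : Set E) := by
      rw [show ball x₀ (min r R) = ball x₀ r ∩ ball x₀ R by ext; simp, ← ball_union_sphere]
      exact (union_ae_eq_left_of_ae_eq_empty (ae_eq_empty.2 (μ.addHaar_sphere x₀ r))).inter .rfl
    rw [withDensity_apply _ measurableSet_closedBall, Measure.restrict_restrict
      measurableSet_closedBall, setLIntegral_congr hae]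
    refine (hf.lintegral_abs_det_le_measure_image measurableSet_closedBall measurableSet_ball
      ((ball_subset_ball (min_le_right _ _)).trans ball_subset_interior_closedBall)
      (hinj.mono (ball_subset_ball (min_le_right _ _)))).trans (hV (min_le_left _ _))
  have hdens : ∫⁻ x in {x | dist x x₀ ∈ Ioo a R},
      ENNReal.ofReal |(G x).det| * V (dist x x₀) ^ (-q) ∂μ =
        ∫⁻ x in {x | dist x x₀ ∈ Ioo a R}, V (dist x x₀) ^ (-q) ∂ν := by
    rw [setLIntegral_withDensity_eq_setLIntegral_mul _ hJ (by
      exact (hV.measurable.comp (measurable_id.dist measurable_const)).pow_const _) hA,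
      Measure.restrict_restrict hA, inter_eq_left.2 fun x hx => hx.2]
    rfl
  rw [hdens]
  exact setLIntegral_rpow_neg_le_of_measure_lt_le (measure_setOf_comp_dist_lt_le hV hball) hq ha
    (imageBallVolume_ne_top hf.continuousOn haR) fun x hx =>
      ⟨hV hx.1.le, imageBallVolume_ne_top hf.continuousOn hx.2.le⟩

end AnnulusEstimate

section RingEstimate

variable {m : ℕ} {φ : ℝ → ℝ} {f : (Fin (m + 2) → ℝ) → (Fin (m + 2) → ℝ)}
  {G : (Fin (m + 2) → ℝ) → (Fin (m + 2) → ℝ) →L[ℝ] (Fin (m + 2) → ℝ)}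
  {v : ℕ → (Fin (m + 2) → ℝ) → (Fin (m + 2) → ℝ)} {x₀ : Fin (m + 2) → ℝ} {a R p : ℝ}

lemma FastC1Approx.ae_one_le_mul_faceIntegral
    (hf : FastC1Approx volume (closedBall x₀ R) f G v) (hm : m ≠ 0) (hφ : NondecPos φ)
    (hcal : CalderonCond (m + 2) φ)
    (hmass : ∫⁻ x in closedBall x₀ R, ENNReal.ofReal (φ ‖G x‖) ≠ ⊤)
    (hopen : ∀ r < R, IsOpen (f '' ball x₀ r)) (ha : 0 ≤ a)
    (hVa : imageBallVolume volume f x₀ a ≠ 0) :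
    ∀ᵐ r : ℝ, r ∈ Ioo a R → 1 ≤ (m + 2 : ℕ) * (2 ^ (m + 5)) ^ (m + 1) *
      faceIntegral (fun x => imageBallVolume volume f x₀ (dist x x₀) ^
        (-((m + 1) / (m + 2) : ℝ)) * ‖G x‖ₑ ^ (m + 1)) x₀ r := by
  set V := imageBallVolume volume f x₀
  set M : ℝ≥0∞ := (m + 2 : ℕ) * (2 ^ (m + 5)) ^ (m + 1)
  set s : ℝ := (m + 1) / (m + 2)
  have hs : 0 < s := by positivity
  have hV : Monotone V := monotone_imageBallVolume volume f x₀
  filter_upwards [hf.ae_volume_image_ball_le hm hφ hcal hmass hopen] with r hr hra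
  have hV0 : V r ≠ 0 := (hVa.bot_lt.trans_le (hV hra.1.le)).ne'
  have hVt : V r ≠ ⊤ := imageBallVolume_ne_top hf.continuousOn hra.2.le
  have hle : V r ^ s ≤ M * faceIntegral (fun x => ‖G x‖ₑ ^ (m + 1)) x₀ r := by
    refine (ENNReal.rpow_le_rpow (hr ⟨ha.trans_lt hra.1, hra.2⟩) hs.le).trans_eq ?_
    rw [← ENNReal.rpow_mul]
    convert ENNReal.rpow_one _
    simp only [s]
    push_cast
    field_simp
    ring
  rw [faceIntegral_comp_dist_mul (ha.trans hra.1.le) (fun r => V r ^ (-s))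
    (by simp [ENNReal.rpow_eq_top_iff, hV0, hVt]), mul_left_comm, ENNReal.rpow_neg]
  rw [← ENNReal.div_eq_inv_mul, ENNReal.le_div_iff_mul_le (by simp [hV0, hs.le])
    (by simp [hVt, hs.le]), one_mul]
  exact hle

lemma FastC1Approx.ofReal_sub_le_setLIntegral
    (hf : FastC1Approx volume (closedBall x₀ R) f G v) (hm : m ≠ 0) (hφ : NondecPos φ)
    (hcal : CalderonCond (m + 2) φ)
    (hmass : ∫⁻ x in closedBall x₀ R, ENNReal.ofReal (φ ‖G x‖) ≠ ⊤)
    (hopen : ∀ r < R, IsOpen (f '' ball x₀ r)) (ha : 0 ≤ a)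
    (hVa : imageBallVolume volume f x₀ a ≠ 0) :
    ENNReal.ofReal (R - a) ≤ (m + 2 : ℕ) * (2 ^ (m + 5)) ^ (m + 1) * ((2 * (m + 2) : ℕ) *
      ∫⁻ x in {x | dist x x₀ ∈ Ioo a R},
        imageBallVolume volume f x₀ (dist x x₀) ^ (-((m + 1) / (m + 2) : ℝ)) *
          ‖G x‖ₑ ^ (m + 1)) := by
  set V := imageBallVolume volume f x₀
  set M : ℝ≥0∞ := (m + 2 : ℕ) * (2 ^ (m + 5)) ^ (m + 1)
  set s : ℝ := (m + 1) / (m + 2)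
  have hV : Monotone V := monotone_imageBallVolume volume f x₀
  have hmeas : Measurable fun x => V (dist x x₀) ^ (-s) * ‖G x‖ₑ ^ (m + 1) :=
    ((hV.measurable.comp (measurable_id.dist measurable_const)).pow_const _).mul
      (hf.stronglyMeasurable.enorm.pow_const _)
  calc ENNReal.ofReal (R - a) = ∫⁻ _ in Ioo a R, 1 := by simp
    _ ≤ ∫⁻ r in Ioo a R,
        M * faceIntegral (fun x => V (dist x x₀) ^ (-s) * ‖G x‖ₑ ^ (m + 1)) x₀ r :=
      lintegral_mono_ae ((ae_restrict_iff' measurableSet_Ioo).2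
        (hf.ae_one_le_mul_faceIntegral hm hφ hcal hmass hopen ha hVa))
    _ ≤ _ := by
      rw [lintegral_const_mul' _ _ (by finiteness)]
      gcongr
      exact setLIntegral_faceIntegral_le hmeas measurableSet_Ioo fun r hr => ha.trans hr.1.le

/- The right-hand side is the product to which Hölder's inequality with the exponents `p / k` and
`p / (p - k)` applies. -/
lemma rpow_neg_mul_rpow_le_of_rpow_le_mul {k d q : ℝ} {V g J κ : ℝ≥0∞} (hk : 0 < k) (hkq : k < q)
    (hg : g ^ q ≤ κ * J) :
    V ^ (-(k / d)) * g ^ k ≤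
      (J * V ^ (-(q / d))) ^ (k / q) * (κ ^ (k / (q - k))) ^ ((q - k) / q) := by
  have hq : 0 < q := hk.trans hkq
  have hgk : g ^ k ≤ (κ * J) ^ (k / q) := by
    refine Eq.trans_le ?_ (ENNReal.rpow_le_rpow hg (by positivity))
    rw [← ENNReal.rpow_mul, mul_div_cancel₀ _ hq.ne']
  have hVexp : -(q / d) * (k / q) = -(k / d) := by
    rw [neg_mul, mul_comm, div_mul_div_cancel₀ hq.ne']
  have hκexp : k / (q - k) * ((q - k) / q) = k / q := div_mul_div_cancel₀ (sub_pos.2 hkq).ne'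
  rw [ENNReal.mul_rpow_of_nonneg _ _ (by positivity), ← ENNReal.rpow_mul, hVexp,
    ← ENNReal.rpow_mul, hκexp]
  rw [ENNReal.mul_rpow_of_nonneg _ _ (by positivity)] at hgk
  exact (mul_le_mul_right hgk _).trans_eq (by ring)

lemma FastC1Approx.setLIntegral_rpow_neg_mul_enorm_pow_le
    (hf : FastC1Approx volume (closedBall x₀ R) f G v) (hinj : InjOn f (ball x₀ R))
    (hp : m + 2 < p) (haR : a ≤ R) (hVa : imageBallVolume volume f x₀ a ≠ 0)
    {κ : (Fin (m + 2) → ℝ) → ℝ≥0∞} (hκ : AEMeasurable κ (volume.restrict (closedBall x₀ R)))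
    (hle : ∀ᵐ x ∂volume.restrict (closedBall x₀ R),
      ‖G x‖ₑ ^ p ≤ κ x * ENNReal.ofReal |(G x).det|) :
    ∫⁻ x in {x | dist x x₀ ∈ Ioo a R},
        imageBallVolume volume f x₀ (dist x x₀) ^ (-((m + 1) / (m + 2) : ℝ)) *
          ‖G x‖ₑ ^ (m + 1) ≤
      (2 * (1 - 2 ^ (1 - p / (m + 2)))⁻¹ *
          imageBallVolume volume f x₀ a ^ (1 - p / (m + 2))) ^ ((m + 1) / p) *
        (∫⁻ x in closedBall x₀ R, κ x ^ ((m + 1) / (p - (m + 1)))) ^ ((p - (m + 1)) / p) := by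
  set V := imageBallVolume volume f x₀
  set A := {x | dist x x₀ ∈ Ioo a R}
  have hV : Monotone V := monotone_imageBallVolume volume f x₀
  have hp0 : 0 < p := (by positivity : (0 : ℝ) < m + 2).trans hp
  have hpk : 0 < p - (m + 1) := by linarith
  have hAK : A ⊆ closedBall x₀ R := fun x hx => hx.2.le
  have hVm : Measurable fun x => V (dist x x₀) :=
    hV.measurable.comp (measurable_id.dist measurable_const)
  have hJ : Measurable fun x => ENNReal.ofReal |(G x).det| :=
    (ContinuousLinearMap.continuous_det.abs.comp_stronglyMeasurable
      hf.stronglyMeasurable).measurable.ennreal_ofReal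
  have hpoint : ∀ᵐ x ∂volume.restrict A,
      V (dist x x₀) ^ (-((m + 1) / (m + 2) : ℝ)) * ‖G x‖ₑ ^ (m + 1) ≤
        (ENNReal.ofReal |(G x).det| * V (dist x x₀) ^ (-(p / (m + 2)))) ^ ((m + 1) / p) *
          (κ x ^ ((m + 1) / (p - (m + 1)))) ^ ((p - (m + 1)) / p) := by
    filter_upwards [ae_restrict_of_ae_restrict_of_subset hAK hle] with x hx
    have hpow : ‖G x‖ₑ ^ (m + 1) = ‖G x‖ₑ ^ ((m : ℝ) + 1) := by
      exact_mod_cast (ENNReal.rpow_natCast _ _).symm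
    rw [hpow]
    exact rpow_neg_mul_rpow_le_of_rpow_le_mul (by positivity) (by linarith) hx
  refine (lintegral_mono_ae hpoint).trans ((ENNReal.lintegral_mul_norm_pow_le
    (hJ.mul (hVm.pow_const _)).aemeasurable ((hκ.mono_set hAK).pow_const _) (by positivity)
    (by positivity) (by field_simp; ring)).trans ?_)
  gcongr
  exact hf.setLIntegral_abs_det_mul_imageBallVolume_rpow_neg_le hinj
    ((one_lt_div (by positivity)).2 hp) haR hVa

/-- The constant of the distortion estimate for cubes in `ℝᵐ⁺²`. -/
noncomputable def cubeDistortionConst (m : ℕ) (p : ℝ) : ℝ≥0∞ :=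
  (m + 2 : ℕ) * (2 ^ (m + 5)) ^ (m + 1) * ((2 * (m + 2) : ℕ) *
    (2 * (1 - 2 ^ (1 - p / (m + 2)))⁻¹) ^ ((m + 1) / p))

lemma cubeDistortionConst_ne_top (hp : m + 2 < p) : cubeDistortionConst m p ≠ ⊤ := by
  have hp0 : 0 < p := (by positivity : (0 : ℝ) < m + 2).trans hp
  have hlt : (2 : ℝ≥0∞) ^ (1 - p / (m + 2)) < 1 :=
    ENNReal.rpow_lt_one_of_one_lt_of_neg ENNReal.one_lt_two
      (sub_neg.2 ((one_lt_div (by positivity : (0 : ℝ) < m + 2)).2 hp))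
  have hinv : (1 - (2 : ℝ≥0∞) ^ (1 - p / (m + 2)))⁻¹ ≠ ⊤ :=
    ENNReal.inv_ne_top.2 (tsub_pos_of_lt hlt).ne'
  unfold cubeDistortionConst
  finiteness

lemma FastC1Approx.ofReal_sub_mul_imageBallVolume_rpow_le
    (hf : FastC1Approx volume (closedBall x₀ R) f G v) (hm : m ≠ 0) (hφ : NondecPos φ)
    (hcal : CalderonCond (m + 2) φ)
    (hmass : ∫⁻ x in closedBall x₀ R, ENNReal.ofReal (φ ‖G x‖) ≠ ⊤)
    (hopen : ∀ r < R, IsOpen (f '' ball x₀ r)) (hinj : InjOn f (ball x₀ R))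
    (hp : m + 2 < p) (ha : 0 ≤ a) (haR : a ≤ R)
    {κ : (Fin (m + 2) → ℝ) → ℝ≥0∞} (hκ : AEMeasurable κ (volume.restrict (closedBall x₀ R)))
    (hle : ∀ᵐ x ∂volume.restrict (closedBall x₀ R),
      ‖G x‖ₑ ^ p ≤ κ x * ENNReal.ofReal |(G x).det|) :
    ENNReal.ofReal (R - a) *
        imageBallVolume volume f x₀ a ^ ((p / (m + 2) - 1) * ((m + 1) / p)) ≤
      cubeDistortionConst m p *
        (∫⁻ x in closedBall x₀ R, κ x ^ ((m + 1) / (p - (m + 1)))) ^ ((p - (m + 1)) / p) := by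
  set V := imageBallVolume volume f x₀ a
  have hp0 : 0 < p := (by positivity : (0 : ℝ) < m + 2).trans hp
  have hq : 0 < p / (m + 2) - 1 := sub_pos.2 ((one_lt_div (by positivity)).2 hp)
  have hexp : 0 < (p / (m + 2) - 1) * ((m + 1) / p) := by positivity
  rcases eq_or_ne V 0 with hV0 | hV0
  · simp [hV0, ENNReal.zero_rpow_of_pos hexp]
  have hVt : V ≠ ⊤ := imageBallVolume_ne_top hf.continuousOn haR
  have hVpow : (V ^ (1 - p / (m + 2))) ^ ((m + 1) / p) =
      (V ^ ((p / (m + 2) - 1) * ((m + 1) / p)))⁻¹ := by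
    rw [← ENNReal.rpow_mul, ← ENNReal.rpow_neg, ← neg_mul, neg_sub]
  have hring := (hf.ofReal_sub_le_setLIntegral hm hφ hcal hmass hopen ha hV0).trans
    (mul_le_mul_right (mul_le_mul_right
      (hf.setLIntegral_rpow_neg_mul_enorm_pow_le hinj hp haR hV0 hκ hle) _) _)
  rw [ENNReal.mul_rpow_of_nonneg _ (V ^ _) (by positivity), hVpow] at hring
  rw [← ENNReal.le_div_iff_mul_le (by simp [hV0, hVt]) (by simp [hV0, hVt])]
  refine hring.trans_eq ?_
  rw [cubeDistortionConst, ENNReal.div_eq_inv_mul]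
  ring

end RingEstimate

section Mollification

open ContinuousLinearMap (lsmul)
open scoped Convolution

variable {E F : Type*} [NormedAddCommGroup E] [MeasurableSpace E] [BorelSpace E]
  [NormedAddCommGroup F] {μ : Measure E} {L : E → F}

lemma tendsto_lintegral_enorm_comp_sub_right_sub [μ.IsAddRightInvariant] [IsLocallyFiniteMeasure μ]
    [μ.InnerRegularCompactLTTop] (hL : Integrable L μ) :
    Tendsto (fun t => ∫⁻ x, ‖L (x - t) - L x‖ₑ ∂μ) (𝓝 0) (𝓝 0) := by
  have hL1 : MemLp L 1 μ := memLp_one_iff_integrable.2 hL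
  have hpres := fun t : E => measurePreserving_sub_right μ t
  have hcont : Continuous fun t : E => (⟨fun x => x - t, by fun_prop⟩ : C(E, E)) :=
    ContinuousMap.continuous_of_continuous_uncurry _
      (continuous_snd.sub continuous_fst)
  have htrans := ((continuous_const (y := hL1.toLp L)).compMeasurePreservingLp hcont hpres
    ENNReal.one_ne_top).tendsto 0
  rw [tendsto_iff_edist_tendsto_0] at htrans
  refine htrans.congr fun t => ?_
  rw [Lp.toLp_compMeasurePreserving, Lp.toLp_compMeasurePreserving, Lp.edist_toLp_toLp,
    eLpNorm_one_eq_lintegral_enorm]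
  simp

variable [NormedSpace ℝ E] [FiniteDimensional ℝ E] [NormedSpace ℝ F] [CompleteSpace F]
  [μ.IsAddHaarMeasure]

lemma lintegral_enorm_normed_convolution_sub_le (b : ContDiffBump (0 : E)) (hL : Integrable L μ)
    {η : ℝ≥0∞} (hη : ∀ t ∈ ball 0 b.rOut, ∫⁻ x, ‖L (x - t) - L x‖ₑ ∂μ ≤ η) :
    ∫⁻ x, ‖(b.normed μ ⋆[lsmul ℝ ℝ, μ] L) x - L x‖ₑ ∂μ ≤ η := by
  have hmean : ∀ x, ‖(b.normed μ ⋆[lsmul ℝ ℝ, μ] L) x - L x‖ₑ ≤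
      ∫⁻ t, ‖b.normed μ t‖ₑ * ‖L (x - t) - L x‖ₑ ∂μ := fun x => by
    have hint : Integrable (fun t => b.normed μ t • L (x - t)) μ :=
      b.hasCompactSupport_normed.convolutionExists_left (lsmul ℝ ℝ) b.continuous_normed
        hL.locallyIntegrable x
    have hsub : (b.normed μ ⋆[lsmul ℝ ℝ, μ] L) x - L x =
        ∫ t, b.normed μ t • (L (x - t) - L x) ∂μ := by
      simp only [smul_sub]
      rw [integral_sub hint (b.integrable_normed.smul_const _), b.integral_normed_smul,
        convolution_lsmul]
    rw [hsub]
    exact (enorm_integral_le_lintegral_enorm _).trans_eq (by simp only [enorm_smul])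
  have hmeas : AEMeasurable (Function.uncurry fun x t =>
      ‖b.normed μ t‖ₑ * ‖L (x - t) - L x‖ₑ) (μ.prod μ) :=
    (b.continuous_normed.comp continuous_snd).enorm.aemeasurable.mul
      ((hL.1.comp_quasiMeasurePreserving (quasiMeasurePreserving_sub_of_right_invariant μ μ)).sub
        hL.1.comp_fst).enorm
  have htranslation : ∀ t, ‖b.normed μ t‖ₑ * ∫⁻ x, ‖L (x - t) - L x‖ₑ ∂μ ≤
      ‖b.normed μ t‖ₑ * η := fun t => by
    by_cases ht : t ∈ ball 0 b.rOut
    · exact mul_le_mul_right (hη t ht) _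
    · rw [← b.support_normed_eq (μ := μ), Function.notMem_support] at ht
      simp [ht]
  calc _ ≤ ∫⁻ x, ∫⁻ t, ‖b.normed μ t‖ₑ * ‖L (x - t) - L x‖ₑ ∂μ ∂μ := lintegral_mono hmean
    _ = ∫⁻ t, ‖b.normed μ t‖ₑ * ∫⁻ x, ‖L (x - t) - L x‖ₑ ∂μ ∂μ := by
      rw [lintegral_lintegral_swap hmeas]
      exact lintegral_congr fun t => lintegral_const_mul' _ _ enorm_ne_top
    _ ≤ ∫⁻ t, ‖b.normed μ t‖ₑ * η ∂μ := lintegral_mono htranslation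
    _ = η := by
      rw [lintegral_mul_const _ b.continuous_normed.enorm.measurable,
        ← ofReal_integral_norm_eq_lintegral_enorm b.integrable_normed]
      simp [abs_of_nonneg (b.nonneg_normed _), b.integral_normed]

end Mollification

section WeakDerivative

lemma integrable_indicator_of_isCompact {X F : Type*} [TopologicalSpace X] [T2Space X]
    [MeasurableSpace X] [OpensMeasurableSpace X] [NormedAddCommGroup F] {μ : Measure X}
    {D K : Set X} {g : X → F} (hK : IsCompact K) (hg : LocallyIntegrableOn g D μ) (hKD : K ⊆ D) :
    Integrable (K.indicator g) μ :=
  (hg.integrableOn_compact_subset hKD hK).integrable_indicator hK.measurableSet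

open ContinuousLinearMap (lsmul)
open scoped Convolution

variable {n m : ℕ} {D K : Set (Eucl n)} {f : Eucl n → Eucl m} {Df : Eucl n → Eucl n →L[ℝ] Eucl m}
  {ρ : Eucl n → ℝ} {x : Eucl n}

lemma fderiv_comp_const_sub_apply (hρ : Differentiable ℝ ρ) (x y v : Eucl n) :
    fderiv ℝ (fun z => ρ (x - z)) y v = -fderiv ℝ ρ (x - y) v := by
  have hcomp : HasFDerivAt (fun z => ρ (x - z)) _ y :=
    (hρ (x - y)).hasFDerivAt.comp y ((hasFDerivAt_id y).const_sub x)
  simp [hcomp.fderiv]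

lemma IsWeakDerivOn.hasFDerivAt_convolution (hw : IsWeakDerivOn D f Df) (hK : IsCompact K)
    (hKD : K ⊆ D) (hρ : ContDiff ℝ (⊤ : ℕ∞) ρ) (hρc : HasCompactSupport ρ)
    (hx : (x - ·) ⁻¹' tsupport ρ ⊆ K) :
    HasFDerivAt (ρ ⋆[lsmul ℝ ℝ, volume] K.indicator f)
      ((ρ ⋆[lsmul ℝ ℝ, volume] K.indicator Df) x) x := by
  have hρ1 : ContDiff ℝ 1 ρ := hρ.of_le (by exact_mod_cast le_top)
  have hf := (integrable_indicator_of_isCompact hK hw.1 hKD).locallyIntegrable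
  have hDf := (integrable_indicator_of_isCompact hK hw.2.1 hKD).locallyIntegrable
  set θ : Eucl n → ℝ := fun y => ρ (x - y)
  have hθsupp : tsupport θ ⊆ K :=
    (tsupport_comp_eq_preimage ρ (Homeomorph.subLeft x)).trans_subset hx
  have hθ : ∀ y ∉ K, ρ (x - y) = 0 := fun y hy =>
    image_eq_zero_of_notMem_tsupport fun h => hy (hx h)
  have hθ' : ∀ y ∉ K, fderiv ℝ θ y = 0 := fun y hy =>
    image_eq_zero_of_notMem_tsupport fun h => hy (hθsupp (tsupport_fderiv_subset ℝ h))
  have hfderiv : ∀ y v, fderiv ℝ ρ (x - y) v = -fderiv ℝ θ y v := fun y v => by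
    rw [fderiv_comp_const_sub_apply (hρ1.differentiable one_ne_zero), neg_neg]
  have hweak := hw.2.2 θ (hρ.comp (contDiff_const.sub contDiff_id))
    (hρc.comp_homeomorph (Homeomorph.subLeft x)) (hθsupp.trans hKD)
  refine (hρc.hasFDerivAt_convolution_left (lsmul ℝ ℝ) hρ1 hf x).congr_fderiv ?_
  ext1 v
  have hint := (hρc.fderiv (𝕜 := ℝ)).convolutionExists_left ((lsmul ℝ ℝ).precompL (Eucl n))
    (hρ1.continuous_fderiv one_ne_zero) hf x
  have hint' := hρc.convolutionExists_left (lsmul ℝ ℝ) hρ1.continuous hDf x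
  calc (fderiv ℝ ρ ⋆[(lsmul ℝ ℝ).precompL (Eucl n), volume] K.indicator f) x v
      = ∫ y, fderiv ℝ ρ (x - y) v • K.indicator f y := by
        rw [convolution_eq_swap, ContinuousLinearMap.integral_apply hint.integrable_swap]
        rfl
    _ = -∫ y, fderiv ℝ θ y v • f y := by
        rw [← integral_neg]
        refine integral_congr_ae (.of_forall fun y => ?_)
        by_cases hy : y ∈ K
        · simp [hfderiv, hy]
        · simp [hfderiv, hy, hθ' y hy]
    _ = ∫ y, θ y • Df y v := (hweak v).symm
    _ = ∫ y, (ρ (x - y) • K.indicator Df y) v := by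
        refine integral_congr_ae (.of_forall fun y => ?_)
        by_cases hy : y ∈ K
        · simp [hy, θ]
        · simp [hy, θ, hθ y hy]
    _ = (ρ ⋆[lsmul ℝ ℝ, volume] K.indicator Df) x v := by
        rw [convolution_eq_swap, ContinuousLinearMap.integral_apply hint'.integrable_swap]
        rfl

lemma IsWeakDerivOn.fderiv_normed_convolution (hw : IsWeakDerivOn D f Df) (hK : IsCompact K)
    (hKD : K ⊆ D) {b : ContDiffBump (0 : Eucl n)} (hx : closedBall x b.rOut ⊆ K) :
    fderiv ℝ (b.normed volume ⋆[lsmul ℝ ℝ, volume] K.indicator f) x =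
      (b.normed volume ⋆[lsmul ℝ ℝ, volume] K.indicator Df) x :=
  (hw.hasFDerivAt_convolution hK hKD b.contDiff_normed b.hasCompactSupport_normed fun y hy => hx (by
    rwa [b.tsupport_normed_eq, mem_preimage, mem_closedBall_zero_iff, ← dist_eq_norm,
      ← mem_closedBall'] at hy)).fderiv

/- Mollify at a scale below the distance of `K` to `∂D`, the modulus of continuity of `f` near `K`
and the `L¹` modulus of continuity of `Df` under translations. -/
lemma IsWeakDerivOn.exists_contDiff_approx (hw : IsWeakDerivOn D f Df) (hD : IsOpen D)
    (hf : ContinuousOn f D) (hK : IsCompact K) (hKD : K ⊆ D) {η : ℝ} (hη : 0 < η) :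
    ∃ g : Eucl n → Eucl m, ContDiff ℝ 1 g ∧ (∀ x ∈ K, dist (g x) (f x) ≤ η) ∧
      ∫⁻ x in K, ‖fderiv ℝ g x - Df x‖ₑ ≤ ENNReal.ofReal η := by
  obtain ⟨δ, hδ, hδD⟩ := hK.exists_cthickening_subset_open hD hKD
  set K' := cthickening δ K
  have hK' : IsCompact K' := hK.cthickening
  have hfi := integrable_indicator_of_isCompact hK' hw.1 hδD
  have hDfi := integrable_indicator_of_isCompact hK' hw.2.1 hδD
  obtain ⟨r₁, hr₁, hfr⟩ := Metric.uniformContinuousOn_iff.1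
    (hK'.uniformContinuousOn_of_continuous (hf.mono hδD)) η hη
  obtain ⟨r₂, hr₂, hDfr⟩ := Metric.eventually_nhds_iff_ball.1
    ((tendsto_lintegral_enorm_comp_sub_right_sub hDfi).eventually_le_const
      (ENNReal.ofReal_pos.2 hη))
  have hr : 0 < min (min r₁ r₂) δ := by positivity
  let b : ContDiffBump (0 : Eucl n) := ⟨_, _, half_pos hr, half_lt_self hr⟩
  have hKK' : K ⊆ K' := self_subset_cthickening K
  have hbK' : ∀ x ∈ K, closedBall x b.rOut ⊆ K' := fun x hx =>
    (closedBall_subset_closedBall (min_le_right _ _)).trans (closedBall_subset_cthickening hx δ)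
  refine ⟨b.normed volume ⋆[lsmul ℝ ℝ, volume] K'.indicator f,
    b.hasCompactSupport_normed.contDiff_convolution_left _ b.contDiff_normed
      hfi.locallyIntegrable, fun x hx => ?_, ?_⟩
  · rw [← indicator_of_mem (hKK' hx) f]
    refine b.dist_normed_convolution_le hfi.1 fun y hy => ?_
    have hyK' := hbK' x hx (ball_subset_closedBall hy)
    rw [indicator_of_mem hyK', indicator_of_mem (hKK' hx)]
    exact (hfr y hyK' x (hKK' hx)
      (hy.trans_le ((min_le_left _ _).trans (min_le_left _ _)))).le
  · calc ∫⁻ x in K, ‖fderiv ℝ _ x - Df x‖ₑ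
        = ∫⁻ x in K, ‖(b.normed volume ⋆[lsmul ℝ ℝ, volume] K'.indicator Df) x -
            K'.indicator Df x‖ₑ :=
          setLIntegral_congr_fun hK.measurableSet fun x hx => by
            rw [hw.fderiv_normed_convolution hK' hδD (hbK' x hx), indicator_of_mem (hKK' hx)]
      _ ≤ _ := (setLIntegral_le_lintegral _ _).trans
          (lintegral_enorm_normed_convolution_sub_le b hDfi fun t ht => hDfr t
            (ball_subset_ball ((min_le_left _ _).trans (min_le_right _ _)) ht))

end WeakDerivative

section OrliczFunction

variable {φ : ℝ → ℝ} {c : ℝ}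

lemma NondecPos.comp_div (hφ : NondecPos φ) (hc : 0 < c) : NondecPos fun t => φ (t / c) :=
  ⟨fun s t hs hst => hφ.1 _ _ (by positivity) (by gcongr), fun t ht => hφ.2 _ (by positivity)⟩

lemma CalderonCond.comp_div {n : ℕ} (hcal : CalderonCond n φ) (hφ : NondecPos φ) (hc : 0 < c) :
    CalderonCond n fun t => φ (t / c) := by
  obtain ⟨t₀, ht₀, hint⟩ := hcal
  have hscaled := (integrableOn_Ioi_comp_mul_left_iff
    (fun t => (t / φ t) ^ (1 / ((n : ℝ) - 2))) (c * t₀) (inv_pos.2 hc)).2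
    (by rwa [inv_mul_cancel_left₀ hc.ne'])
  refine ⟨c * t₀, by positivity, IntegrableOn.congr_fun
    (hscaled.const_mul (c ^ (1 / ((n : ℝ) - 2)))) (fun t ht => ?_) measurableSet_Ioi⟩
  have ht0 : 0 < t := (by positivity : 0 < c * t₀).trans ht
  have hφt := hφ.2 (c⁻¹ * t) (by positivity)
  beta_reduce
  rw [← Real.mul_rpow hc.le (by positivity), div_eq_inv_mul t c]
  congr 1
  field_simp

end OrliczFunction

section FrobeniusNorm

variable {n m : ℕ} (A : Eucl n →L[ℝ] Eucl m)

lemma apply_apply_eq_sum_mul_single (x : Eucl n) (i : Fin m) :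
    A x i = ∑ j, x j * A (EuclideanSpace.single j 1) i := by
  conv_lhs => rw [← (EuclideanSpace.basisFun (Fin n) ℝ).sum_repr x]
  simp

lemma opNorm_le_frobNorm : ‖A‖ ≤ frobNorm A := by
  refine A.opNorm_le_bound (Real.sqrt_nonneg _) fun x => ?_
  rw [frobNorm, EuclideanSpace.norm_eq, EuclideanSpace.norm_eq,
    ← Real.sqrt_mul (by positivity), Finset.sum_mul]
  gcongr with i
  simp only [Real.norm_eq_abs, sq_abs]
  rw [apply_apply_eq_sum_mul_single, mul_comm]
  exact Finset.sum_mul_sq_le_sq_mul_sq _ _ _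

@[simp]
lemma frobNorm_zero : frobNorm (0 : Eucl n →L[ℝ] Eucl m) = 0 := by simp [frobNorm]

end FrobeniusNorm

section Distortion

variable {n : ℕ} {D : Set (Eucl n)} {Df G : Eucl n → Eucl n →L[ℝ] Eucl n} {p : ℝ}

lemma measurable_distortionKp (hG : StronglyMeasurable G) : Measurable (distortionKp p G) := by
  have hdet : Measurable fun x => (G x).det :=
    ContinuousLinearMap.continuous_det.measurable.comp hG.measurable
  exact Measurable.ite (hdet (measurableSet_singleton 0).compl)
    ((hG.norm.measurable.pow_const p).div hdet).ennreal_ofReal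
    (Measurable.ite (hG.measurable (measurableSet_singleton 0)) measurable_const measurable_const)

lemma distortionKp_ae_eq {μ : Measure (Eucl n)} (h : Df =ᵐ[μ] G) :
    distortionKp p Df =ᵐ[μ] distortionKp p G :=
  h.mono fun x hx => by simp only [distortionKp, hx]

lemma HasFiniteDistortionOn.ae_enorm_rpow_le (h : HasFiniteDistortionOn D Df) (hp : 0 < p) :
    ∀ᵐ x ∂volume.restrict D,
      ‖Df x‖ₑ ^ p ≤ distortionKp p Df x * ENNReal.ofReal |(Df x).det| := by
  obtain ⟨K, -, hK⟩ := h
  filter_upwards [hK] with x ⟨hK1, hKx⟩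
  rcases eq_or_ne (Df x).det 0 with hdet | hdet
  · have hDf : ‖Df x‖ = 0 := eq_zero_of_pow_eq_zero
      ((hKx.trans_eq (by simp [hdet])).antisymm (by positivity))
    rw [← ofReal_norm, hDf, ENNReal.ofReal_zero, ENNReal.zero_rpow_of_pos hp]
    exact zero_le
  · have hdet0 : 0 < (Df x).det := (nonneg_of_mul_nonneg_right
      ((by positivity : (0 : ℝ) ≤ ‖Df x‖ ^ n).trans hKx) (by positivity)).lt_of_ne' hdet
    rw [distortionKp, if_pos hdet, abs_of_pos hdet0, ← ENNReal.ofReal_mul (by positivity),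
      div_mul_cancel₀ _ hdet, ← ofReal_norm, ENNReal.ofReal_rpow_of_nonneg (norm_nonneg _) hp.le]

end Distortion

section Conjugation

variable {E E' : Type*} [NormedAddCommGroup E] [NormedSpace ℝ E] [NormedAddCommGroup E']
  [NormedSpace ℝ E'] (e : E ≃L[ℝ] E')

lemma det_conjContinuousAlgEquiv (A : E →L[ℝ] E) : (e.conjContinuousAlgEquiv A).det = A.det :=
  LinearMap.det_conj (A : E →ₗ[ℝ] E) e.toLinearEquiv

lemma fderiv_conj_eq_conjContinuousAlgEquiv (g : E → E) (y : E') :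
    fderiv ℝ (e ∘ g ∘ e.symm) y = e.conjContinuousAlgEquiv (fderiv ℝ g (e.symm y)) := by
  rw [e.comp_fderiv, e.symm.comp_right_fderiv]
  rfl

lemma norm_conjContinuousAlgEquiv_le (A : E →L[ℝ] E) :
    ‖e.conjContinuousAlgEquiv A‖ ≤ ‖(e : E →L[ℝ] E')‖ * ‖(e.symm : E' →L[ℝ] E)‖ * ‖A‖ :=
  calc ‖e.conjContinuousAlgEquiv A‖
      ≤ ‖(e : E →L[ℝ] E')‖ * (‖A‖ * ‖(e.symm : E' →L[ℝ] E)‖) :=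
        (ContinuousLinearMap.opNorm_comp_le _ _).trans
          (mul_le_mul_of_nonneg_left (ContinuousLinearMap.opNorm_comp_le _ _) (norm_nonneg _))
    _ = _ := by ring

variable [MeasurableSpace E] [BorelSpace E] [MeasurableSpace E'] [BorelSpace E'] {μ : Measure E}
  {ν : Measure E'} {K : Set E} {f g : E → E} {G : E → E →L[ℝ] E} {c : ℝ} {e}

lemma lintegral_derivError_conj_le (he : MeasurePreserving e μ ν)
    (hc : ∀ A, ‖e.conjContinuousAlgEquiv A‖ ≤ c * ‖A‖) :
    ∫⁻ y, derivError (e.symm ⁻¹' K) (fun y => e.conjContinuousAlgEquiv (G (e.symm y)))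
        (e ∘ g ∘ e.symm) y ∂ν ≤ ENNReal.ofReal c * ∫⁻ x, derivError K G g x ∂μ := by
  rw [← he.lintegral_comp_emb e.toHomeomorph.measurableEmbedding,
    ← lintegral_const_mul' _ _ ENNReal.ofReal_ne_top]
  refine lintegral_mono fun x => ?_
  by_cases hx : x ∈ K
  · simp only [derivError, mem_preimage, ContinuousLinearEquiv.symm_apply_apply, hx,
      indicator_of_mem, fderiv_conj_eq_conjContinuousAlgEquiv, ← map_sub, ← ofReal_norm]
    rw [← ENNReal.ofReal_mul' (norm_nonneg _)]
    exact ENNReal.ofReal_le_ofReal (hc _)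
  · simp [derivError, hx]

end Conjugation

section SobolevConjugation

variable {n : ℕ} {D K : Set (Eucl n)} {f : Eucl n → Eucl n} {Df G : Eucl n → Eucl n →L[ℝ] Eucl n}
  {E : Type*} [NormedAddCommGroup E] [NormedSpace ℝ E] [MeasurableSpace E] [BorelSpace E]
  {ν : Measure E} {e : Eucl n ≃L[ℝ] E} {c : ℝ}

lemma IsWeakDerivOn.exists_fastC1Approx_conj (hw : IsWeakDerivOn D f Df) (hD : IsOpen D)
    (hf : ContinuousOn f D) (hK : IsCompact K) (hKD : K ⊆ D) (hG : StronglyMeasurable G)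
    (hGD : Df =ᵐ[volume.restrict K] G) (he : MeasurePreserving e volume ν) (hc : 0 < c)
    (hcA : ∀ A, ‖e.conjContinuousAlgEquiv A‖ ≤ c * ‖A‖) :
    ∃ v, FastC1Approx ν (e.symm ⁻¹' K) (e ∘ f ∘ e.symm)
      (fun y => e.conjContinuousAlgEquiv (G (e.symm y))) v := by
  have hη : ∀ j : ℕ, (0 : ℝ) < c⁻¹ * 4⁻¹ ^ j := fun j => by positivity
  choose g hg hgf hgDf using fun j => hw.exists_contDiff_approx hD hf hK hKD (hη j)
  refine ⟨fun j => e ∘ g j ∘ e.symm, ?_, ?_, fun j => ?_, fun y hy => ?_, fun j => ?_⟩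
  · exact e.continuous.comp_continuousOn
      ((hf.mono hKD).comp e.symm.continuous.continuousOn fun _ => id)
  · exact e.conjContinuousAlgEquiv.continuous.comp_stronglyMeasurable
      (hG.comp_measurable e.symm.continuous.measurable)
  · exact e.contDiff.comp ((hg j).comp e.symm.contDiff)
  · have hη0 : Tendsto (fun j : ℕ => c⁻¹ * (4⁻¹ : ℝ) ^ j) atTop (𝓝 0) := by
      simpa using (tendsto_pow_atTop_nhds_zero_of_lt_one (by norm_num) (by norm_num :
        (4⁻¹ : ℝ) < 1)).const_mul c⁻¹
    exact (e.continuous.tendsto _).comp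
      (tendsto_iff_dist_tendsto_zero.2 (squeeze_zero (fun _ => dist_nonneg)
        (fun j => hgf j _ hy) hη0))
  · calc _ ≤ ENNReal.ofReal c * ∫⁻ x, derivError K G (g j) x :=
          lintegral_derivError_conj_le he hcA
      _ = ENNReal.ofReal c * ∫⁻ x in K, ‖fderiv ℝ (g j) x - Df x‖ₑ := by
          simp only [derivError]
          rw [lintegral_indicator hK.measurableSet]
          congr 1
          exact lintegral_congr_ae (hGD.mono fun x hx => by simp only [hx])
      _ ≤ ENNReal.ofReal c * ENNReal.ofReal (c⁻¹ * 4⁻¹ ^ j) := by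
          gcongr
          exact hgDf j
      _ = 4⁻¹ ^ j := by
          rw [← ENNReal.ofReal_mul hc.le, mul_inv_cancel_left₀ hc.ne',
            ENNReal.ofReal_pow (by norm_num), ENNReal.ofReal_inv_of_pos (by norm_num),
            ENNReal.ofReal_ofNat]

lemma MemOrliczSobolevOn.setLIntegral_conj_lt_top {φ : ℝ → ℝ} (h : MemOrliczSobolevOn φ D f Df)
    (hφ : NondecPos φ) (hK : IsCompact K) (hKD : K ⊆ D)
    (hGD : Df =ᵐ[volume.restrict K] G) (he : MeasurePreserving e volume ν) (hc : 0 < c)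
    (hcA : ∀ A, ‖e.conjContinuousAlgEquiv A‖ ≤ c * ‖A‖) :
    ∫⁻ y in e.symm ⁻¹' K, ENNReal.ofReal (φ (‖e.conjContinuousAlgEquiv (G (e.symm y))‖ / c)) ∂ν <
      ⊤ := by
  have hφA : ∀ A, φ (‖e.conjContinuousAlgEquiv A‖ / c) ≤ φ (frobNorm A) := fun A => by
    rcases eq_or_ne A 0 with rfl | hA
    · simp
    · have hpos : 0 < ‖e.conjContinuousAlgEquiv A‖ := norm_pos_iff.2 (by simpa using hA)
      exact hφ.1 _ _ (by positivity)
        (((div_le_iff₀' hc).2 (hcA A)).trans (opNorm_le_frobNorm A))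
  refine lt_of_le_of_lt ?_ (h.2 K hKD hK)
  rw [← he.setLIntegral_comp_preimage_emb e.toHomeomorph.measurableEmbedding,
    ← preimage_comp, e.symm_comp_self, preimage_id]
  refine lintegral_mono_ae (hGD.mono fun x hx => ?_)
  rw [e.symm_apply_apply, ← hx]
  exact ENNReal.ofReal_le_ofReal (hφA _)

end SobolevConjugation

section HomeoConjugation

variable {E E' : Type*} [NormedAddCommGroup E] [NormedSpace ℝ E] [NormedAddCommGroup E']
  [NormedSpace ℝ E'] (e : E ≃L[ℝ] E') {c p : ℝ}

lemma image_conj_eq_preimage (f : E → E) (s : Set E') :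
    (e ∘ f ∘ e.symm) '' s = e.symm ⁻¹' (f '' (e ⁻¹' s)) := by
  rw [image_comp, image_comp, e.image_symm_eq_preimage, e.image_eq_preimage_symm]

variable {e}

lemma enorm_conjContinuousAlgEquiv_rpow_le (hc : 0 ≤ c)
    (hcA : ∀ A, ‖e.conjContinuousAlgEquiv A‖ ≤ c * ‖A‖) (hp : 0 ≤ p) {A : E →L[ℝ] E} {κ : ℝ≥0∞}
    (hA : ‖A‖ₑ ^ p ≤ κ * ENNReal.ofReal |A.det|) :
    ‖e.conjContinuousAlgEquiv A‖ₑ ^ p ≤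
      ENNReal.ofReal c ^ p * κ * ENNReal.ofReal |(e.conjContinuousAlgEquiv A).det| :=
  calc ‖e.conjContinuousAlgEquiv A‖ₑ ^ p
      ≤ (ENNReal.ofReal c * ‖A‖ₑ) ^ p := by
        rw [← ofReal_norm, ← ofReal_norm, ← ENNReal.ofReal_mul hc]
        gcongr
        exact hcA A
    _ ≤ _ := by
        rw [ENNReal.mul_rpow_of_nonneg _ _ hp, det_conjContinuousAlgEquiv, mul_assoc]
        gcongr

variable {n : ℕ} {D D' : Set (Eucl n)} {f : Eucl n → Eucl n} {e : Eucl n ≃L[ℝ] E} {s : Set E}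

lemma IsHomeoOn.isOpen_image_conj (h : IsHomeoOn f D D') (hs : IsOpen s) (hsD : e ⁻¹' s ⊆ D) :
    IsOpen ((e ∘ f ∘ e.symm) '' s) := by
  rw [image_conj_eq_preimage]
  exact (h.isOpenMapOn _ hsD (hs.preimage e.continuous)).preimage e.symm.continuous

lemma IsHomeoOn.injOn_conj (h : IsHomeoOn f D D') (hsD : e ⁻¹' s ⊆ D) :
    InjOn (e ∘ f ∘ e.symm) s :=
  e.injective.comp_injOn (h.injOn.comp e.symm.injective.injOn fun y hy => hsD (by simpa using hy))

end HomeoConjugation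

section EuclideanEstimate

/-- The mappings of the theorem: homeomorphisms `f : D → D'` of finite distortion, with weak
derivative `Df`, in an Orlicz–Sobolev class `W^{1,φ}_loc(D)` whose `φ` satisfies the Calderón
condition. -/
structure IsCalderonFiniteDistortionHomeo {n : ℕ} (φ : ℝ → ℝ) (D D' : Set (Eucl n))
    (f : Eucl n → Eucl n) (Df : Eucl n → Eucl n →L[ℝ] Eucl n) : Prop where
  isOpen : IsOpen D
  nondecPos : NondecPos φ
  calderonCond : CalderonCond n φ
  isHomeoOn : IsHomeoOn f D D'
  memOrliczSobolevOn : MemOrliczSobolevOn φ D f Df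
  hasFiniteDistortionOn : HasFiniteDistortionOn D Df

namespace IsCalderonFiniteDistortionHomeo

lemma exists_stronglyMeasurable_ae_enorm_rpow_le {n : ℕ} {φ : ℝ → ℝ} {D D' K : Set (Eucl n)}
    {f : Eucl n → Eucl n} {Df : Eucl n → Eucl n →L[ℝ] Eucl n} {p : ℝ}
    (h : IsCalderonFiniteDistortionHomeo φ D D' f Df) (hp : 0 < p) (hK : IsCompact K)
    (hKD : K ⊆ D) :
    ∃ G, StronglyMeasurable G ∧ Df =ᵐ[volume.restrict K] G ∧ ∀ᵐ x ∂volume.restrict K,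
      ‖G x‖ₑ ^ p ≤ distortionKp p G x * ENNReal.ofReal |(G x).det| := by
  obtain ⟨G, hG, hDfG⟩ := (h.memOrliczSobolevOn.1.2.1.integrableOn_compact_subset hKD hK).1
  refine ⟨G, hG, hDfG, ?_⟩
  filter_upwards [ae_restrict_of_ae_restrict_of_subset hKD
    (h.hasFiniteDistortionOn.ae_enorm_rpow_le hp), hDfG,
    distortionKp_ae_eq (p := p) hDfG] with x hx hxG hxK
  rwa [← hxG, ← hxK]

variable {m : ℕ} {p a R c : ℝ} {φ : ℝ → ℝ} {D D' : Set (Eucl (m + 2))}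
  {f : Eucl (m + 2) → Eucl (m + 2)} {Df : Eucl (m + 2) → Eucl (m + 2) →L[ℝ] Eucl (m + 2)}
  {x₀ : Eucl (m + 2)} {e : Eucl (m + 2) ≃L[ℝ] (Fin (m + 2) → ℝ)}

lemma ofReal_sub_mul_volume_image_rpow_le (h : IsCalderonFiniteDistortionHomeo φ D D' f Df)
    (hm : m ≠ 0) (hp : m + 2 < p) (he : MeasurePreserving e volume volume) (hc : 0 < c)
    (hcA : ∀ A, ‖e.conjContinuousAlgEquiv A‖ ≤ c * ‖A‖) (ha : 0 ≤ a) (haR : a ≤ R)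
    (hRD : e ⁻¹' closedBall (e x₀) R ⊆ D) :
    ENNReal.ofReal (R - a) *
        volume (f '' (e ⁻¹' ball (e x₀) a)) ^ ((p / (m + 2) - 1) * ((m + 1) / p)) ≤
      cubeDistortionConst m p * (∫⁻ x in e ⁻¹' closedBall (e x₀) R,
        (ENNReal.ofReal c ^ p * distortionKp p Df x) ^ ((m + 1) / (p - (m + 1)))) ^
          ((p - (m + 1)) / p) := by
  have hp0 : 0 < p := (by positivity : (0 : ℝ) < m + 2).trans hp
  set K := e ⁻¹' closedBall (e x₀) R
  have hK : IsCompact K := e.toHomeomorph.isCompact_preimage.2 (isCompact_closedBall _ _)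
  have hKe : e.symm ⁻¹' K = closedBall (e x₀) R := by
    rw [← preimage_comp, e.self_comp_symm, preimage_id]
  have hpull : MeasurePreserving e (volume.restrict K)
      (volume.restrict (closedBall (e x₀) R)) := he.restrict_preimage measurableSet_closedBall
  have hpush : MeasurePreserving e.symm (volume.restrict (closedBall (e x₀) R))
      (volume.restrict K) := MeasurePreserving.symm e.toHomeomorph.toMeasurableEquiv hpull
  have hsymm : MeasurePreserving e.symm volume volume :=
    MeasurePreserving.symm e.toHomeomorph.toMeasurableEquiv he
  obtain ⟨G, hG, hDfG, hGdist⟩ := h.exists_stronglyMeasurable_ae_enorm_rpow_le hp0 hK hRD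
  obtain ⟨v, hv⟩ := h.memOrliczSobolevOn.1.exists_fastC1Approx_conj h.isOpen
    h.isHomeoOn.continuousOn hK hRD hG hDfG he hc hcA
  have hmass := h.memOrliczSobolevOn.setLIntegral_conj_lt_top h.nondecPos hK hRD hDfG he hc hcA
  rw [hKe] at hv hmass
  have hballD : ∀ r ≤ R, e ⁻¹' ball (e x₀) r ⊆ D := fun r hr =>
    (preimage_mono ((ball_subset_ball hr).trans ball_subset_closedBall)).trans hRD
  have hmain := hv.ofReal_sub_mul_imageBallVolume_rpow_le hm (h.nondecPos.comp_div hc)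
    (h.calderonCond.comp_div h.nondecPos hc) hmass.ne
    (fun r hr => h.isHomeoOn.isOpen_image_conj isOpen_ball (hballD r hr.le))
    (h.isHomeoOn.injOn_conj (hballD R le_rfl)) hp ha haR
    (((measurable_distortionKp hG).comp e.symm.continuous.measurable).const_mul _).aemeasurable
    ((hpush.quasiMeasurePreserving.ae hGdist).mono fun y hy =>
      enorm_conjContinuousAlgEquiv_rpow_le hc.le hcA hp0.le hy)
  rw [imageBallVolume, image_conj_eq_preimage,
    hsymm.measure_preimage_emb e.symm.toHomeomorph.measurableEmbedding,
    ← hpull.lintegral_comp_emb e.toHomeomorph.measurableEmbedding] at hmain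
  refine hmain.trans_eq ?_
  congr 2
  refine lintegral_congr_ae ?_
  filter_upwards [distortionKp_ae_eq (p := p) hDfG] with x hx
  simp only [Function.comp_apply, e.symm_apply_apply, hx]

end IsCalderonFiniteDistortionHomeo

end EuclideanEstimate

section BallEstimate

lemma exists_finset_closedBall_subset_biUnion_ball (E : Type*) [NormedAddCommGroup E]
    [NormedSpace ℝ E] [ProperSpace E] (a : ℝ) {δ : ℝ} (hδ : 0 < δ) :
    ∃ t : Finset E, (∀ z ∈ t, ‖z‖ ≤ a) ∧ ∀ (x₀ : E) (ε : ℝ), 0 < ε →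
      closedBall x₀ (a * ε) ⊆ ⋃ z ∈ t, ball (x₀ + ε • z) (δ * ε) := by
  obtain ⟨t, hta, htfin, ht⟩ := (isCompact_closedBall (0 : E) a).finite_cover_balls hδ
  refine ⟨htfin.toFinset, fun z hz => by simpa using hta (htfin.mem_toFinset.1 hz),
    fun x₀ ε hε x hx => ?_⟩
  have hx' : ε⁻¹ • (x - x₀) ∈ closedBall (0 : E) a := by
    rw [mem_closedBall_zero_iff, norm_smul, norm_inv, Real.norm_of_nonneg hε.le,
      inv_mul_le_iff₀ hε, mul_comm, ← dist_eq_norm]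
    exact hx
  obtain ⟨z, hz, hxz⟩ := mem_iUnion₂.1 (ht hx')
  refine mem_iUnion₂.2 ⟨z, htfin.mem_toFinset.2 hz, ?_⟩
  have hscale : x - (x₀ + ε • z) = ε • (ε⁻¹ • (x - x₀) - z) := by
    rw [smul_sub, smul_inv_smul₀ hε.ne', sub_sub]
  rw [mem_ball, dist_eq_norm, hscale, norm_smul, Real.norm_of_nonneg hε.le, mul_comm]
  exact mul_lt_mul_of_pos_right (mem_ball_iff_norm.1 hxz) hε

lemma preimage_closedBall_subset_closedBall {E F : Type*} [NormedAddCommGroup E] [NormedSpace ℝ E]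
    [NormedAddCommGroup F] [NormedSpace ℝ F] (e : E ≃L[ℝ] F) (x : E) (r : ℝ) :
    e ⁻¹' closedBall (e x) r ⊆ closedBall x (‖(e.symm : F →L[ℝ] E)‖ * r) := fun y hy =>
  (e.antilipschitz.le_mul_dist y x).trans (mul_le_mul_of_nonneg_left hy (norm_nonneg _))

lemma le_mul_rpow_mul_rpow_of_mul_rpow_le {V A C M s d : ℝ≥0∞} {β γ ν : ℝ} (hs : s ≠ 0)
    (hs' : s ≠ ⊤) (hd : d ≠ 0) (hd' : d ≠ ⊤) (hβ : 0 < β) (hγ : 0 ≤ γ) (hνγ : ν * γ = 1 + ν * β)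
    (h : d * s * V ^ β ≤ C * (A * (M * s ^ ν)) ^ γ) :
    V ≤ (d⁻¹ * C * M ^ γ) ^ β⁻¹ * A ^ (γ / β) * s ^ ν := by
  have hVβ : V ^ β ≤ d⁻¹ * C * M ^ γ * A ^ γ * s ^ (ν * β) := by
    refine (ENNReal.mul_le_mul_iff_right (mul_ne_zero hd hs) (ENNReal.mul_ne_top hd' hs')).1 ?_
    calc d * s * V ^ β ≤ C * (A * (M * s ^ ν)) ^ γ := h
      _ = C * (A ^ γ * (M ^ γ * (s * s ^ (ν * β)))) := by
          rw [ENNReal.mul_rpow_of_nonneg _ _ hγ, ENNReal.mul_rpow_of_nonneg _ _ hγ,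
            ← ENNReal.rpow_mul, hνγ, ENNReal.rpow_add _ _ hs hs', ENNReal.rpow_one]
      _ = (d * d⁻¹) * (C * (A ^ γ * (M ^ γ * (s * s ^ (ν * β))))) := by
          rw [ENNReal.mul_inv_cancel hd hd', one_mul]
      _ = d * s * (d⁻¹ * C * M ^ γ * A ^ γ * s ^ (ν * β)) := by ring
  have hβ' : 0 ≤ β⁻¹ := by positivity
  calc V = (V ^ β) ^ β⁻¹ := (ENNReal.rpow_rpow_inv hβ.ne' V).symm
    _ ≤ (d⁻¹ * C * M ^ γ * A ^ γ * s ^ (ν * β)) ^ β⁻¹ := by gcongr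
    _ = _ := by
        rw [ENNReal.mul_rpow_of_nonneg _ _ hβ', ENNReal.mul_rpow_of_nonneg _ _ hβ',
          ← ENNReal.rpow_mul, ← ENNReal.rpow_mul, mul_inv_cancel_right₀ hβ.ne', ← div_eq_mul_inv]

namespace IsCalderonFiniteDistortionHomeo

variable {m : ℕ} {p : ℝ}

lemma exists_ofReal_mul_volume_image_ball_rpow_le (hm : m ≠ 0) (hp : m + 2 < p) :
    ∃ (C : ℝ≥0∞) (L : ℝ), C ≠ ⊤ ∧ 0 < L ∧ ∀ {φ D D' f Df},
      IsCalderonFiniteDistortionHomeo (n := m + 2) φ D D' f Df →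
      ∀ (x : Eucl (m + 2)) (r : ℝ), 0 ≤ r → closedBall x (L * r) ⊆ D →
        ENNReal.ofReal r * volume (f '' ball x r) ^ ((p / (m + 2) - 1) * ((m + 1) / p)) ≤
          C * (∫⁻ y in closedBall x (L * r), distortionKp p Df y ^ ((m + 1) / (p - (m + 1)))) ^
            ((p - (m + 1)) / p) := by
  have hp0 : 0 < p := (by positivity : (0 : ℝ) < m + 2).trans hp
  have hpm : 0 < p - (m + 1) := by linarith
  set e : Eucl (m + 2) ≃L[ℝ] (Fin (m + 2) → ℝ) := EuclideanSpace.equiv (Fin (m + 2)) ℝ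
  set L := ‖(e.symm : (Fin (m + 2) → ℝ) →L[ℝ] Eucl (m + 2))‖
  set c := ‖(e : Eucl (m + 2) →L[ℝ] (Fin (m + 2) → ℝ))‖ * L
  have hc : 0 < c := mul_pos e.norm_pos e.norm_symm_pos
  set cα := (ENNReal.ofReal c ^ p) ^ ((m + 1) / (p - (m + 1)))
  have hcα : cα ≠ ⊤ := by finiteness
  refine ⟨cubeDistortionConst m p * cα ^ ((p - (m + 1)) / p), L * 2,
    ENNReal.mul_ne_top (cubeDistortionConst_ne_top hp) (by finiteness),
    mul_pos e.norm_symm_pos two_pos, fun {φ D D' f Df} h x r hr hD => ?_⟩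
  have he : MeasurePreserving e volume volume := PiLp.volume_preserving_ofLp (Fin (m + 2))
  have hball : ball x r ⊆ e ⁻¹' ball (e x) r := fun y hy =>
    (((PiLp.lipschitzWith_ofLp 2 fun _ : Fin (m + 2) => ℝ).dist_le_mul y x).trans
      (by simp)).trans_lt (mem_ball.1 hy)
  have hclosedBall : e ⁻¹' closedBall (e x) (2 * r) ⊆ closedBall x (L * 2 * r) :=
    (preimage_closedBall_subset_closedBall e x (2 * r)).trans_eq (by rw [mul_assoc])
  calc ENNReal.ofReal r * volume (f '' ball x r) ^ ((p / (m + 2) - 1) * ((m + 1) / p))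
      ≤ ENNReal.ofReal (2 * r - r) *
          volume (f '' (e ⁻¹' ball (e x) r)) ^ ((p / (m + 2) - 1) * ((m + 1) / p)) := by
        rw [two_mul, add_sub_cancel_right]
        have : 0 ≤ p / (m + 2) - 1 := sub_nonneg.2 ((one_le_div (by positivity)).2 hp.le)
        gcongr
    _ ≤ _ := h.ofReal_sub_mul_volume_image_rpow_le hm hp he hc (norm_conjContinuousAlgEquiv_le e)
        hr (by linarith) (hclosedBall.trans hD)
    _ ≤ cubeDistortionConst m p * (cα * ∫⁻ y in closedBall x (L * 2 * r),
          distortionKp p Df y ^ ((m + 1) / (p - (m + 1)))) ^ ((p - (m + 1)) / p) := by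
        rw [← lintegral_const_mul' _ _ hcα]
        simp only [ENNReal.mul_rpow_of_nonneg _ _ (by positivity : 0 ≤ (m + 1) / (p - (m + 1)))]
        gcongr
    _ = _ := by rw [ENNReal.mul_rpow_of_nonneg _ _ (by positivity), ← mul_assoc]

lemma exists_volume_image_ball_div_le (hm : m ≠ 0) (hp : m + 2 < p) :
    ∃ (C : ℝ≥0∞) (L : ℝ), C ≠ ⊤ ∧ 0 < L ∧ ∀ {φ D D' f Df},
      IsCalderonFiniteDistortionHomeo (n := m + 2) φ D D' f Df →
      ∀ (x₀ : Eucl (m + 2)) (ε : ℝ), 0 < ε → ball x₀ (4 * ε) ⊆ D → ∀ x ∈ closedBall x₀ (2 * ε),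
        volume (f '' ball x (ε / L)) ≤
          C * (⨍⁻ y in ball x₀ (4 * ε), distortionKp p Df y ^ ((m + 1) / (p - (m + 1))) ∂volume) ^
              (((p - (m + 1)) / p) / ((p / (m + 2) - 1) * ((m + 1) / p))) *
            ENNReal.ofReal ε ^ ((m + 2 : ℕ) : ℝ) := by
  have hp0 : 0 < p := (by positivity : (0 : ℝ) < m + 2).trans hp
  have hpm : 0 < p - (m + 1) := by linarith
  have hβ : 0 < (p / (m + 2) - 1) * ((m + 1) / p) :=
    mul_pos (sub_pos.2 ((one_lt_div (by positivity)).2 hp)) (by positivity)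
  obtain ⟨C, L, hC, hL, hCL⟩ := exists_ofReal_mul_volume_image_ball_rpow_le hm hp
  set ω := volume (ball (0 : Eucl (m + 2)) 4)
  have hω : ω ≠ ⊤ := measure_ball_lt_top.ne
  have hL0 : ENNReal.ofReal L⁻¹ ≠ 0 := by positivity
  refine ⟨((ENNReal.ofReal L⁻¹)⁻¹ * C * ω ^ ((p - (m + 1)) / p)) ^
    ((p / (m + 2) - 1) * ((m + 1) / p))⁻¹, L, by finiteness, hL,
    fun {φ D D' f Df} h x₀ ε hε hD x hx => ?_⟩
  have hsub : closedBall x (L * (ε / L)) ⊆ ball x₀ (4 * ε) := by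
    rw [mul_div_cancel₀ _ hL.ne']
    exact closedBall_subset_ball' (by linarith [mem_closedBall.1 hx])
  have hvol : volume (ball x₀ (4 * ε)) = ω * ENNReal.ofReal ε ^ ((m + 2 : ℕ) : ℝ) := by
    rw [mul_comm 4 ε, Measure.addHaar_ball_mul_of_pos _ _ hε, finrank_euclideanSpace_fin, mul_comm,
      ENNReal.ofReal_pow hε.le, ENNReal.rpow_natCast]
  refine le_mul_rpow_mul_rpow_of_mul_rpow_le (ENNReal.ofReal_pos.2 hε).ne' ENNReal.ofReal_ne_top
    hL0 ENNReal.ofReal_ne_top hβ (by positivity) (by push_cast; field_simp; ring) ?_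
  rw [← ENNReal.ofReal_mul (by positivity), inv_mul_eq_div, ← hvol, mul_comm (laverage _ _),
    measure_mul_setLAverage _ measure_ball_lt_top.ne]
  refine (hCL h x (ε / L) (by positivity) (hsub.trans hD)).trans ?_
  gcongr

lemma exists_volume_image_ball_le_mul_volume_ball (hm : m ≠ 0) (hp : m + 2 < p) :
    ∃ C : ℝ≥0∞, C ≠ ⊤ ∧ ∀ {φ D D' f Df},
      IsCalderonFiniteDistortionHomeo (n := m + 2) φ D D' f Df →
      ∀ (x₀ : Eucl (m + 2)) (ε : ℝ), 0 < ε → ball x₀ (4 * ε) ⊆ D →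
        volume (f '' ball x₀ (2 * ε)) ≤
          C * (⨍⁻ y in ball x₀ (4 * ε), distortionKp p Df y ^ ((m + 1) / (p - (m + 1))) ∂volume) ^
              (((p - (m + 1)) / p) / ((p / (m + 2) - 1) * ((m + 1) / p))) *
            volume (ball x₀ (2 * ε)) := by
  obtain ⟨C, L, hC, hL, hCL⟩ := exists_volume_image_ball_div_le hm hp
  obtain ⟨t, htnorm, htcover⟩ :=
    exists_finset_closedBall_subset_biUnion_ball (Eucl (m + 2)) 2 (inv_pos.2 hL)
  set ω := volume (ball (0 : Eucl (m + 2)) 2)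
  have hω : ω ≠ 0 := (measure_ball_pos volume _ two_pos).ne'
  have hω' : ω ≠ ⊤ := measure_ball_lt_top.ne
  refine ⟨t.card * C / ω, by finiteness, fun {φ D D' f Df} h x₀ ε hε hD => ?_⟩
  have hball : volume (ball x₀ (2 * ε)) = ω * ENNReal.ofReal ε ^ ((m + 2 : ℕ) : ℝ) := by
    rw [mul_comm 2 ε, Measure.addHaar_ball_mul_of_pos _ _ hε, finrank_euclideanSpace_fin, mul_comm,
      ENNReal.ofReal_pow hε.le, ENNReal.rpow_natCast]
  have hcover : f '' ball x₀ (2 * ε) ⊆ ⋃ z ∈ t, f '' ball (x₀ + ε • z) (ε / L) := by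
    rw [← image_iUnion₂, div_eq_inv_mul]
    exact image_mono (ball_subset_closedBall.trans (htcover x₀ ε hε))
  have hcenter : ∀ z ∈ t, x₀ + ε • z ∈ closedBall x₀ (2 * ε) := fun z hz => by
    rw [mem_closedBall, dist_self_add_left, norm_smul, Real.norm_of_nonneg hε.le, mul_comm]
    gcongr
    exact htnorm z hz
  refine (measure_mono hcover).trans ((measure_biUnion_finset_le _ _).trans
    ((Finset.sum_le_card_nsmul _ _ _ fun z hz => hCL h x₀ ε hε hD _ (hcenter z hz)).trans_eq ?_))
  rw [nsmul_eq_mul, hball, mul_right_comm _ _ (ω * _), ← mul_assoc _ ω,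
    ENNReal.div_mul_cancel hω hω']
  ring

end IsCalderonFiniteDistortionHomeo

end BallEstimate

theorem stmt_12_general (n : ℕ) (hn : 3 ≤ n) (p : ℝ) (hp : n < p) :
    ∃ c : ℝ≥0∞, 0 < c ∧ c < ⊤ ∧ ∀ {φ D D' f Df},
      IsCalderonFiniteDistortionHomeo (n := n) φ D D' f Df →
      ∀ (x₀ : Eucl n) (ε : ℝ), 0 < ε → ball x₀ (4 * ε) ⊆ D →
        volume (f '' ball x₀ (2 * ε)) / volume (ball x₀ (2 * ε)) ≤
          c * ((∫⁻ x in ball x₀ (4 * ε), distortionKp p Df x ^ ((n - 1) / (p - n + 1))) /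
            volume (ball x₀ (4 * ε))) ^ (n * (p - n + 1) / (n * (p - n + 1) - p)) := by
  obtain ⟨m, rfl⟩ : ∃ m, n = m + 2 := ⟨n - 2, by omega⟩
  push_cast at hp ⊢
  obtain ⟨C, hC, hCf⟩ :=
    IsCalderonFiniteDistortionHomeo.exists_volume_image_ball_le_mul_volume_ball (by omega) hp
  refine ⟨C + 1, by positivity, by finiteness, fun {φ D D' f Df} h x₀ ε hε hD => ?_⟩
  have hα : ((m : ℝ) + 2 - 1) / (p - (m + 2) + 1) = (m + 1) / (p - (m + 1)) := by
    congr 1 <;> ring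
  have hβ : ((m : ℝ) + 2) * (p - (m + 2) + 1) / ((m + 2) * (p - (m + 2) + 1) - p) =
      ((p - (m + 1)) / p) / ((p / (m + 2) - 1) * ((m + 1) / p)) := by
    have hp0 : p ≠ 0 := ((by positivity : (0 : ℝ) < m + 2).trans hp).ne'
    have hpm : p - (m + 2) ≠ 0 := (sub_pos.2 hp).ne'
    rw [show ((m : ℝ) + 2) * (p - (m + 2) + 1) - p = (m + 1) * (p - (m + 2)) by ring,
      div_sub_one (by positivity)]
    field_simp
    ring
  rw [← setLAverage_eq, hα, hβ]
  refine ENNReal.div_le_of_le_mul ((hCf h x₀ ε hε hD).trans ?_)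
  gcongr
  exact le_self_add

/-- for `p ∈ (n, n+1/(n-2))` there is a constant `c₂ = c₂(n,p)` such that for
every homeomorphism of finite distortion `f : D → D'` of class `W^{1,φ}_loc` (Calderón-type
condition on `φ`), every `x₀ ∈ D` and `ε > 0` with `B(x₀,4ε) ⊆ D`:
`m(fB(x₀,2ε))/m(B(x₀,2ε)) ≤ c₂ (⨍_{B(x₀,4ε)} K_p^{(n-1)/(p-n+1)} dm)^{n(p-n+1)/(n(p-n+1)-p)}`. -/
theorem stmt_12 (n : ℕ) (hn : 3 ≤ n) (p : ℝ)
    (hp : p ∈ Ioo (n : ℝ) ((n : ℝ) + 1 / ((n : ℝ) - 2))) :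
    ∃ c : ℝ≥0∞, 0 < c ∧ c < ⊤ ∧
      ∀ (D D' : Set (Eucl n)), IsOpen D → IsConnected D → IsOpen D' → IsConnected D' →
      ∀ φ : ℝ → ℝ, NondecPos φ → CalderonCond n φ →
      ∀ (f : Eucl n → Eucl n) (Df : Eucl n → Eucl n →L[ℝ] Eucl n),
        IsHomeoOn f D D' → MemOrliczSobolevOn φ D f Df → HasFiniteDistortionOn D Df →
      ∀ x₀ ∈ D, ∀ ε : ℝ, 0 < ε → ball x₀ (4 * ε) ⊆ D →
        volume (f '' ball x₀ (2 * ε)) / volume (ball x₀ (2 * ε)) ≤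
          c * ((∫⁻ x in ball x₀ (4 * ε),
                  distortionKp p Df x ^ (((n:ℝ)-1)/(p-(n:ℝ)+1))) /
                volume (ball x₀ (4 * ε)))
            ^ ((n:ℝ)*(p-(n:ℝ)+1)/((n:ℝ)*(p-(n:ℝ)+1)-p)) := by
  obtain ⟨c, hc0, hc, hcf⟩ := stmt_12_general n hn p hp.1
  exact ⟨c, hc0, hc, fun _ _ hD _ _ _ _ hφ hcal _ _ hf hW hfd x₀ _ =>
    hcf ⟨hD, hφ, hcal, hf, hW, hfd⟩ x₀⟩
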